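/- arXiv:1807.08672 — 2 statements merged into one kernel-verified Lean document; each statement's English description precedes it below -/
import Mathlib

section
/- For all z ∈ ℝ, |P(W ≤ z) − Φ(z)| ≤ 2 Σᵢ₌₁ⁿ P(|ξᵢ| > (1 ∨ |z|)/4) + C₂ (1 + |z|)^{−2} (β₂ + β₃), where one may take C₂ = 15 if β₂ + β₃ ≥ 1; C₂ = 37 if β₂ + β₃ < 1 and |z| ≤ 2; and C₂ = 25431 if β₂ + β₃ < 1 and |z| > 2. -/
open MeasureTheory ProbabilityTheory Real

/-- The standard normal cumulative distribution function. -/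
noncomputable def Phi (z : ℝ) : ℝ :=
  (Real.sqrt (2 * Real.pi))⁻¹ * ∫ u in Set.Iic z, Real.exp (-u ^ 2 / 2)

/-- The bounded solution `f_z` of the Stein equation
`f'(w) - w f(w) = 1{w ≤ z} - Φ(z)`. -/
noncomputable def fz (z w : ℝ) : ℝ :=
  if w ≤ z then Real.sqrt (2 * Real.pi) * Real.exp (w ^ 2 / 2) * Phi w * (1 - Phi z)
  else Real.sqrt (2 * Real.pi) * Real.exp (w ^ 2 / 2) * Phi z * (1 - Phi w)

/-- The derivative `f_z'`, expressed via the Stein equation. -/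
noncomputable def fz' (z w : ℝ) : ℝ :=
  w * fz z w + (if w ≤ z then 1 else 0) - Phi z

/-- The truncation `x̄ᵢ = ξᵢ 1{ξᵢ ≤ 1}`. -/
noncomputable def xbar {Ω : Type*} {n : ℕ} (ξ : Fin n → Ω → ℝ) (i : Fin n) (ω : Ω) : ℝ :=
  if ξ i ω ≤ 1 then ξ i ω else 0

/-- `W̄ = ∑ᵢ x̄ᵢ`. -/
noncomputable def Wbar {Ω : Type*} {n : ℕ} (ξ : Fin n → Ω → ℝ) (ω : Ω) : ℝ :=
  ∑ i, xbar ξ i ω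

/-- `W̄⁽ⁱ⁾ = W̄ - x̄ᵢ`. -/
noncomputable def Wbari {Ω : Type*} {n : ℕ} (ξ : Fin n → Ω → ℝ) (i : Fin n) (ω : Ω) : ℝ :=
  Wbar ξ ω - xbar ξ i ω

/-- `K̄ᵢ(t) = E[x̄ᵢ (1{0 ≤ t ≤ x̄ᵢ} - 1{x̄ᵢ ≤ t < 0})]`. -/
noncomputable def Kbar {Ω : Type*} [MeasureSpace Ω] {n : ℕ} (ξ : Fin n → Ω → ℝ)
    (i : Fin n) (t : ℝ) : ℝ :=
  ∫ ω, xbar ξ i ω * ((if 0 ≤ t ∧ t ≤ xbar ξ i ω then (1 : ℝ) else 0)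
    - (if xbar ξ i ω ≤ t ∧ t < 0 then (1 : ℝ) else 0))

/-- `β₂ = ∑ᵢ E[ξᵢ² 1{|ξᵢ| > 1}]`. -/
noncomputable def beta2 {Ω : Type*} [MeasureSpace Ω] {n : ℕ} (ξ : Fin n → Ω → ℝ) : ℝ :=
  ∑ i, ∫ ω, (if 1 < |ξ i ω| then (ξ i ω) ^ 2 else 0)

/-- `β₃ = ∑ᵢ E[|ξᵢ|³ 1{|ξᵢ| ≤ 1}]`. -/
noncomputable def beta3 {Ω : Type*} [MeasureSpace Ω] {n : ℕ} (ξ : Fin n → Ω → ℝ) : ℝ :=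
  ∑ i, ∫ ω, (if |ξ i ω| ≤ 1 then |ξ i ω| ^ 3 else 0)

/-!
Stein's method, applied to the truncated summands `x̄ᵢ = ξᵢ 1{|ξᵢ| ≤ 1}` and to an indicator of a
half-line smoothed over a window of length `5 (β₂ + β₃)`. The derivative `f'` of the Stein solution
satisfies `f'(w) = w f(w) + h(w) - N h`; the increments of `w f(w)` are Lipschitz, while those of
the smoothed indicator `h` are controlled by a concentration inequality for the sum without one
summand, itself proved by Stein's identity for a ramp function. For large `z` the Stein solution
decays like `z⁻²` against moments of the sum, which produces the factor `(1 + |z|)⁻²`.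

The passage from the truncated sum to `W` costs `∑ P(|ξᵢ| > 1) ≤ β₂`. For large `z` this is too
expensive, but then the exceptional event also forces the remaining sum to be large (or
`|ξᵢ| > z / 4`), and independence turns this into `β₂ / z²`. When `β₂ + β₃ ≥ 2 / 37` the one-sided
Chebyshev inequality already suffices, and negative `z` are reflected.
-/

open Set

/-! ### The Gaussian kernel and the Mills ratio -/

/-- The unnormalised standard Gaussian density `exp (-u² / 2)`. -/
noncomputable def gaussKernel (u : ℝ) : ℝ := exp (-u ^ 2 / 2)

lemma gaussKernel_pos (u : ℝ) : 0 < gaussKernel u := exp_pos _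

lemma gaussKernel_neg (u : ℝ) : gaussKernel (-u) = gaussKernel u := by
  simp [gaussKernel]

lemma gaussKernel_le_of_le {c u : ℝ} (hc : 0 ≤ c) (hu : c ≤ u) :
    gaussKernel u ≤ gaussKernel c := by
  unfold gaussKernel
  gcongr

lemma gaussKernel_le_one (u : ℝ) : gaussKernel u ≤ 1 :=
  exp_le_one_iff.2 (by linarith [sq_nonneg u])

lemma gaussKernel_le_inv_sq {c : ℝ} (hc : 0 < c) : gaussKernel c ≤ 1 / c ^ 2 := by
  have quadratic := quadratic_le_exp_of_nonneg (show 0 ≤ c ^ 2 / 2 by positivity)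
  rw [gaussKernel, neg_div, exp_neg, ← one_div]
  gcongr
  linarith [sq_nonneg (c ^ 2 - 2)]

lemma continuous_gaussKernel : Continuous gaussKernel := by
  unfold gaussKernel
  fun_prop

lemma gaussKernel_eq : gaussKernel = fun u ↦ exp (-(1 / 2) * u ^ 2) := by
  funext u
  rw [gaussKernel]
  ring_nf

lemma integrable_gaussKernel : Integrable gaussKernel := by
  rw [gaussKernel_eq]
  exact integrable_exp_neg_mul_sq (by norm_num)

lemma integral_gaussKernel : ∫ u, gaussKernel u = √(2 * π) := by
  rw [gaussKernel_eq, integral_gaussian]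
  congr 1
  field_simp

lemma hasDerivAt_gaussKernel (u : ℝ) : HasDerivAt gaussKernel (-u * gaussKernel u) u := by
  have hsq : HasDerivAt (fun u : ℝ ↦ -u ^ 2 / 2) (-u) u :=
    ((hasDerivAt_pow 2 u).neg.div_const 2).congr_deriv (by push_cast; ring)
  exact hsq.exp.congr_deriv (mul_comm _ _)

lemma exp_sq_div_two_mul_gaussKernel (w : ℝ) : exp (w ^ 2 / 2) * gaussKernel w = 1 := by
  rw [gaussKernel, ← exp_add, neg_div, add_neg_cancel, exp_zero]

lemma setIntegral_gaussKernel_nonneg (s : Set ℝ) : 0 ≤ ∫ u in s, gaussKernel u :=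
  integral_nonneg fun u ↦ (gaussKernel_pos u).le

lemma integral_Iic_gaussKernel (w : ℝ) :
    ∫ u in Iic w, gaussKernel u = ∫ u in Ioi (-w), gaussKernel u := by
  rw [← integral_comp_neg_Iic]
  simp_rw [gaussKernel_neg]

lemma sqrt_two_pi_le : √(2 * π) ≤ 2.51 := by
  rw [sqrt_le_left (by norm_num)]
  nlinarith [pi_lt_d4]

lemma inv_sqrt_two_pi_le : (√(2 * π))⁻¹ ≤ 0.399 := by
  have lower : (2.5065 : ℝ) ≤ √(2 * π) := le_sqrt_of_sq_le (by nlinarith [pi_gt_d4])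
  rw [inv_le_comm₀ (by positivity) (by norm_num)]
  exact le_trans (by norm_num) lower

/-- The Mills ratio of the standard normal law, i.e. its tail divided by its density at `w`. -/
noncomputable def millsRatio (w : ℝ) : ℝ := exp (w ^ 2 / 2) * ∫ u in Ioi w, gaussKernel u

lemma millsRatio_nonneg (w : ℝ) : 0 ≤ millsRatio w :=
  mul_nonneg (exp_pos _).le (setIntegral_gaussKernel_nonneg _)

lemma millsRatio_mul_gaussKernel (w : ℝ) :
    millsRatio w * gaussKernel w = ∫ u in Ioi w, gaussKernel u := by
  rw [millsRatio, mul_right_comm, exp_sq_div_two_mul_gaussKernel, one_mul]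

lemma millsRatio_neg (w : ℝ) :
    millsRatio (-w) = exp (w ^ 2 / 2) * ∫ u in Iic w, gaussKernel u := by
  rw [millsRatio, neg_sq, integral_Iic_gaussKernel]

/-- The Mills ratio solves `m' = w m - 1`; the function `q · gaussKernel + ∫ v in w..·, gaussKernel`
decreases exactly when `q` is a supersolution. -/
lemma millsRatio_le_of_supersolution {w : ℝ} {q q' : ℝ → ℝ}
    (hq : ∀ u, w ≤ u → HasDerivAt q (q' u) u) (hq_nonneg : ∀ u, w ≤ u → 0 ≤ q u)
    (hq_super : ∀ u, w ≤ u → 1 ≤ u * q u - q' u) : millsRatio w ≤ q w := by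
  let F : ℝ → ℝ := fun R ↦ q R * gaussKernel R + ∫ v in w..R, gaussKernel v
  have hF : ∀ u, w ≤ u → HasDerivAt F
      (q' u * gaussKernel u + q u * (-u * gaussKernel u) + gaussKernel u) u := fun u hu ↦
    ((hq u hu).mul (hasDerivAt_gaussKernel u)).add
      (continuous_gaussKernel.integral_hasStrictDerivAt w u).hasDerivAt
  have hF_anti : AntitoneOn F (Ici w) := by
    apply antitoneOn_of_deriv_nonpos (convex_Ici w)
    · exact fun u hu ↦ (hF u hu).continuousAt.continuousWithinAt
    · exact fun u hu ↦
        (hF u (interior_subset hu)).differentiableAt.differentiableWithinAt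
    · intro u hu
      rw [(hF u (interior_subset hu)).deriv]
      nlinarith [hq_super u (interior_subset hu), gaussKernel_pos u]
  have tail_le : ∫ u in Ioi w, gaussKernel u ≤ q w * gaussKernel w := by
    apply le_of_tendsto (intervalIntegral_tendsto_integral_Ioi w
      integrable_gaussKernel.integrableOn Filter.tendsto_id)
    filter_upwards [Filter.eventually_ge_atTop w] with R hR
    have hFR : F R ≤ F w := hF_anti self_mem_Ici hR hR
    simp only [F, intervalIntegral.integral_same, add_zero] at hFR
    have := mul_nonneg (hq_nonneg R hR) (gaussKernel_pos R).le
    exact (le_add_of_nonneg_left this).trans hFR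
  rw [← millsRatio_mul_gaussKernel] at tail_le
  exact le_of_mul_le_mul_right tail_le (gaussKernel_pos w)

lemma millsRatio_le_quadratic {w : ℝ} (hw : 0 ≤ w) : millsRatio w ≤ 3 / 2 - w + w ^ 2 / 4 := by
  apply millsRatio_le_of_supersolution (q := fun w ↦ 3 / 2 - w + w ^ 2 / 4)
    (q' := fun u ↦ -1 + u / 2)
  · exact fun u _ ↦ (((hasDerivAt_id u).const_sub (3 / 2)).add
      ((hasDerivAt_pow 2 u).div_const 4)).congr_deriv (by push_cast; ring)
  · exact fun u _ ↦ by nlinarith [sq_nonneg (u - 2)]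
  · intro u hu
    have : 0 ≤ u * (1 - u / 2) ^ 2 := mul_nonneg (hw.trans hu) (sq_nonneg _)
    nlinarith

lemma mul_millsRatio_le_one {w : ℝ} (hw : 0 ≤ w) : w * millsRatio w ≤ 1 := by
  rcases hw.eq_or_lt with rfl | hw
  · simp
  have inv_super : millsRatio w ≤ w⁻¹ := by
    apply millsRatio_le_of_supersolution (q := fun w ↦ w⁻¹) (q' := fun u ↦ -(u ^ 2)⁻¹)
    · exact fun u hu ↦ hasDerivAt_inv (hw.trans_le hu).ne'
    · exact fun u hu ↦ (inv_pos.2 (hw.trans_le hu)).le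
    · intro u hu
      rw [mul_inv_cancel₀ (hw.trans_le hu).ne']
      linarith [inv_nonneg.2 (sq_nonneg u)]
  exact (le_inv_mul_iff₀ hw).1 (by rwa [mul_one])

lemma millsRatio_le {w : ℝ} (hw : 0 ≤ w) : millsRatio w ≤ 3 / 2 := by
  rcases le_total w 2 with h | h
  · nlinarith [millsRatio_le_quadratic hw]
  · nlinarith [mul_millsRatio_le_one hw, millsRatio_nonneg w]

/-! ### The normal distribution function -/

lemma Phi_eq (z : ℝ) : Phi z = (√(2 * π))⁻¹ * ∫ u in Iic z, gaussKernel u := rfl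

lemma one_sub_Phi (z : ℝ) : 1 - Phi z = (√(2 * π))⁻¹ * ∫ u in Ioi z, gaussKernel u := by
  have split := intervalIntegral.integral_Iic_add_Ioi (b := z)
    integrable_gaussKernel.integrableOn integrable_gaussKernel.integrableOn
  rw [integral_gaussKernel] at split
  rw [Phi_eq, sub_eq_iff_eq_add', ← mul_add, split, inv_mul_cancel₀ (by positivity)]

lemma Phi_le_one (z : ℝ) : Phi z ≤ 1 := by
  rw [← sub_nonneg, one_sub_Phi]
  exact mul_nonneg (by positivity) (setIntegral_gaussKernel_nonneg _)

lemma Phi_neg (z : ℝ) : Phi (-z) = 1 - Phi z := by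
  rw [one_sub_Phi, Phi_eq, integral_Iic_gaussKernel, neg_neg]

lemma Phi_eq_Phi_add_integral (a b : ℝ) :
    Phi b = Phi a + (√(2 * π))⁻¹ * ∫ u in a..b, gaussKernel u := by
  rw [Phi_eq, Phi_eq, ← mul_add, ← intervalIntegral.integral_Iic_sub_Iic
    integrable_gaussKernel.integrableOn integrable_gaussKernel.integrableOn, add_sub_cancel]

lemma one_sub_Phi_le_millsRatio_mul (z : ℝ) :
    1 - Phi z ≤ 0.4 * (millsRatio z * gaussKernel z) := by
  rw [one_sub_Phi, ← millsRatio_mul_gaussKernel]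
  have := mul_nonneg (millsRatio_nonneg z) (gaussKernel_pos z).le
  gcongr
  linarith [inv_sqrt_two_pi_le]

lemma one_sub_Phi_le_gaussKernel {z : ℝ} (hz : 0 ≤ z) : 1 - Phi z ≤ gaussKernel z := by
  nlinarith [one_sub_Phi_le_millsRatio_mul z, millsRatio_le hz, gaussKernel_pos z]

lemma one_sub_Phi_le {z : ℝ} (hz : 0 ≤ z) : 1 - Phi z ≤ 1 / (1 + z ^ 2) := by
  have mills := millsRatio_le_quadratic hz
  have kernel : gaussKernel z ≤ 1 / (1 + z ^ 2 / 2 + z ^ 4 / 8) := by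
    rw [gaussKernel, neg_div, exp_neg, ← one_div]
    gcongr
    linarith [quadratic_le_exp_of_nonneg (show 0 ≤ z ^ 2 / 2 by positivity)]
  calc 1 - Phi z ≤ 0.4 * (millsRatio z * gaussKernel z) := one_sub_Phi_le_millsRatio_mul z
    _ ≤ 0.4 * ((3 / 2 - z + z ^ 2 / 4) * (1 / (1 + z ^ 2 / 2 + z ^ 4 / 8))) := by
        have := (gaussKernel_pos z).le
        have := (millsRatio_nonneg z).trans mills
        gcongr
    _ ≤ 1 / (1 + z ^ 2) := by
        rw [mul_one_div, ← mul_div_assoc, div_le_div_iff₀ (by positivity) (by positivity)]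
        nlinarith [mul_nonneg hz (sq_nonneg (z - 1)), pow_nonneg hz 4, sq_nonneg (z - 1),
          pow_nonneg hz 3, pow_nonneg hz 5, pow_nonneg hz 6]

/-! ### The Stein equation for a decreasing test function -/

/-- The mean `E h(Z)` of `h` under the standard normal law. -/
noncomputable def gaussMean (h : ℝ → ℝ) : ℝ := (√(2 * π))⁻¹ * ∫ u, h u * gaussKernel u

/-- The bounded solution `f` of the Stein equation `f'(w) - w f(w) = h(w) - E h(Z)`. -/
noncomputable def steinSol (h : ℝ → ℝ) (w : ℝ) : ℝ :=
  exp (w ^ 2 / 2) * ∫ u in Iic w, (h u - gaussMean h) * gaussKernel u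

/-- The derivative of `steinSol h`, expressed via the Stein equation. -/
noncomputable def steinSolDeriv (h : ℝ → ℝ) (w : ℝ) : ℝ := w * steinSol h w + h w - gaussMean h

/-- The test functions of Stein's method used here: continuous, decreasing, with values in `[0, 1]`;
these are smooth replacements for the indicator of a half-line `(-∞, z]`. -/
structure IsSteinTest (h : ℝ → ℝ) : Prop where
  continuous : Continuous h
  antitone : Antitone h
  nonneg : ∀ w, 0 ≤ h w
  le_one : ∀ w, h w ≤ 1

namespace IsSteinTest

variable {h : ℝ → ℝ}

lemma integrable_mul_gaussKernel (hh : IsSteinTest h) :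
    Integrable fun u ↦ h u * gaussKernel u :=
  integrable_gaussKernel.bdd_mul hh.continuous.aestronglyMeasurable (c := 1)
    (ae_of_all _ fun u ↦ by rw [norm_of_nonneg (hh.nonneg u)]; exact hh.le_one u)

lemma integrable_sub_mul_gaussKernel (hh : IsSteinTest h) (N : ℝ) :
    Integrable fun u ↦ (h u - N) * gaussKernel u := by
  simp_rw [sub_mul]
  exact hh.integrable_mul_gaussKernel.sub (integrable_gaussKernel.const_mul N)

lemma integrable_const_sub_mul_gaussKernel (hh : IsSteinTest h) (N : ℝ) :
    Integrable fun u ↦ (N - h u) * gaussKernel u := by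
  simp_rw [sub_mul]
  exact (integrable_gaussKernel.const_mul N).sub hh.integrable_mul_gaussKernel

lemma gaussMean_nonneg (hh : IsSteinTest h) : 0 ≤ gaussMean h :=
  mul_nonneg (by positivity)
    (integral_nonneg fun u ↦ mul_nonneg (hh.nonneg u) (gaussKernel_pos u).le)

lemma gaussMean_reflect (hh : IsSteinTest h) :
    gaussMean (fun u ↦ 1 - h (-u)) = 1 - gaussMean h := by
  have reflected : ∫ u, h (-u) * gaussKernel u = ∫ u, h u * gaussKernel u := by
    rw [← integral_neg_eq_self]
    simp_rw [neg_neg, gaussKernel_neg]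
  have integrable_reflected : Integrable fun u ↦ h (-u) * gaussKernel u := by
    simpa only [gaussKernel_neg] using hh.integrable_mul_gaussKernel.comp_neg
  simp_rw [gaussMean, sub_mul, one_mul]
  rw [integral_sub integrable_gaussKernel integrable_reflected, reflected, integral_gaussKernel,
    mul_sub, inv_mul_cancel₀ (by positivity)]

lemma reflect (hh : IsSteinTest h) : IsSteinTest fun u ↦ 1 - h (-u) where
  continuous := continuous_const.sub (hh.continuous.comp continuous_neg)
  antitone _ _ hab := sub_le_sub_left (hh.antitone (neg_le_neg hab)) 1
  nonneg _ := sub_nonneg.2 (hh.le_one _)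
  le_one _ := sub_le_self 1 (hh.nonneg _)

lemma gaussMean_le_one (hh : IsSteinTest h) : gaussMean h ≤ 1 := by
  rw [← sub_nonneg, ← hh.gaussMean_reflect]
  exact hh.reflect.gaussMean_nonneg

lemma integral_sub_gaussMean_mul_gaussKernel (hh : IsSteinTest h) :
    ∫ u, (h u - gaussMean h) * gaussKernel u = 0 := by
  simp_rw [sub_mul]
  rw [integral_sub hh.integrable_mul_gaussKernel (integrable_gaussKernel.const_mul _),
    integral_const_mul, integral_gaussKernel, gaussMean, mul_right_comm,
    inv_mul_cancel₀ (by positivity), one_mul, sub_self]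

lemma steinSol_eq_integral_Ioi (hh : IsSteinTest h) (w : ℝ) :
    steinSol h w = exp (w ^ 2 / 2) * ∫ u in Ioi w, (gaussMean h - h u) * gaussKernel u := by
  have integrable := hh.integrable_sub_mul_gaussKernel (gaussMean h)
  have split := intervalIntegral.integral_Iic_add_Ioi (b := w) integrable.integrableOn
    integrable.integrableOn
  rw [hh.integral_sub_gaussMean_mul_gaussKernel, add_eq_zero_iff_eq_neg, ← integral_neg] at split
  simp_rw [steinSol, split, ← neg_mul, neg_sub]

lemma steinSol_reflect (hh : IsSteinTest h) (w : ℝ) :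
    steinSol (fun u ↦ 1 - h (-u)) w = steinSol h (-w) := by
  rw [hh.steinSol_eq_integral_Ioi, steinSol, hh.gaussMean_reflect, neg_sq,
    ← integral_comp_neg_Iic]
  simp_rw [gaussKernel_neg, sub_sub_sub_cancel_left]

lemma steinSolDeriv_reflect (hh : IsSteinTest h) (w : ℝ) :
    steinSolDeriv (fun u ↦ 1 - h (-u)) w = -steinSolDeriv h (-w) := by
  rw [steinSolDeriv, steinSolDeriv, hh.steinSol_reflect, hh.gaussMean_reflect]
  ring

lemma hasDerivAt_steinSol (hh : IsSteinTest h) (w : ℝ) :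
    HasDerivAt (steinSol h) (steinSolDeriv h w) w := by
  let G : ℝ → ℝ := fun u ↦ (h u - gaussMean h) * gaussKernel u
  have hG : Continuous G := (hh.continuous.sub continuous_const).mul continuous_gaussKernel
  have hG_int : Integrable G := hh.integrable_sub_mul_gaussKernel _
  have steinSol_eq : steinSol h =
      fun w ↦ exp (w ^ 2 / 2) * ((∫ u in Iic 0, G u) + ∫ u in (0 : ℝ)..w, G u) := by
    funext w
    rw [steinSol, ← intervalIntegral.integral_Iic_sub_Iic hG_int.integrableOn
      hG_int.integrableOn, add_sub_cancel]
  have hexp : HasDerivAt (fun w : ℝ ↦ exp (w ^ 2 / 2)) (exp (w ^ 2 / 2) * w) w :=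
    ((hasDerivAt_pow 2 w).div_const 2).exp.congr_deriv (by push_cast; ring)
  have hprod := hexp.mul
    ((hG.integral_hasStrictDerivAt 0 w).hasDerivAt.const_add (∫ u in Iic 0, G u))
  rw [steinSolDeriv, steinSol_eq]
  exact hprod.congr_deriv
    (by linear_combination (h w - gaussMean h) * exp_sq_div_two_mul_gaussKernel w)

lemma continuous_steinSol (hh : IsSteinTest h) : Continuous (steinSol h) :=
  continuous_iff_continuousAt.2 fun w ↦ (hh.hasDerivAt_steinSol w).continuousAt

lemma continuous_steinSolDeriv (hh : IsSteinTest h) : Continuous (steinSolDeriv h) :=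
  ((continuous_id.mul hh.continuous_steinSol).add hh.continuous).sub continuous_const

lemma hasDerivAt_mul_steinSol (hh : IsSteinTest h) (w : ℝ) :
    HasDerivAt (fun w ↦ w * steinSol h w) (steinSol h w + w * steinSolDeriv h w) w :=
  ((hasDerivAt_id w).mul (hh.hasDerivAt_steinSol w)).congr_deriv (by rw [one_mul, id])

lemma steinSol_le_mul_millsRatio (hh : IsSteinTest h) (w : ℝ) :
    steinSol h w ≤ gaussMean h * millsRatio w := by
  rw [hh.steinSol_eq_integral_Ioi, millsRatio, mul_left_comm, ← integral_const_mul (gaussMean h)]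
  exact mul_le_mul_of_nonneg_left (setIntegral_mono
    (hh.integrable_const_sub_mul_gaussKernel _).integrableOn
    (integrable_gaussKernel.const_mul _).integrableOn fun u ↦
      mul_le_mul_of_nonneg_right (sub_le_self _ (hh.nonneg u)) (gaussKernel_pos u).le)
    (exp_pos _).le

lemma mul_millsRatio_le_steinSol (hh : IsSteinTest h) (w : ℝ) :
    (gaussMean h - h w) * millsRatio w ≤ steinSol h w := by
  rw [hh.steinSol_eq_integral_Ioi, millsRatio, mul_left_comm,
    ← integral_const_mul (gaussMean h - h w)]
  exact mul_le_mul_of_nonneg_left (setIntegral_mono_on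
    (integrable_gaussKernel.const_mul _).integrableOn
    (hh.integrable_const_sub_mul_gaussKernel _).integrableOn measurableSet_Ioi fun u hu ↦
      mul_le_mul_of_nonneg_right (sub_le_sub_left (hh.antitone (le_of_lt hu)) _)
        (gaussKernel_pos u).le)
    (exp_pos _).le

lemma steinSol_le_mul_millsRatio_neg (hh : IsSteinTest h) (w : ℝ) :
    steinSol h w ≤ (1 - gaussMean h) * millsRatio (-w) := by
  simpa only [hh.steinSol_reflect, hh.gaussMean_reflect, neg_neg] using
    hh.reflect.steinSol_le_mul_millsRatio (-w)

lemma mul_millsRatio_neg_le_steinSol (hh : IsSteinTest h) (w : ℝ) :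
    (h w - gaussMean h) * millsRatio (-w) ≤ steinSol h w := by
  simpa only [hh.steinSol_reflect, hh.gaussMean_reflect, neg_neg, sub_sub_sub_cancel_left] using
    hh.reflect.mul_millsRatio_le_steinSol (-w)

lemma abs_steinSol_le_millsRatio (hh : IsSteinTest h) (w : ℝ) :
    |steinSol h w| ≤ millsRatio |w| := by
  wlog hw : 0 ≤ w generalizing h w
  · simpa only [hh.steinSol_reflect, neg_neg, abs_neg] using
      this hh.reflect (-w) (neg_nonneg.2 (le_of_not_ge hw))
  rw [abs_of_nonneg hw, abs_le]
  have := millsRatio_nonneg w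
  constructor
  · nlinarith [hh.mul_millsRatio_le_steinSol w, hh.gaussMean_nonneg, hh.le_one w]
  · nlinarith [hh.steinSol_le_mul_millsRatio w, hh.gaussMean_le_one]

lemma abs_steinSol_le (hh : IsSteinTest h) (w : ℝ) : |steinSol h w| ≤ 3 / 2 :=
  (hh.abs_steinSol_le_millsRatio w).trans (millsRatio_le (abs_nonneg w))

lemma abs_steinSolDeriv_le_one (hh : IsSteinTest h) (w : ℝ) : |steinSolDeriv h w| ≤ 1 := by
  wlog hw : 0 ≤ w generalizing h w
  · simpa only [hh.steinSolDeriv_reflect, neg_neg, abs_neg] using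
      this hh.reflect (-w) (neg_nonneg.2 (le_of_not_ge hw))
  have upper := mul_le_mul_of_nonneg_left (hh.steinSol_le_mul_millsRatio w) hw
  have lower := mul_le_mul_of_nonneg_left (hh.mul_millsRatio_le_steinSol w) hw
  rw [mul_left_comm] at upper lower
  have mills_le := mul_millsRatio_le_one hw
  have mills_nonneg := mul_nonneg hw (millsRatio_nonneg w)
  have mean_nonneg := hh.gaussMean_nonneg
  have mean_le := hh.gaussMean_le_one
  rw [steinSolDeriv, abs_le]
  constructor
  · nlinarith [hh.nonneg w, hh.le_one w]
  · nlinarith [hh.le_one w]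

lemma abs_deriv_mul_steinSol_le (hh : IsSteinTest h) (w : ℝ) :
    |steinSol h w + w * steinSolDeriv h w| ≤ 3 / 2 + w ^ 2 / 4 := by
  have sol_le := (hh.abs_steinSol_le_millsRatio w).trans (millsRatio_le_quadratic (abs_nonneg w))
  have deriv_le : |w * steinSolDeriv h w| ≤ |w| := by
    rw [abs_mul]
    exact mul_le_of_le_one_right (abs_nonneg w) (hh.abs_steinSolDeriv_le_one w)
  rw [sq_abs] at sol_le
  linarith [abs_add_le (steinSol h w) (w * steinSolDeriv h w)]

lemma abs_mul_steinSol_sub_le (hh : IsSteinTest h) {a b : ℝ} (hab : a ≤ b) :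
    |b * steinSol h b - a * steinSol h a| ≤
      (3 / 2 * b + b ^ 3 / 12) - (3 / 2 * a + a ^ 3 / 12) := by
  have hbound : ∀ w, HasDerivAt (fun w : ℝ ↦ 3 / 2 * w + w ^ 3 / 12) (3 / 2 + w ^ 2 / 4) w :=
    fun w ↦ (((hasDerivAt_id w).const_mul (3 / 2 : ℝ)).add
      ((hasDerivAt_pow 3 w).div_const 12)).congr_deriv (by push_cast; ring)
  have hbound' : ∀ w, HasDerivAt
      (fun w : ℝ ↦ 3 / 2 * w + w ^ 3 / 12 - (3 / 2 * a + a ^ 3 / 12)) (3 / 2 + w ^ 2 / 4) w :=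
    fun w ↦ (hbound w).sub_const _
  exact image_norm_le_of_norm_deriv_right_le_deriv_boundary
    (f := fun w ↦ w * steinSol h w - a * steinSol h a)
    (fun w _ ↦ ((hh.hasDerivAt_mul_steinSol w).sub_const _).continuousAt.continuousWithinAt)
    (fun w _ ↦ ((hh.hasDerivAt_mul_steinSol w).sub_const _).hasDerivWithinAt)
    (by simp) hbound' (fun w _ ↦ hh.abs_deriv_mul_steinSol_le w) (right_mem_Icc.2 hab)

end IsSteinTest

/-! ### Smoothed indicators -/

/-- The value of `w` clamped to the interval `[a, b]`; its slope is the indicator of `[a, b]`. -/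
noncomputable def clamp (a b w : ℝ) : ℝ := max a (min b w)

section Clamp

variable {a b w : ℝ}

lemma continuous_clamp (a b : ℝ) : Continuous (clamp a b) := by
  unfold clamp
  fun_prop

lemma clamp_mono (a b : ℝ) : Monotone (clamp a b) :=
  fun _ _ h ↦ max_le_max le_rfl (min_le_min le_rfl h)

lemma le_clamp (a b w : ℝ) : a ≤ clamp a b w := le_max_left _ _

lemma clamp_le (hab : a ≤ b) (w : ℝ) : clamp a b w ≤ b := max_le hab (min_le_left _ _)

lemma clamp_of_le_left (hw : w ≤ a) : clamp a b w = a :=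
  max_eq_left ((min_le_right _ _).trans hw)

lemma clamp_of_right_le (hab : a ≤ b) (hw : b ≤ w) : clamp a b w = b := by
  rw [clamp, min_eq_left hw, max_eq_right hab]

lemma clamp_of_mem_Icc (hw : w ∈ Icc a b) : clamp a b w = w := by
  rw [clamp, min_eq_right hw.2, max_eq_right hw.1]

lemma Ioc_clamp_subset (a b s t : ℝ) :
    Ioc (clamp a b s) (clamp a b t) ⊆ Ioc s t ∩ Icc a b := by
  rintro u ⟨hs, ht⟩
  have hau : a < u := (le_clamp a b s).trans_lt hs
  have htu : u ≤ min b t := (le_max_iff.1 ht).resolve_left hau.not_ge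
  have hub := htu.trans (min_le_left _ _)
  refine ⟨⟨lt_of_not_ge fun hus ↦ ?_, htu.trans (min_le_right _ _)⟩, hau.le, hub⟩
  exact hs.not_ge ((le_min hub hus).trans (le_max_right _ _))

lemma clamp_sub_clamp_le_integral (a b s t : ℝ) :
    clamp a b t - clamp a b s ≤ ∫ u in Ioc s t, (Icc a b).indicator (fun _ ↦ 1) u := by
  rw [setIntegral_indicator measurableSet_Icc, setIntegral_const, smul_eq_mul, mul_one]
  calc clamp a b t - clamp a b s
      ≤ volume.real (Ioc (clamp a b s) (clamp a b t)) := by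
        rw [volume_real_Ioc]
        exact le_max_left _ _
    _ ≤ volume.real (Ioc s t ∩ Icc a b) :=
        measureReal_mono (Ioc_clamp_subset a b s t)
          (measure_ne_top_of_subset inter_subset_left measure_Ioc_lt_top.ne)

end Clamp

/-- The piecewise linear function equal to `1` on `(-∞, c]` and to `0` on `[c + δ, ∞)`. -/
noncomputable def cutoff (c δ w : ℝ) : ℝ := (c + δ - clamp c (c + δ) w) / δ

section Cutoff

variable {c δ w : ℝ}

lemma isSteinTest_cutoff (c : ℝ) (hδ : 0 < δ) : IsSteinTest (cutoff c δ) where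
  continuous := (continuous_const.sub (continuous_clamp _ _)).div_const δ
  antitone _ _ h := by
    unfold cutoff
    gcongr
    exact clamp_mono _ _ h
  nonneg w := div_nonneg (sub_nonneg.2 (clamp_le (by linarith) w)) hδ.le
  le_one w := (div_le_one hδ).2 (by linarith [le_clamp c (c + δ) w])

lemma cutoff_of_le (hδ : 0 < δ) (hw : w ≤ c) : cutoff c δ w = 1 := by
  rw [cutoff, clamp_of_le_left hw, add_sub_cancel_left, div_self hδ.ne']

lemma cutoff_of_ge (hδ : 0 < δ) (hw : c + δ ≤ w) : cutoff c δ w = 0 := by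
  rw [cutoff, clamp_of_right_le (by linarith) hw, sub_self, zero_div]

lemma cutoff_of_mem_Icc (hw : w ∈ Icc c (c + δ)) : cutoff c δ w = (c + δ - w) / δ := by
  rw [cutoff, clamp_of_mem_Icc hw]

lemma abs_cutoff_sub_le_integral (c v : ℝ) (hδ : 0 < δ) {s t : ℝ} (hst : s ≤ t) :
    |cutoff c δ (v + s) - cutoff c δ (v + t)| ≤
      δ⁻¹ * ∫ u in Ioc s t, (Icc c (c + δ)).indicator (fun _ ↦ 1) (v + u) := by
  have anti := (isSteinTest_cutoff c hδ).antitone (add_le_add_right hst v)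
  have shift : ∫ u in Ioc s t, (Icc c (c + δ)).indicator (fun _ ↦ (1 : ℝ)) (v + u) =
      ∫ u in Ioc (v + s) (v + t), (Icc c (c + δ)).indicator (fun _ ↦ 1) u := by
    rw [← intervalIntegral.integral_of_le hst,
      ← intervalIntegral.integral_of_le (add_le_add_right hst v),
      intervalIntegral.integral_comp_add_left
        (fun u ↦ (Icc c (c + δ)).indicator (fun _ ↦ (1 : ℝ)) u)]
  rw [abs_of_nonneg (sub_nonneg.2 anti), shift, cutoff, cutoff, ← sub_div, sub_sub_sub_cancel_left,
    div_eq_inv_mul]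
  gcongr
  exact clamp_sub_clamp_le_integral _ _ _ _

lemma gaussMean_cutoff (c : ℝ) (hδ : 0 < δ) :
    gaussMean (cutoff c δ) =
      Phi c + (√(2 * π))⁻¹ * ∫ u in c..c + δ, (c + δ - u) / δ * gaussKernel u := by
  have integrable := (isSteinTest_cutoff c hδ).integrable_mul_gaussKernel
  have left : ∫ u in Iic c, cutoff c δ u * gaussKernel u = ∫ u in Iic c, gaussKernel u :=
    setIntegral_congr_fun measurableSet_Iic fun u hu ↦ by
      simp only [cutoff_of_le hδ hu, one_mul]
  have middle : ∫ u in c..c + δ, cutoff c δ u * gaussKernel u =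
      ∫ u in c..c + δ, (c + δ - u) / δ * gaussKernel u :=
    intervalIntegral.integral_congr fun u hu ↦ by
      rw [uIcc_of_le (by linarith)] at hu
      simp only [cutoff_of_mem_Icc hu]
  have right : ∫ u in Ioi (c + δ), cutoff c δ u * gaussKernel u = 0 :=
    setIntegral_eq_zero_of_forall_eq_zero fun u hu ↦ by
      rw [cutoff_of_ge hδ (le_of_lt hu), zero_mul]
  rw [gaussMean, Phi_eq, ← mul_add, ← left, ← middle,
    ← intervalIntegral.integral_Iic_add_Ioi integrable.integrableOn integrable.integrableOn,
    ← intervalIntegral.integral_interval_add_Ioi (b := c + δ) integrable.integrableOn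
      integrable.integrableOn, right, add_zero]

lemma inv_sqrt_two_pi_mul_integral_le {p : ℝ → ℝ} {a b K : ℝ} (hab : a ≤ b) (hp : Continuous p)
    (hp0 : ∀ u ∈ Icc a b, 0 ≤ p u) (hK : ∀ u ∈ Icc a b, gaussKernel u ≤ K) :
    (√(2 * π))⁻¹ * ∫ u in a..b, p u * gaussKernel u ≤ 0.399 * ((∫ u in a..b, p u) * K) := by
  have hK0 : 0 ≤ K := (gaussKernel_pos a).le.trans (hK a (left_mem_Icc.2 hab))
  have integral_le : ∫ u in a..b, p u * gaussKernel u ≤ (∫ u in a..b, p u) * K := by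
    rw [← intervalIntegral.integral_mul_const]
    exact intervalIntegral.integral_mono_on hab
      ((hp.mul continuous_gaussKernel).intervalIntegrable _ _)
      ((hp.mul continuous_const).intervalIntegrable _ _)
      fun u hu ↦ mul_le_mul_of_nonneg_left (hK u hu) (hp0 u hu)
  exact (mul_le_mul_of_nonneg_left integral_le (by positivity)).trans
    (mul_le_mul_of_nonneg_right inv_sqrt_two_pi_le
      (mul_nonneg (intervalIntegral.integral_nonneg hab hp0) hK0))

lemma gaussMean_cutoff_le {K : ℝ} (hδ : 0 < δ) (hK : ∀ u, c ≤ u → gaussKernel u ≤ K) :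
    gaussMean (cutoff c δ) ≤ Phi c + 0.399 * K * δ / 2 := by
  have triangle : ∫ u in c..c + δ, (c + δ - u) / δ = δ / 2 := by
    rw [intervalIntegral.integral_div, intervalIntegral.integral_comp_sub_left (fun u ↦ u),
      integral_id]
    field_simp
    ring
  have weighted := inv_sqrt_two_pi_mul_integral_le (p := fun u ↦ (c + δ - u) / δ)
    (show c ≤ c + δ by linarith) (by fun_prop)
    (fun u hu ↦ div_nonneg (by linarith [hu.2]) hδ.le) fun u hu ↦ hK u hu.1
  rw [triangle] at weighted
  rw [gaussMean_cutoff c hδ]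
  linarith

lemma Phi_add_le_gaussMean_cutoff {K : ℝ} (hδ : 0 < δ) (hK : ∀ u, c ≤ u → gaussKernel u ≤ K) :
    Phi (c + δ) ≤ gaussMean (cutoff c δ) + 0.399 * K * δ / 2 := by
  have triangle : ∫ u in c..c + δ, (u - c) / δ = δ / 2 := by
    rw [intervalIntegral.integral_div, intervalIntegral.integral_comp_sub_right (fun u ↦ u),
      integral_id]
    field_simp
    ring
  have weighted := inv_sqrt_two_pi_mul_integral_le (p := fun u ↦ (u - c) / δ)
    (show c ≤ c + δ by linarith) (by fun_prop)
    (fun u hu ↦ div_nonneg (by linarith [hu.1]) hδ.le) fun u hu ↦ hK u hu.1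
  rw [triangle] at weighted
  have complement : ∫ u in c..c + δ, gaussKernel u =
      (∫ u in c..c + δ, (c + δ - u) / δ * gaussKernel u) +
        ∫ u in c..c + δ, (u - c) / δ * gaussKernel u := by
    have hγ := continuous_gaussKernel
    rw [← intervalIntegral.integral_add
      (Continuous.intervalIntegrable (by fun_prop) _ _)
      (Continuous.intervalIntegrable (by fun_prop) _ _)]
    refine intervalIntegral.integral_congr fun u _ ↦ ?_
    field_simp
    ring
  rw [Phi_eq_Phi_add_integral c, gaussMean_cutoff c hδ, complement]
  linarith

lemma Phi_le_gaussMean_cutoff (c : ℝ) (hδ : 0 < δ) : Phi c ≤ gaussMean (cutoff c δ) := by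
  rw [gaussMean_cutoff c hδ, le_add_iff_nonneg_right]
  refine mul_nonneg (by positivity) (intervalIntegral.integral_nonneg (by linarith) fun u hu ↦ ?_)
  exact mul_nonneg (div_nonneg (by linarith [hu.2]) hδ.le) (gaussKernel_pos u).le

/-! ### Decay of the Stein solution for a far cutoff -/

lemma exp_neg_sq_le (hc : 8 ≤ c) : 2.51 * exp (-(3 * c ^ 2 / 8)) ≤ 1 / c ^ 4 := by
  have quartic := pow_div_factorial_le_exp (3 * c ^ 2 / 8) (by positivity) 4
  have hc4 : (8 : ℝ) ^ 4 ≤ c ^ 4 := by gcongr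
  rw [exp_neg, ← div_eq_mul_inv, div_le_div_iff₀ (exp_pos _) (by positivity), one_mul]
  refine le_trans ?_ quartic
  norm_num [Nat.factorial]
  nlinarith

lemma gaussKernel_mul_exp_le (hc : 8 ≤ c) :
    gaussKernel c * (2.51 * exp (c ^ 2 / 8)) ≤ 1 / c ^ 4 := by
  refine le_of_eq_of_le ?_ (exp_neg_sq_le hc)
  rw [gaussKernel, mul_left_comm, ← exp_add]
  ring_nf

lemma millsRatio_neg_le (hc : 0 ≤ c) (hw : w ≤ c / 2) :
    millsRatio (-w) ≤ 2.51 * exp (c ^ 2 / 8) := by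
  rcases le_total w 0 with hw0 | hw0
  · linarith [millsRatio_le (neg_nonneg.2 hw0), one_le_exp (show 0 ≤ c ^ 2 / 8 by positivity)]
  · have tail_le : ∫ u in Iic w, gaussKernel u ≤ 2.51 :=
      (setIntegral_le_integral integrable_gaussKernel
        (ae_of_all _ fun u ↦ (gaussKernel_pos u).le)).trans
        (integral_gaussKernel.trans_le sqrt_two_pi_le)
    have tail_nonneg := setIntegral_gaussKernel_nonneg (Iic w)
    have sq_le : w ^ 2 / 2 ≤ c ^ 2 / 8 := by nlinarith
    rw [millsRatio_neg, mul_comm 2.51]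
    exact mul_le_mul (exp_le_exp.2 sq_le) tail_le tail_nonneg (exp_pos _).le

lemma one_sub_gaussMean_cutoff_le_gaussKernel (hδ : 0 < δ) (hc : 0 ≤ c) :
    1 - gaussMean (cutoff c δ) ≤ gaussKernel c := by
  linarith [Phi_le_gaussMean_cutoff c hδ, one_sub_Phi_le_gaussKernel hc]

lemma one_sub_gaussMean_cutoff_le (hδ : 0 < δ) (hc : 8 ≤ c) :
    1 - gaussMean (cutoff c δ) ≤ 1 / c ^ 4 := by
  have one_le : 1 ≤ 2.51 * exp (c ^ 2 / 8) := by
    linarith [one_le_exp (show 0 ≤ c ^ 2 / 8 by positivity)]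
  calc 1 - gaussMean (cutoff c δ)
      ≤ gaussKernel c := one_sub_gaussMean_cutoff_le_gaussKernel hδ (by linarith)
    _ ≤ gaussKernel c * (2.51 * exp (c ^ 2 / 8)) :=
        le_mul_of_one_le_right (gaussKernel_pos c).le one_le
    _ ≤ 1 / c ^ 4 := gaussKernel_mul_exp_le hc

lemma steinSol_cutoff_nonneg (hδ : 0 < δ) (hw : w ≤ c) : 0 ≤ steinSol (cutoff c δ) w := by
  have hh := isSteinTest_cutoff c hδ
  have lower := hh.mul_millsRatio_neg_le_steinSol w
  rw [cutoff_of_le hδ hw] at lower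
  exact (mul_nonneg (sub_nonneg.2 hh.gaussMean_le_one) (millsRatio_nonneg _)).trans lower

lemma steinSol_cutoff_le (hδ : 0 < δ) (hc : 8 ≤ c) (hw : w ≤ c / 2) :
    steinSol (cutoff c δ) w ≤ 1 / c ^ 4 :=
  calc steinSol (cutoff c δ) w
      ≤ (1 - gaussMean (cutoff c δ)) * millsRatio (-w) :=
        (isSteinTest_cutoff c hδ).steinSol_le_mul_millsRatio_neg w
    _ ≤ gaussKernel c * (2.51 * exp (c ^ 2 / 8)) :=
        mul_le_mul (one_sub_gaussMean_cutoff_le_gaussKernel hδ (by linarith))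
          (millsRatio_neg_le (by linarith) hw) (millsRatio_nonneg _) (gaussKernel_pos c).le
    _ ≤ 1 / c ^ 4 := gaussKernel_mul_exp_le hc

lemma abs_mul_steinSol_cutoff_le (hδ : 0 < δ) (hc : 8 ≤ c) (hw : w ≤ c / 2) :
    |w * steinSol (cutoff c δ) w| ≤ 1 / c ^ 3 := by
  have hh := isSteinTest_cutoff c hδ
  have sol_nonneg := steinSol_cutoff_nonneg hδ (show w ≤ c by linarith)
  rw [abs_mul, abs_of_nonneg sol_nonneg]
  rcases le_total w 0 with hw0 | hw0
  · calc |w| * steinSol (cutoff c δ) w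
        ≤ |w| * ((1 - gaussMean (cutoff c δ)) * millsRatio (-w)) := by
          gcongr
          exact hh.steinSol_le_mul_millsRatio_neg w
      _ = (1 - gaussMean (cutoff c δ)) * (-w * millsRatio (-w)) := by
          rw [abs_of_nonpos hw0]
          ring
      _ ≤ (1 - gaussMean (cutoff c δ)) * 1 := by
          gcongr
          · exact sub_nonneg.2 hh.gaussMean_le_one
          · exact mul_millsRatio_le_one (neg_nonneg.2 hw0)
      _ ≤ 1 / c ^ 4 := by simpa only [mul_one] using one_sub_gaussMean_cutoff_le hδ hc
      _ ≤ 1 / c ^ 3 := by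
          gcongr
          · linarith
          · norm_num
  · calc |w| * steinSol (cutoff c δ) w
        ≤ c * (1 / c ^ 4) := by
          rw [abs_of_nonneg hw0]
          gcongr
          · linarith
          · exact steinSol_cutoff_le hδ hc hw
      _ = 1 / c ^ 3 := by field_simp

lemma abs_steinSolDeriv_cutoff_le (hδ : 0 < δ) (hc : 8 ≤ c) (hw : w ≤ c / 2) :
    |steinSolDeriv (cutoff c δ) w| ≤ 1 / c ^ 2 := by
  have mean_nonneg := sub_nonneg.2 (isSteinTest_cutoff c hδ).gaussMean_le_one
  rw [steinSolDeriv, cutoff_of_le hδ (by linarith), add_sub_assoc]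
  calc |w * steinSol (cutoff c δ) w + (1 - gaussMean (cutoff c δ))|
      ≤ 1 / c ^ 3 + 1 / c ^ 4 := by
        refine (abs_add_le _ _).trans ?_
        rw [abs_of_nonneg mean_nonneg]
        gcongr
        · exact abs_mul_steinSol_cutoff_le hδ hc hw
        · exact one_sub_gaussMean_cutoff_le hδ hc
    _ ≤ 1 / c ^ 2 := by
        have inv_le : 1 / c ≤ 1 / 8 := by gcongr
        calc 1 / c ^ 3 + 1 / c ^ 4 = 1 / c ^ 2 * (1 / c * (1 + 1 / c)) := by field_simp
          _ ≤ 1 / c ^ 2 * (1 / 8 * (1 + 1 / 8)) := by gcongr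
          _ ≤ 1 / c ^ 2 := mul_le_of_le_one_right (by positivity) (by norm_num)

lemma abs_steinSol_cutoff_le_sq (hδ : 0 < δ) (hc : 8 ≤ c) (w : ℝ) :
    |steinSol (cutoff c δ) w| ≤ (1 + 6 * w ^ 2) / c ^ 2 := by
  rcases le_or_gt w (c / 2) with hw | hw
  · rw [abs_of_nonneg (steinSol_cutoff_nonneg hδ (by linarith))]
    calc steinSol (cutoff c δ) w ≤ 1 / c ^ 4 := steinSol_cutoff_le hδ hc hw
      _ ≤ (1 + 6 * w ^ 2) / c ^ 2 := by
        gcongr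
        · linarith [sq_nonneg w]
        · linarith
        · norm_num
  · refine ((isSteinTest_cutoff c hδ).abs_steinSol_le w).trans ?_
    rw [le_div_iff₀ (by positivity)]
    nlinarith

lemma abs_steinSolDeriv_cutoff_le_sq (hδ : 0 < δ) (hc : 8 ≤ c) (w : ℝ) :
    |steinSolDeriv (cutoff c δ) w| ≤ (1 + 4 * w ^ 2) / c ^ 2 := by
  rcases le_or_gt w (c / 2) with hw | hw
  · refine (abs_steinSolDeriv_cutoff_le hδ hc hw).trans ?_
    gcongr
    linarith [sq_nonneg w]
  · refine ((isSteinTest_cutoff c hδ).abs_steinSolDeriv_le_one w).trans ?_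
    rw [le_div_iff₀ (by positivity)]
    nlinarith

lemma abs_deriv_mul_steinSol_cutoff_le (hδ : 0 < δ) (hc : 8 ≤ c) (w : ℝ) :
    |steinSol (cutoff c δ) w + w * steinSolDeriv (cutoff c δ) w| ≤ 2 * (1 + w ^ 4) / c ^ 2 := by
  rcases le_or_gt w (c / 2) with hw | hw
  · have sol_le : |steinSol (cutoff c δ) w| ≤ 1 / c ^ 2 := by
      rw [abs_of_nonneg (steinSol_cutoff_nonneg hδ (by linarith))]
      refine (steinSol_cutoff_le hδ hc hw).trans ?_
      gcongr
      · linarith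
      · norm_num
    have abs_le_quartic : |w| ≤ 1 + w ^ 4 := by
      nlinarith [sq_nonneg (w ^ 2 - 1 / 2), sq_nonneg (|w| - 1 / 2), sq_abs w]
    calc |steinSol (cutoff c δ) w + w * steinSolDeriv (cutoff c δ) w|
        ≤ 1 / c ^ 2 + (1 + w ^ 4) * (1 / c ^ 2) := by
          refine (abs_add_le _ _).trans ?_
          rw [abs_mul]
          gcongr
          exact abs_steinSolDeriv_cutoff_le hδ hc hw
      _ = (2 + w ^ 4) / c ^ 2 := by ring
      _ ≤ 2 * (1 + w ^ 4) / c ^ 2 := by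
          gcongr
          linarith [show 0 ≤ w ^ 4 by positivity]
  · refine ((isSteinTest_cutoff c hδ).abs_deriv_mul_steinSol_le w).trans ?_
    have hcw : c ^ 2 ≤ 4 * w ^ 2 := by nlinarith
    have hw2 : 16 ≤ w ^ 2 := by nlinarith
    rw [le_div_iff₀ (by positivity)]
    nlinarith

end Cutoff

/-! ### Bounded random variables -/

/-- A bounded measurable real function; finite measures integrate all of them, and the class is
closed under ring operations and continuous maps. -/
structure BddMeasurable {Ω : Type*} [MeasurableSpace Ω] (Y : Ω → ℝ) : Prop where
  measurable : Measurable Y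
  bounded : ∃ C, ∀ ω, |Y ω| ≤ C

namespace BddMeasurable

variable {Ω : Type*} [MeasurableSpace Ω] {X Y : Ω → ℝ}

lemma memLp (hY : BddMeasurable Y) (μ : Measure Ω) [IsFiniteMeasure μ] (p : ENNReal) :
    MemLp Y p μ :=
  let ⟨C, hC⟩ := hY.bounded
  MemLp.of_bound hY.measurable.aestronglyMeasurable C (ae_of_all _ hC)

lemma integrable (hY : BddMeasurable Y) (μ : Measure Ω) [IsFiniteMeasure μ] : Integrable Y μ :=
  memLp_one_iff_integrable.1 (hY.memLp μ 1)

lemma const (c : ℝ) : BddMeasurable fun _ : Ω ↦ c := ⟨measurable_const, |c|, fun _ ↦ le_rfl⟩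

lemma add (hX : BddMeasurable X) (hY : BddMeasurable Y) : BddMeasurable fun ω ↦ X ω + Y ω :=
  let ⟨C, hC⟩ := hX.bounded
  let ⟨D, hD⟩ := hY.bounded
  ⟨hX.measurable.add hY.measurable, C + D,
    fun ω ↦ (abs_add_le _ _).trans (add_le_add (hC ω) (hD ω))⟩

lemma mul (hX : BddMeasurable X) (hY : BddMeasurable Y) : BddMeasurable fun ω ↦ X ω * Y ω := by
  obtain ⟨C, hC⟩ := hX.bounded
  obtain ⟨D, hD⟩ := hY.bounded
  refine ⟨hX.measurable.mul hY.measurable, C * D, fun ω ↦ ?_⟩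
  rw [abs_mul]
  exact mul_le_mul (hC ω) (hD ω) (abs_nonneg _) ((abs_nonneg _).trans (hC ω))

lemma const_mul (c : ℝ) (hX : BddMeasurable X) : BddMeasurable fun ω ↦ c * X ω := (const c).mul hX

lemma continuous_comp {f : ℝ → ℝ} (hf : Continuous f) (hX : BddMeasurable X) :
    BddMeasurable fun ω ↦ f (X ω) := by
  obtain ⟨C, hC⟩ := hX.bounded
  obtain ⟨K, hK⟩ := (isCompact_Icc (a := -C) (b := C)).exists_bound_of_continuousOn hf.continuousOn
  exact ⟨hf.measurable.comp hX.measurable, K, fun ω ↦ hK _ (abs_le.1 (hC ω))⟩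

lemma neg (hX : BddMeasurable X) : BddMeasurable fun ω ↦ -X ω := hX.continuous_comp continuous_neg

lemma abs (hX : BddMeasurable X) : BddMeasurable fun ω ↦ |X ω| := hX.continuous_comp continuous_abs

lemma pow (hX : BddMeasurable X) (k : ℕ) : BddMeasurable fun ω ↦ X ω ^ k :=
  hX.continuous_comp (continuous_pow k)

lemma sub (hX : BddMeasurable X) (hY : BddMeasurable Y) : BddMeasurable fun ω ↦ X ω - Y ω := by
  simpa only [sub_eq_add_neg] using hX.add hY.neg

lemma indicator {s : Set ℝ} (hs : MeasurableSet s) (hX : BddMeasurable X) :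
    BddMeasurable fun ω ↦ s.indicator (fun _ ↦ (1 : ℝ)) (X ω) := by
  refine ⟨(measurable_const.indicator hs).comp hX.measurable, 1, fun ω ↦ ?_⟩
  rw [← norm_eq_abs]
  exact (norm_indicator_le_norm_self _ _).trans_eq norm_one

lemma sum {ι : Type*} {f : ι → Ω → ℝ} (S : Finset ι) (h : ∀ i, BddMeasurable (f i)) :
    BddMeasurable fun ω ↦ ∑ i ∈ S, f i ω := by
  choose C hC using fun i ↦ (h i).bounded
  exact ⟨S.measurable_fun_sum fun i _ ↦ (h i).measurable, ∑ i ∈ S, C i,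
    fun ω ↦ (S.abs_sum_le_sum_abs _).trans (Finset.sum_le_sum fun i _ ↦ hC i ω)⟩

lemma comp {Ω' : Type*} [MeasurableSpace Ω'] {p : Ω' → Ω} (hp : Measurable p)
    (hX : BddMeasurable X) : BddMeasurable fun ω ↦ X (p ω) :=
  ⟨hX.measurable.comp hp, hX.bounded.imp fun _ h _ ↦ h _⟩

end BddMeasurable

lemma integral_eq_integral_integral_of_indepFun {Ω E F : Type*} [MeasurableSpace Ω]
    [MeasurableSpace E] [MeasurableSpace F] {μ : Measure Ω} [IsFiniteMeasure μ] {X : Ω → E}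
    {Y : Ω → F} (hX : Measurable X) (hY : Measurable Y) (hXY : IndepFun X Y μ) {k : E × F → ℝ}
    (hk : Measurable k) (hint : Integrable (fun p : Ω × Ω ↦ k (X p.1, Y p.2)) (μ.prod μ)) :
    ∫ ω, k (X ω, Y ω) ∂μ = ∫ ω, ∫ ω', k (X ω, Y ω') ∂μ ∂μ := by
  have law_eq : μ.map (fun ω ↦ (X ω, Y ω)) = (μ.prod μ).map (Prod.map X Y) := by
    rw [(indepFun_iff_map_prod_eq_prod_map_map hX.aemeasurable hY.aemeasurable).1 hXY,
      Measure.map_prod_map _ _ hX hY]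
  calc ∫ ω, k (X ω, Y ω) ∂μ = ∫ p, k p ∂μ.map fun ω ↦ (X ω, Y ω) :=
        (integral_map (hX.prodMk hY).aemeasurable hk.aestronglyMeasurable).symm
    _ = ∫ p : Ω × Ω, k (X p.1, Y p.2) ∂μ.prod μ := by
        rw [law_eq, integral_map (hX.prodMap hY).aemeasurable hk.aestronglyMeasurable]
        rfl
    _ = ∫ ω, ∫ ω', k (X ω, Y ω') ∂μ ∂μ := integral_prod _ hint

lemma integral_sq_sum_sub_integral_le {Ω ι : Type*} [MeasurableSpace Ω] {μ : Measure Ω}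
    [IsProbabilityMeasure μ] {Y : ι → Ω → ℝ} (S : Finset ι) (hY : ∀ i, BddMeasurable (Y i))
    (hindep : iIndepFun Y μ) :
    ∫ ω, (∑ j ∈ S, Y j ω - ∑ j ∈ S, ∫ ω', Y j ω' ∂μ) ^ 2 ∂μ ≤ ∑ j ∈ S, ∫ ω, Y j ω ^ 2 ∂μ := by
  have sum_eq : ∑ j ∈ S, Y j = fun ω ↦ ∑ j ∈ S, Y j ω := by
    funext ω
    rw [Finset.sum_apply]
  have var_sum := IndepFun.variance_sum (s := S) (fun i _ ↦ (hY i).memLp μ 2)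
    (fun i _ j _ hij ↦ hindep.indepFun hij)
  rw [sum_eq, variance_eq_integral (BddMeasurable.sum S hY).measurable.aemeasurable,
    integral_finsetSum _ fun i _ ↦ (hY i).integrable μ] at var_sum
  rw [var_sum]
  exact Finset.sum_le_sum fun i _ ↦
    variance_le_expectation_sq (hY i).measurable.aestronglyMeasurable

/-! ### Exchanging a summand with an independent copy -/

lemma integral_abs_eq (t : ℝ) : ∫ s in (0 : ℝ)..t, |s| = t * |t| / 2 := by
  rcases le_total 0 t with ht | ht
  · rw [intervalIntegral.integral_congr (g := fun s ↦ s) fun s hs ↦ abs_of_nonneg ?_, integral_id,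
      abs_of_nonneg ht]
    · ring
    · rw [uIcc_of_le ht] at hs
      exact hs.1
  · rw [intervalIntegral.integral_congr (g := fun s ↦ -s) fun s hs ↦ abs_of_nonpos ?_,
      intervalIntegral.integral_neg, integral_id, abs_of_nonpos ht]
    · ring
    · rw [uIcc_of_ge ht] at hs
      exact hs.2

lemma integral_abs_sub_eq (x y : ℝ) :
    ∫ t in (0 : ℝ)..y, |t - x| = ((y - x) * |y - x| + x * |x|) / 2 := by
  have hint : ∀ a b : ℝ, IntervalIntegrable (fun s : ℝ ↦ |s|) volume a b := fun a b ↦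
    continuous_abs.intervalIntegrable a b
  rw [intervalIntegral.integral_comp_sub_right (fun s ↦ |s|),
    ← intervalIntegral.integral_interval_sub_left (a := 0) (hint _ _) (hint _ _), integral_abs_eq,
    integral_abs_eq, zero_sub, abs_neg]
  ring

lemma mul_integral_abs_sub_nonneg (x y : ℝ) : 0 ≤ y * ∫ t in (0 : ℝ)..y, |t - x| := by
  rcases le_total 0 y with hy | hy
  · exact mul_nonneg hy (intervalIntegral.integral_nonneg hy fun t _ ↦ abs_nonneg _)
  · rw [intervalIntegral.integral_symm, mul_neg, ← neg_mul]
    exact mul_nonneg (neg_nonneg.2 hy)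
      (intervalIntegral.integral_nonneg hy fun t _ ↦ abs_nonneg _)

lemma abs_sq_mul_sub_mul_sub_le {φ F : ℝ → ℝ} {M r x y : ℝ} (hM : 0 ≤ M)
    (hF : ∀ t, HasDerivAt F (φ t) t) (hφc : Continuous φ)
    (hφ : ∀ s ∈ Icc (-r) r, ∀ t ∈ Icc (-r) r, |φ s - φ t| ≤ M * |s - t|)
    (hx : x ∈ Icc (-r) r) (hy : y ∈ Icc (-r) r) :
    |y ^ 2 * φ x - y * (F y - F 0)| ≤ M / 2 * (y * ((y - x) * |y - x| + x * |x|)) := by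
  have hr : (0 : ℝ) ∈ Icc (-r) r := ⟨by linarith [hx.1, hx.2], by linarith [hx.1, hx.2]⟩
  have integral_eq : ∫ t in (0 : ℝ)..y, (φ t - φ x) = F y - F 0 - y * φ x := by
    rw [intervalIntegral.integral_sub (hφc.intervalIntegrable _ _) intervalIntegrable_const,
      intervalIntegral.integral_eq_sub_of_hasDerivAt (fun t _ ↦ hF t)
        (hφc.intervalIntegrable _ _), intervalIntegral.integral_const, sub_zero, smul_eq_mul]
  have hint : IntervalIntegrable (fun t ↦ M * |t - x|) volume 0 y :=
    Continuous.intervalIntegrable (by fun_prop) _ _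
  have integral_le : |F y - F 0 - y * φ x| ≤ |M * ∫ t in (0 : ℝ)..y, (|t - x|)| := by
    rw [← integral_eq, ← intervalIntegral.integral_const_mul, ← norm_eq_abs]
    refine intervalIntegral.norm_integral_le_abs_of_norm_le
      ((ae_restrict_iff' measurableSet_uIoc).2 (ae_of_all _ fun t ht ↦ ?_)) hint
    exact hφ t (ordConnected_Icc.uIcc_subset hr hy (uIoc_subset_uIcc ht)) x hx
  calc |y ^ 2 * φ x - y * (F y - F 0)| = |y| * |F y - F 0 - y * φ x| := by
        rw [← abs_mul, abs_sub_comm]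
        ring_nf
    _ ≤ |y| * |M * ∫ t in (0 : ℝ)..y, (|t - x|)| :=
        mul_le_mul_of_nonneg_left integral_le (abs_nonneg _)
    _ = M * (y * ∫ t in (0 : ℝ)..y, |t - x|) := by
        rw [← abs_mul, mul_left_comm,
          abs_of_nonneg (mul_nonneg hM (mul_integral_abs_sub_nonneg x y))]
    _ = M / 2 * (y * ((y - x) * |y - x| + x * |x|)) := by
        rw [integral_abs_sub_eq]
        ring

lemma mul_add_mul_swap_le (x y : ℝ) :
    y * ((y - x) * |y - x| + x * |x|) + x * ((x - y) * |x - y| + y * |y|) ≤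
      2 * |x| ^ 3 + 2 * |y| ^ 3 - x * |x| * y - x * (y * |y|) := by
  have expand : (y - x) ^ 2 * (|y| + |x|) = |x| ^ 3 + |y| ^ 3 + |x| ^ 2 * |y| + |y| ^ 2 * |x|
      - 2 * (x * |x|) * y - 2 * x * (y * |y|) := by
    rw [sub_sq, ← sq_abs x, ← sq_abs y]
    ring
  have triangle := mul_le_mul_of_nonneg_left (abs_sub y x) (sq_nonneg (y - x))
  have cubes : 0 ≤ (|x| - |y|) ^ 2 * (|x| + |y|) := by positivity
  rw [abs_sub_comm x y]
  nlinarith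

section IndependentCopy

variable {Ω : Type*} [MeasurableSpace Ω] {μ : Measure Ω} [IsProbabilityMeasure μ] {x : Ω → ℝ}

-- Averaging the integrand over the swap of the two copies makes its mixed terms nonpositive up to
-- products of means.
lemma integral_prod_mul_abs_sub_le (hx : BddMeasurable x) :
    ∫ p : Ω × Ω, x p.2 * ((x p.2 - x p.1) * |x p.2 - x p.1| + x p.1 * |x p.1|) ∂μ.prod μ ≤
      2 * ∫ ω, |x ω| ^ 3 ∂μ - (∫ ω, x ω ∂μ) * ∫ ω, x ω * |x ω| ∂μ := by
  have hX : BddMeasurable fun p : Ω × Ω ↦ x p.1 := hx.comp measurable_fst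
  have hY : BddMeasurable fun p : Ω × Ω ↦ x p.2 := hx.comp measurable_snd
  let k : ℝ → ℝ → ℝ := fun x y ↦ y * ((y - x) * |y - x| + x * |x|)
  have hk : BddMeasurable fun p : Ω × Ω ↦ k (x p.1) (x p.2) :=
    hY.mul (((hY.sub hX).mul (hY.sub hX).abs).add (hX.mul hX.abs))
  have hk_swap : BddMeasurable fun p : Ω × Ω ↦ k (x p.2) (x p.1) := hk.comp measurable_swap
  have swap : ∫ p : Ω × Ω, k (x p.2) (x p.1) ∂μ.prod μ = ∫ p : Ω × Ω, k (x p.1) (x p.2) ∂μ.prod μ :=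
    integral_prod_swap (fun p : Ω × Ω ↦ k (x p.1) (x p.2))
  have hX3 := (hX.abs.pow 3).const_mul 2
  have hY3 := (hY.abs.pow 3).const_mul 2
  have hXY := (hX.mul hX.abs).mul hY
  have hYX := hX.mul (hY.mul hY.abs)
  have symmetrized : ∫ p : Ω × Ω, (k (x p.1) (x p.2) + k (x p.2) (x p.1)) ∂μ.prod μ ≤
      ∫ p : Ω × Ω, (2 * |x p.1| ^ 3 + 2 * |x p.2| ^ 3 - x p.1 * |x p.1| * x p.2
        - x p.1 * (x p.2 * |x p.2|)) ∂μ.prod μ :=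
    integral_mono ((hk.add hk_swap).integrable _)
      ((((hX3.add hY3).sub hXY).sub hYX).integrable _) fun p ↦ mul_add_mul_swap_le _ _
  rw [integral_add (hk.integrable _) (hk_swap.integrable _), swap,
    integral_sub (((hX3.add hY3).sub hXY).integrable _) (hYX.integrable _),
    integral_sub ((hX3.add hY3).integrable _) (hXY.integrable _),
    integral_add (hX3.integrable _) (hY3.integrable _), integral_const_mul, integral_const_mul,
    integral_fun_fst (fun ω ↦ |x ω| ^ 3), integral_fun_snd (fun ω ↦ |x ω| ^ 3), probReal_univ,
    one_smul, integral_prod_mul (fun ω ↦ x ω * |x ω|) x,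
    integral_prod_mul x fun ω ↦ x ω * |x ω|] at symmetrized
  linarith

lemma abs_integral_mul_integral_mul_abs_le (μ : Measure Ω) (x : Ω → ℝ) :
    |(∫ ω, x ω ∂μ) * ∫ ω, x ω * |x ω| ∂μ| ≤ |∫ ω, x ω ∂μ| * ∫ ω, x ω ^ 2 ∂μ := by
  rw [abs_mul]
  refine mul_le_mul_of_nonneg_left (abs_integral_le_integral_abs.trans_eq ?_) (abs_nonneg _)
  simp_rw [abs_mul, abs_abs, ← sq, sq_abs]

lemma abs_integral_sq_mul_integral_sub_le {φ F : ℝ → ℝ} {M r : ℝ} (hx : Measurable x)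
    (hxr : ∀ ω, x ω ∈ Icc (-r) r) (hM : 0 ≤ M) (hF : ∀ t, HasDerivAt F (φ t) t)
    (hφc : Continuous φ)
    (hφ : ∀ s ∈ Icc (-r) r, ∀ t ∈ Icc (-r) r, |φ s - φ t| ≤ M * |s - t|) :
    |(∫ ω, x ω ^ 2 ∂μ) * (∫ ω, φ (x ω) ∂μ) - ∫ ω, x ω * (F (x ω) - F 0) ∂μ| ≤
      M * ((∫ ω, |x ω| ^ 3 ∂μ) + 1 / 2 * |∫ ω, x ω ∂μ| * ∫ ω, x ω ^ 2 ∂μ) := by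
  have hFc : Continuous F := continuous_iff_continuousAt.2 fun t ↦ (hF t).continuousAt
  have bx : BddMeasurable x := ⟨hx, r, fun ω ↦ abs_le.2 (hxr ω)⟩
  have hX : BddMeasurable fun p : Ω × Ω ↦ x p.1 := bx.comp measurable_fst
  have hY : BddMeasurable fun p : Ω × Ω ↦ x p.2 := bx.comp measurable_snd
  have hprod := (hX.continuous_comp hφc).mul (hY.pow 2)
  have hF_incr := hY.mul ((hY.continuous_comp hFc).sub (BddMeasurable.const (F 0)))
  have hkernel := (hY.mul (((hY.sub hX).mul (hY.sub hX).abs).add (hX.mul hX.abs))).const_mul (M / 2)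
  have as_double_integral :
      (∫ ω, x ω ^ 2 ∂μ) * (∫ ω, φ (x ω) ∂μ) - ∫ ω, x ω * (F (x ω) - F 0) ∂μ =
        ∫ p : Ω × Ω, (φ (x p.1) * x p.2 ^ 2 - x p.2 * (F (x p.2) - F 0)) ∂μ.prod μ := by
    rw [integral_sub (hprod.integrable _) (hF_incr.integrable _),
      integral_prod_mul (fun ω ↦ φ (x ω)) fun ω ↦ x ω ^ 2,
      integral_fun_snd fun ω ↦ x ω * (F (x ω) - F 0), probReal_univ, one_smul, mul_comm]
  have kernel_bound := integral_mono (μ := μ.prod μ) ((hprod.sub hF_incr).abs.integrable _)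
    (hkernel.integrable _) fun p ↦ by
      simpa only [mul_comm] using abs_sq_mul_sub_mul_sub_le hM hF hφc hφ (hxr p.1) (hxr p.2)
  rw [integral_const_mul] at kernel_bound
  rw [as_double_integral]
  calc _ ≤ M / 2 * _ := abs_integral_le_integral_abs.trans kernel_bound
    _ ≤ M / 2 * (2 * ∫ ω, |x ω| ^ 3 ∂μ + |∫ ω, x ω ∂μ| * ∫ ω, x ω ^ 2 ∂μ) := by
        refine mul_le_mul_of_nonneg_left ((integral_prod_mul_abs_sub_le bx).trans ?_) (by linarith)
        linarith [neg_abs_le ((∫ ω, x ω ∂μ) * ∫ ω, x ω * |x ω| ∂μ),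
          abs_integral_mul_integral_mul_abs_le μ x]
    _ = _ := by ring

end IndependentCopy

/-! ### Sums of independent bounded variables -/

section IndependentSum

variable {Ω ι : Type*} [MeasurableSpace Ω] {μ : Measure Ω} {x : ι → Ω → ℝ} {S : Finset ι}

lemma indepFun_sum_of_notMem (hx : ∀ i, Measurable (x i)) (hindep : iIndepFun x μ) {i : ι}
    (hi : i ∉ S) : IndepFun (fun ω ↦ ∑ j ∈ S, x j ω) (x i) μ := by
  simpa only [Finset.sum_fn] using hindep.indepFun_finsetSum_of_notMem hx hi

variable [IsProbabilityMeasure μ]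

lemma integral_sum_mul_comp_eq [DecidableEq ι] (hx : ∀ i, BddMeasurable (x i))
    (hindep : iIndepFun x μ) {f : ℝ → ℝ} (hf : Continuous f) :
    ∫ ω, (∑ j ∈ S, x j ω) * f (∑ j ∈ S, x j ω) ∂μ =
      ∑ j ∈ S, ∫ ω, x j ω * (f (∑ k ∈ S, x k ω) - f (∑ k ∈ S.erase j, x k ω)) ∂μ +
      ∑ j ∈ S, (∫ ω, x j ω ∂μ) * ∫ ω, f (∑ k ∈ S.erase j, x k ω) ∂μ := by
  have hfS (T : Finset ι) : BddMeasurable fun ω ↦ f (∑ k ∈ T, x k ω) :=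
    (BddMeasurable.sum T hx).continuous_comp hf
  simp_rw [Finset.sum_mul]
  rw [integral_finsetSum _ fun i _ ↦ ((hx i).mul (hfS S)).integrable μ, ← Finset.sum_add_distrib]
  refine Finset.sum_congr rfl fun j _ ↦ ?_
  have factor := (indepFun_sum_of_notMem (fun i ↦ (hx i).measurable) hindep
    (Finset.notMem_erase j S)).symm.integral_fun_comp_mul_comp (f := id)
      (hx j).measurable.aemeasurable (BddMeasurable.sum _ hx).measurable.aemeasurable
      measurable_id.aestronglyMeasurable hf.aestronglyMeasurable
  simp only [id] at factor
  rw [← factor, ← integral_add (((hx j).mul ((hfS S).sub (hfS _))).integrable μ)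
    (((hx j).mul (hfS _)).integrable μ)]
  congr! 2
  ring

lemma integral_exp_mul_le {y : Ω → ℝ} (hy : Measurable y) (hy_le : ∀ ω, |y ω| ≤ 1) {t : ℝ}
    (ht : |t| = 1) :
    ∫ ω, exp (t * y ω) ∂μ ≤ exp (|∫ ω, y ω ∂μ| + ∫ ω, y ω ^ 2 ∂μ) := by
  have by' : BddMeasurable y := ⟨hy, 1, hy_le⟩
  have hlin := (BddMeasurable.const 1).add (by'.const_mul t)
  have pointwise (ω : Ω) : exp (t * y ω) ≤ 1 + t * y ω + y ω ^ 2 := by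
    have habs : |t * y ω| ≤ 1 := by rw [abs_mul, ht, one_mul]; exact hy_le ω
    have hsq : (t * y ω) ^ 2 = y ω ^ 2 := by rw [mul_pow, ← sq_abs t, ht, one_pow, one_mul]
    linarith [(abs_le.1 (abs_exp_sub_one_sub_id_le habs)).2]
  calc ∫ ω, exp (t * y ω) ∂μ ≤ ∫ ω, (1 + t * y ω + y ω ^ 2) ∂μ :=
        integral_mono (((by'.const_mul t).continuous_comp continuous_exp).integrable μ)
          ((hlin.add (by'.pow 2)).integrable μ) pointwise
    _ = 1 + t * ∫ ω, y ω ∂μ + ∫ ω, y ω ^ 2 ∂μ := by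
        rw [integral_add (hlin.integrable μ) ((by'.pow 2).integrable μ),
          integral_add (integrable_const 1) ((by'.const_mul t).integrable μ), integral_const_mul,
          integral_const, probReal_univ, one_smul]
    _ ≤ |∫ ω, y ω ∂μ| + ∫ ω, y ω ^ 2 ∂μ + 1 := by
        have : t * ∫ ω, y ω ∂μ ≤ |∫ ω, y ω ∂μ| :=
          (le_abs_self _).trans_eq (by rw [abs_mul, ht, one_mul])
        linarith
    _ ≤ _ := add_one_le_exp _

lemma integral_exp_mul_sum_le (hx : ∀ i, Measurable (x i)) (hx_le : ∀ i ω, |x i ω| ≤ 1)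
    (hindep : iIndepFun x μ) {t : ℝ} (ht : |t| = 1) :
    ∫ ω, exp (t * ∑ j ∈ S, x j ω) ∂μ ≤
      exp (∑ j ∈ S, |∫ ω, x j ω ∂μ| + ∑ j ∈ S, ∫ ω, x j ω ^ 2 ∂μ) := by
  have mgf_sum := hindep.mgf_sum hx S (t := t)
  simp only [mgf, Finset.sum_apply] at mgf_sum
  rw [mgf_sum, ← Finset.sum_add_distrib, exp_sum]
  exact Finset.prod_le_prod (fun j _ ↦ integral_nonneg fun ω ↦ (exp_pos _).le)
    fun j _ ↦ integral_exp_mul_le (hx j) (hx_le j) ht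

end IndependentSum

lemma pow_four_le_exp_add_exp_neg (v : ℝ) : v ^ 4 ≤ 24 * (exp (1 * v) + exp (-1 * v)) := by
  have taylor := pow_div_factorial_le_exp |v| (abs_nonneg v) 4
  rw [Even.pow_abs ⟨2, rfl⟩, div_le_iff₀ (by positivity)] at taylor
  have exp_abs_le : exp |v| ≤ exp (1 * v) + exp (-1 * v) := by
    rcases abs_cases v with ⟨h, _⟩ | ⟨h, _⟩ <;> rw [h]
    · rw [one_mul]; linarith [exp_pos (-1 * v)]
    · rw [neg_one_mul]; linarith [exp_pos (1 * v)]
  norm_num only [Nat.factorial] at taylor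
  linarith

/-! ### Arrays of truncated summands -/

/-- Independent summands bounded by one which are almost standardized: the total variance and the
means are off by at most `B`, and `b` dominates both `B` and the third absolute moments. The bound
`2 / 37` is the threshold below which the Berry–Esséen bound `37 b / 2` is nontrivial. -/
structure TruncatedArray {Ω ι : Type*} [MeasurableSpace Ω] [Fintype ι] (μ : Measure Ω)
    (x : ι → Ω → ℝ) (B b : ℝ) : Prop where
  measurable : ∀ i, Measurable (x i)
  indep : iIndepFun x μ
  abs_le_one : ∀ i ω, |x i ω| ≤ 1
  sum_sq : ∑ i, ∫ ω, x i ω ^ 2 ∂μ = 1 - B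
  sum_abs_mean_le : ∑ i, |∫ ω, x i ω ∂μ| ≤ B
  B_nonneg : 0 ≤ B
  add_sum_cube_le : B + ∑ i, ∫ ω, |x i ω| ^ 3 ∂μ ≤ b
  b_pos : 0 < b
  b_lt : b < 2 / 37

namespace TruncatedArray

variable {Ω ι : Type*} [MeasurableSpace Ω] [Fintype ι] {μ : Measure Ω} {x : ι → Ω → ℝ} {B b : ℝ}

lemma bdd (H : TruncatedArray μ x B b) (i : ι) : BddMeasurable (x i) :=
  ⟨H.measurable i, 1, H.abs_le_one i⟩

lemma bdd_sum (H : TruncatedArray μ x B b) (S : Finset ι) :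
    BddMeasurable fun ω ↦ ∑ j ∈ S, x j ω := BddMeasurable.sum S H.bdd

lemma B_le (H : TruncatedArray μ x B b) : B ≤ b := by
  have : 0 ≤ ∑ i, ∫ ω, |x i ω| ^ 3 ∂μ :=
    Finset.sum_nonneg fun i _ ↦ integral_nonneg fun ω ↦ by positivity
  linarith [H.add_sum_cube_le]

lemma sum_cube_le (H : TruncatedArray μ x B b) (S : Finset ι) :
    ∑ i ∈ S, ∫ ω, |x i ω| ^ 3 ∂μ ≤ b - B := by
  have subset_sum := Finset.sum_le_univ_sum_of_nonneg (s := S) fun i ↦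
    (integral_nonneg fun ω ↦ by positivity : 0 ≤ ∫ ω, |x i ω| ^ 3 ∂μ)
  linarith [H.add_sum_cube_le]

lemma sum_abs_mean_le_of_finset (H : TruncatedArray μ x B b) (S : Finset ι) :
    ∑ j ∈ S, |∫ ω, x j ω ∂μ| ≤ B :=
  (Finset.sum_le_univ_sum_of_nonneg fun _ ↦ abs_nonneg _).trans H.sum_abs_mean_le

lemma sum_sq_le (H : TruncatedArray μ x B b) (S : Finset ι) :
    ∑ j ∈ S, ∫ ω, x j ω ^ 2 ∂μ ≤ 1 - B :=
  (Finset.sum_le_univ_sum_of_nonneg fun _ ↦ integral_nonneg fun _ ↦ sq_nonneg _).trans_eq H.sum_sq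

variable [IsProbabilityMeasure μ]

lemma integral_sq_sum_le (H : TruncatedArray μ x B b) (S : Finset ι) :
    ∫ ω, (∑ j ∈ S, x j ω) ^ 2 ∂μ ≤ 1 := by
  have variance_le := (integral_sq_sum_sub_integral_le S H.bdd H.indep).trans (H.sum_sq_le S)
  set m := ∑ j ∈ S, ∫ ω, x j ω ∂μ
  have mean_eq : ∫ ω, ∑ j ∈ S, x j ω ∂μ = m :=
    integral_finsetSum _ fun i _ ↦ (H.bdd i).integrable μ
  have mean_sq_le : m ^ 2 ≤ B ^ 2 := sq_le_sq.2 <|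
    ((Finset.abs_sum_le_sum_abs _ _).trans (H.sum_abs_mean_le_of_finset S)).trans (le_abs_self B)
  have variance_eq := variance_eq_sub ((H.bdd_sum S).memLp μ 2)
  rw [variance_eq_integral (H.bdd_sum S).measurable.aemeasurable, mean_eq] at variance_eq
  simp only [Pi.pow_apply] at variance_eq
  nlinarith [H.B_le, H.b_lt, H.B_nonneg]

lemma integral_abs_sum_le (H : TruncatedArray μ x B b) (S : Finset ι) :
    ∫ ω, |∑ j ∈ S, x j ω| ∂μ ≤ 1 := by
  have hsq := ((H.bdd_sum S).pow 2).const_mul (1 / 2)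
  calc ∫ ω, |∑ j ∈ S, x j ω| ∂μ ≤ ∫ ω, (1 / 2 + 1 / 2 * (∑ j ∈ S, x j ω) ^ 2) ∂μ := by
        refine integral_mono ((H.bdd_sum S).abs.integrable μ)
          (((BddMeasurable.const _).add hsq).integrable μ) fun ω ↦ ?_
        change |∑ j ∈ S, x j ω| ≤ 1 / 2 + 1 / 2 * (∑ j ∈ S, x j ω) ^ 2
        nlinarith [sq_nonneg (|∑ j ∈ S, x j ω| - 1), sq_abs (∑ j ∈ S, x j ω)]
    _ = 1 / 2 + 1 / 2 * ∫ ω, (∑ j ∈ S, x j ω) ^ 2 ∂μ := by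
        rw [integral_add (integrable_const _) (hsq.integrable μ), integral_const_mul,
          integral_const, probReal_univ, one_smul]
    _ ≤ 1 := by linarith [H.integral_sq_sum_le S]

lemma integral_exp_mul_sum_le_exp_one (H : TruncatedArray μ x B b) (S : Finset ι) {t : ℝ}
    (ht : |t| = 1) : ∫ ω, exp (t * ∑ j ∈ S, x j ω) ∂μ ≤ exp 1 :=
  (integral_exp_mul_sum_le H.measurable H.abs_le_one H.indep ht).trans <|
    exp_le_exp.2 (by linarith [H.sum_abs_mean_le_of_finset S, H.sum_sq_le S])

lemma integral_pow_four_sum_le (H : TruncatedArray μ x B b) (S : Finset ι) :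
    ∫ ω, (∑ j ∈ S, x j ω) ^ 4 ∂μ ≤ 131 := by
  have hexp (t : ℝ) : BddMeasurable fun ω ↦ exp (t * ∑ j ∈ S, x j ω) :=
    ((H.bdd_sum S).const_mul t).continuous_comp continuous_exp
  have pointwise := integral_mono (((H.bdd_sum S).pow 4).integrable μ)
    ((((hexp 1).add (hexp (-1))).const_mul 24).integrable μ)
    fun ω ↦ pow_four_le_exp_add_exp_neg (∑ j ∈ S, x j ω)
  rw [integral_const_mul, integral_add ((hexp 1).integrable μ) ((hexp (-1)).integrable μ)]
    at pointwise
  have exp_bound := H.integral_exp_mul_sum_le_exp_one S (t := 1) abs_one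
  have exp_neg_bound := H.integral_exp_mul_sum_le_exp_one S (t := -1) (by norm_num)
  linarith [exp_one_lt_d9]

lemma integral_sq_le (H : TruncatedArray μ x B b) (i : ι) : ∫ ω, x i ω ^ 2 ∂μ ≤ 0.143 := by
  have hcube := ((H.bdd i).abs.pow 3).const_mul (16 / 9)
  -- `16 / 9 * t ^ 3 + 3 / 64` touches `t ^ 2` at `t = 3 / 8`.
  have pointwise (ω : Ω) : x i ω ^ 2 ≤ 16 / 9 * |x i ω| ^ 3 + 3 / 64 := by
    have : 0 ≤ (|x i ω| - 3 / 8) ^ 2 * (16 / 9 * |x i ω| + 1 / 3) := by positivity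
    nlinarith [sq_abs (x i ω)]
  have integrated := integral_mono (((H.bdd i).pow 2).integrable μ)
    ((hcube.add (BddMeasurable.const (3 / 64))).integrable μ) pointwise
  rw [integral_add (hcube.integrable μ) (integrable_const _), integral_const_mul, integral_const,
    probReal_univ, one_smul] at integrated
  have third := H.sum_cube_le {i}
  rw [Finset.sum_singleton] at third
  norm_num
  linarith [H.b_lt, H.B_nonneg]

end TruncatedArray

/-! ### Concentration -/

/-- The part `|u| min(|u|, b)` of `u ^ 2` picked up, near an interval, by a ramp of unit slope that
extends by `b` beyond the interval on both sides. -/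
noncomputable def truncSq (b u : ℝ) : ℝ := |u| * min |u| b

lemma continuous_truncSq (b : ℝ) : Continuous (truncSq b) := by
  unfold truncSq
  fun_prop

lemma sq_sub_le_truncSq {b : ℝ} (hb : 0 < b) (u : ℝ) :
    u ^ 2 - (4 * b)⁻¹ * |u| ^ 3 ≤ truncSq b u := by
  have hu : 0 ≤ |u| := abs_nonneg u
  rw [truncSq, ← sq_abs, sub_le_iff_le_add, ← sub_le_iff_le_add', ← div_eq_inv_mul,
    le_div_iff₀ (by linarith)]
  rcases le_total |u| b with h | h
  · rw [min_eq_left h]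
    nlinarith [pow_nonneg hu 3]
  · rw [min_eq_right h]
    nlinarith [mul_nonneg hu (sq_nonneg (|u| - 2 * b))]

lemma truncSq_sq_le {b : ℝ} (hb : 0 ≤ b) (u : ℝ) : truncSq b u ^ 2 ≤ b ^ 2 * u ^ 2 := by
  rw [truncSq, mul_pow, sq_abs, mul_comm]
  exact mul_le_mul_of_nonneg_right
    (pow_le_pow_left₀ (le_min (abs_nonneg _) hb) (min_le_right _ _) 2) (sq_nonneg _)

lemma mul_sub_clamp_nonneg (s t v x : ℝ) : 0 ≤ x * (clamp s t v - clamp s t (v - x)) := by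
  rcases le_total 0 x with h | h
  · exact mul_nonneg h (sub_nonneg.2 (clamp_mono s t (by linarith)))
  · exact mul_nonneg_of_nonpos_of_nonpos h (sub_nonpos.2 (clamp_mono s t (by linarith)))

lemma truncSq_le_mul_sub_clamp {a b c v x : ℝ} (hb : 0 ≤ b) (hv : v ∈ Icc a c) :
    truncSq b x ≤ x * (clamp (a - b) (c + b) v - clamp (a - b) (c + b) (v - x)) := by
  obtain ⟨hav, hvc⟩ := hv
  have at_v : clamp (a - b) (c + b) v = v := clamp_of_mem_Icc ⟨by linarith, by linarith⟩
  rw [truncSq, at_v]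
  rcases le_total 0 x with hx | hx
  · have hm : 0 ≤ min x b := le_min hx hb
    have at_left : clamp (a - b) (c + b) (v - min x b) = v - min x b :=
      clamp_of_mem_Icc ⟨by linarith [min_le_right x b], by linarith⟩
    have mono : clamp (a - b) (c + b) (v - x) ≤ clamp (a - b) (c + b) (v - min x b) :=
      clamp_mono _ _ (by linarith [min_le_left x b])
    rw [abs_of_nonneg hx]
    exact mul_le_mul_of_nonneg_left (by linarith) hx
  · have hm : 0 ≤ min (-x) b := le_min (by linarith) hb
    have at_right : clamp (a - b) (c + b) (v + min (-x) b) = v + min (-x) b :=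
      clamp_of_mem_Icc ⟨by linarith, by linarith [min_le_right (-x) b]⟩
    have mono : clamp (a - b) (c + b) (v + min (-x) b) ≤ clamp (a - b) (c + b) (v - x) :=
      clamp_mono _ _ (by linarith [min_le_left (-x) b])
    rw [abs_of_nonpos hx, ← neg_mul_neg x]
    exact mul_le_mul_of_nonneg_left (by linarith) (by linarith)

lemma indicator_mul_truncSq_le {b : ℝ} (hb : 0 ≤ b) (a c v x : ℝ) :
    (Icc a c).indicator (fun _ ↦ 1) v * truncSq b x ≤
      x * (clamp (a - b) (c + b) v - clamp (a - b) (c + b) (v - x)) := by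
  by_cases hv : v ∈ Icc a c
  · rw [indicator_of_mem hv, one_mul]
    exact truncSq_le_mul_sub_clamp hb hv
  · rw [indicator_of_notMem hv, zero_mul]
    exact mul_sub_clamp_nonneg _ _ _ _

lemma mul_integral_mul_le_of_sq_dev_le {Ω : Type*} [MeasurableSpace Ω] {μ : Measure Ω}
    [IsFiniteMeasure μ] {I T D : Ω → ℝ} (hI : BddMeasurable I) (hT : BddMeasurable T)
    (hD : BddMeasurable D) {m r v κ : ℝ} (hr : 0 ≤ r) (hκ : 0 < κ) (hI_nonneg : ∀ ω, 0 ≤ I ω)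
    (hID : ∀ ω, I ω * r ≤ D ω) (hv : ∫ ω, (T ω - m) ^ 2 ∂μ ≤ v) :
    m * (∫ ω, I ω ∂μ) * r ≤
      (∫ ω, I ω * T ω ∂μ) * r + (κ / 2 * ∫ ω, D ω ^ 2 ∂μ + v / (2 * κ)) := by
  have hIT := (hI.mul hT).mul (BddMeasurable.const r)
  have hD2 := (hD.pow 2).const_mul (κ / 2)
  have hdev := ((hT.sub (BddMeasurable.const m)).pow 2).const_mul (2 * κ)⁻¹
  have young (ω : Ω) :
      D ω * |T ω - m| ≤ κ / 2 * D ω ^ 2 + (2 * κ)⁻¹ * (T ω - m) ^ 2 := by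
    rw [← sub_le_iff_le_add', ← div_eq_inv_mul, le_div_iff₀ (by linarith), ← sq_abs (T ω - m)]
    nlinarith [sq_nonneg (|T ω - m| - κ * D ω)]
  have pointwise (ω : Ω) : m * I ω * r ≤
      I ω * T ω * r + (κ / 2 * D ω ^ 2 + (2 * κ)⁻¹ * (T ω - m) ^ 2) := by
    have weight_le : I ω * r * (m - T ω) ≤ D ω * |T ω - m| := by
      refine (le_abs_self _).trans ?_
      rw [abs_mul, abs_sub_comm, abs_of_nonneg (mul_nonneg (hI_nonneg ω) hr)]
      exact mul_le_mul_of_nonneg_right (hID ω) (abs_nonneg _)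
    linarith [young ω]
  have integrated := integral_mono (((hI.const_mul m).mul (BddMeasurable.const r)).integrable μ)
    ((hIT.add (hD2.add hdev)).integrable μ) pointwise
  rw [integral_mul_const, integral_const_mul, integral_add (hIT.integrable μ)
    ((hD2.add hdev).integrable μ), integral_add (hD2.integrable μ) (hdev.integrable μ),
    integral_const_mul, integral_const_mul, integral_mul_const] at integrated
  have dev_le : (2 * κ)⁻¹ * ∫ ω, (T ω - m) ^ 2 ∂μ ≤ v / (2 * κ) := by
    rw [← div_eq_inv_mul]
    exact div_le_div_of_nonneg_right hv (by linarith)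
  linarith

/-- The ramp `clamp (a - b) (c + b) - K` of the concentration argument is controlled, after
multiplication by `r`, by a weight `D`, and its product with the identity by a weight `D₁`. -/
structure RampBound (a b c K r M : ℝ) (D D₁ : ℝ → ℝ) : Prop where
  continuous : Continuous D
  continuous₁ : Continuous D₁
  r_nonneg : 0 ≤ r
  M_nonneg : 0 ≤ M
  indicator_le : ∀ w, (Icc a c).indicator (fun _ ↦ (1 : ℝ)) w * r ≤ D w
  abs_ramp_le : ∀ w, |clamp (a - b) (c + b) w - K| * r ≤ M * D w
  mul_ramp_le : ∀ w, w * (clamp (a - b) (c + b) w - K) * r ≤ M * D₁ w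

lemma rampBound_uniform {b : ℝ} (hb : 0 < b) (a : ℝ) :
    RampBound a b (a + 5 * b) (a + 5 / 2 * b) 1 (7 / 2 * b) (fun _ ↦ 1) fun w ↦ |w| := by
  have hle : a - b ≤ a + 5 * b + b := by linarith
  have ramp_le (w : ℝ) : |clamp (a - b) (a + 5 * b + b) w - (a + 5 / 2 * b)| ≤ 7 / 2 * b :=
    abs_le.2 ⟨by linarith [le_clamp (a - b) (a + 5 * b + b) w], by linarith [clamp_le hle w]⟩
  exact
    { continuous := continuous_const
      continuous₁ := continuous_abs
      r_nonneg := zero_le_one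
      M_nonneg := by linarith
      indicator_le w := by
        rw [mul_one]
        exact indicator_le_self' (fun _ _ ↦ zero_le_one) w
      abs_ramp_le w := by simpa only [mul_one] using ramp_le w
      mul_ramp_le w := by
        rw [mul_one, mul_comm]
        refine (le_abs_self _).trans ?_
        rw [abs_mul]
        exact mul_le_mul_of_nonneg_right (ramp_le w) (abs_nonneg w) }

lemma rampBound_tail {a b r : ℝ} (hb : 0 < b) (hr : 17 ≤ r) (hra : r ≤ a - b) :
    RampBound a b (a + 5 * b) (a - b) (r ^ 2) (7 * b) (fun w ↦ w ^ 2) fun w ↦ w ^ 4 / 17 := by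
  have hle : a - b ≤ a + 5 * b + b := by linarith
  have ramp_nonneg (w : ℝ) : 0 ≤ clamp (a - b) (a + 5 * b + b) w - (a - b) :=
    sub_nonneg.2 (le_clamp _ _ w)
  have ramp_le (w : ℝ) :
      (clamp (a - b) (a + 5 * b + b) w - (a - b)) * r ^ 2 ≤ 7 * b * w ^ 2 := by
    rcases le_total w (a - b) with h | h
    · rw [clamp_of_le_left h, sub_self, zero_mul]
      positivity
    · exact mul_le_mul (by linarith [clamp_le hle w])
        (pow_le_pow_left₀ (by linarith) (by linarith) 2) (by positivity) (by linarith)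
  refine ⟨by fun_prop, by fun_prop, by positivity, by linarith, fun w ↦ ?_, fun w ↦ ?_, fun w ↦ ?_⟩
  · by_cases hw : w ∈ Icc a (a + 5 * b)
    · rw [indicator_of_mem hw, one_mul]
      exact pow_le_pow_left₀ (by linarith) (by linarith [hw.1]) 2
    · rw [indicator_of_notMem hw, zero_mul]
      positivity
  · rw [abs_of_nonneg (ramp_nonneg w)]
    exact ramp_le w
  · rcases le_total w (a - b) with h | h
    · rw [clamp_of_le_left h, sub_self, mul_zero, zero_mul]
      positivity
    · have hw : 17 ≤ w := by linarith
      calc w * (clamp (a - b) (a + 5 * b + b) w - (a - b)) * r ^ 2 ≤ w * (7 * b * w ^ 2) := by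
            rw [mul_assoc]
            exact mul_le_mul_of_nonneg_left (ramp_le w) (by linarith)
        _ = 7 * b * w ^ 3 := by ring
        _ ≤ 7 * b * (w ^ 4 / 17) := by
            refine mul_le_mul_of_nonneg_left ?_ (by linarith)
            rw [le_div_iff₀ (by norm_num), pow_succ w 3]
            exact mul_le_mul_of_nonneg_left hw (by positivity)

namespace TruncatedArray

variable {Ω ι : Type*} [MeasurableSpace Ω] [Fintype ι] {μ : Measure Ω} {x : ι → Ω → ℝ} {B b : ℝ}

lemma bdd_truncSq (H : TruncatedArray μ x B b) (i : ι) : BddMeasurable fun ω ↦ truncSq b (x i ω) :=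
  (H.bdd i).continuous_comp (continuous_truncSq b)

variable [IsProbabilityMeasure μ]

lemma integral_sq_sum_truncSq_sub_le (H : TruncatedArray μ x B b) (S : Finset ι) :
    ∫ ω, (∑ j ∈ S, truncSq b (x j ω) - ∑ j ∈ S, ∫ ω', truncSq b (x j ω') ∂μ) ^ 2 ∂μ ≤ b ^ 2 := by
  have hindep : iIndepFun (fun j ω ↦ truncSq b (x j ω)) μ :=
    H.indep.comp (fun _ ↦ truncSq b) fun _ ↦ (continuous_truncSq b).measurable
  have fourth_le (j : ι) : ∫ ω, truncSq b (x j ω) ^ 2 ∂μ ≤ b ^ 2 * ∫ ω, x j ω ^ 2 ∂μ := by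
    rw [← integral_const_mul]
    exact integral_mono (((H.bdd_truncSq j).pow 2).integrable μ)
      ((((H.bdd j).pow 2).const_mul _).integrable μ) fun ω ↦ truncSq_sq_le H.b_pos.le _
  calc _ ≤ ∑ j ∈ S, ∫ ω, truncSq b (x j ω) ^ 2 ∂μ :=
        integral_sq_sum_sub_integral_le S H.bdd_truncSq hindep
    _ ≤ b ^ 2 * ∑ j ∈ S, ∫ ω, x j ω ^ 2 ∂μ := by
        rw [Finset.mul_sum]
        exact Finset.sum_le_sum fun j _ ↦ fourth_le j
    _ ≤ b ^ 2 := mul_le_of_le_one_right (sq_nonneg b) (by linarith [H.sum_sq_le S, H.B_nonneg])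

variable [DecidableEq ι]

lemma le_sum_integral_truncSq (H : TruncatedArray μ x B b) (i : ι) :
    0.607 ≤ ∑ j ∈ Finset.univ.erase i, ∫ ω, truncSq b (x j ω) ∂μ := by
  have hb := H.b_pos
  have single_le (j : ι) : ∫ ω, x j ω ^ 2 ∂μ - (4 * b)⁻¹ * ∫ ω, |x j ω| ^ 3 ∂μ ≤
      ∫ ω, truncSq b (x j ω) ∂μ := by
    have hsq := (H.bdd j).pow 2
    have hcube := ((H.bdd j).abs.pow 3).const_mul (4 * b)⁻¹
    rw [← integral_const_mul, ← integral_sub (hsq.integrable μ) (hcube.integrable μ)]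
    exact integral_mono ((hsq.sub hcube).integrable μ) ((H.bdd_truncSq j).integrable μ)
      fun ω ↦ sq_sub_le_truncSq hb _
  refine le_trans ?_ (Finset.sum_le_sum fun j _ ↦ single_le j)
  rw [Finset.sum_sub_distrib, ← Finset.mul_sum]
  have sum_sq := Finset.add_sum_erase Finset.univ (fun j ↦ ∫ ω, x j ω ^ 2 ∂μ) (Finset.mem_univ i)
  rw [H.sum_sq] at sum_sq
  have cubes_le : (4 * b)⁻¹ * ∑ j ∈ Finset.univ.erase i, ∫ ω, |x j ω| ^ 3 ∂μ ≤ 1 / 4 - B := by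
    rw [← div_eq_inv_mul, div_le_iff₀ (by linarith)]
    nlinarith [H.sum_cube_le (Finset.univ.erase i),
      mul_nonneg H.B_nonneg (show 0 ≤ 1 - 4 * b by linarith [H.b_lt])]
  linarith [H.integral_sq_le i]

lemma integral_indicator_mul_truncSq_le (H : TruncatedArray μ x B b) (S : Finset ι) (a c K : ℝ) :
    ∫ ω, (Icc a c).indicator (fun _ ↦ (1 : ℝ)) (∑ j ∈ S, x j ω) *
      ∑ j ∈ S, truncSq b (x j ω) ∂μ ≤
    ∫ ω, (∑ j ∈ S, x j ω) * (clamp (a - b) (c + b) (∑ j ∈ S, x j ω) - K) ∂μ -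
      ∑ j ∈ S, (∫ ω, x j ω ∂μ) *
        ∫ ω, (clamp (a - b) (c + b) (∑ k ∈ S.erase j, x k ω) - K) ∂μ := by
  have hf : Continuous fun w ↦ clamp (a - b) (c + b) w - K :=
    (continuous_clamp _ _).sub continuous_const
  have hI : BddMeasurable fun ω ↦ (Icc a c).indicator (fun _ ↦ (1 : ℝ)) (∑ j ∈ S, x j ω) :=
    (H.bdd_sum S).indicator measurableSet_Icc
  rw [integral_sum_mul_comp_eq H.bdd H.indep hf, add_sub_cancel_right]
  simp_rw [Finset.mul_sum]
  rw [integral_finsetSum _ fun j _ ↦ (hI.mul (H.bdd_truncSq j)).integrable μ]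
  refine Finset.sum_le_sum fun j hj ↦ integral_mono ((hI.mul (H.bdd_truncSq j)).integrable μ)
    (((H.bdd j).mul (((H.bdd_sum S).continuous_comp hf).sub
      ((H.bdd_sum (S.erase j)).continuous_comp hf))).integrable μ) fun ω ↦ ?_
  have erase_eq : ∑ k ∈ S.erase j, x k ω = ∑ k ∈ S, x k ω - x j ω :=
    Finset.sum_erase_eq_sub hj
  simp only [erase_eq, sub_sub_sub_cancel_right]
  exact indicator_mul_truncSq_le H.b_pos.le _ _ _ _

lemma neg_sum_mean_mul_integral_le (H : TruncatedArray μ x B b) (S : Finset ι) {g D : ℝ → ℝ}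
    (hg : Continuous g) (hD : Continuous D) {r M : ℝ} (hr : 0 ≤ r) (hM : 0 ≤ M)
    (hgD : ∀ w, |g w| * r ≤ M * D w) (hD_le : ∀ T : Finset ι, ∫ ω, D (∑ j ∈ T, x j ω) ∂μ ≤ 1) :
    (-∑ j ∈ S, (∫ ω, x j ω ∂μ) * ∫ ω, g (∑ k ∈ S.erase j, x k ω) ∂μ) * r ≤ M * B := by
  have integral_le (T : Finset ι) : |∫ ω, g (∑ k ∈ T, x k ω) ∂μ| * r ≤ M := by
    have hgT := (H.bdd_sum T).continuous_comp hg
    calc |∫ ω, g (∑ k ∈ T, x k ω) ∂μ| * r ≤ (∫ ω, |g (∑ k ∈ T, x k ω)| ∂μ) * r :=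
          mul_le_mul_of_nonneg_right abs_integral_le_integral_abs hr
      _ ≤ M * ∫ ω, D (∑ k ∈ T, x k ω) ∂μ := by
          rw [← integral_mul_const, ← integral_const_mul]
          exact integral_mono ((hgT.abs.mul (BddMeasurable.const r)).integrable μ)
            ((((H.bdd_sum T).continuous_comp hD).const_mul M).integrable μ) fun ω ↦ hgD _
      _ ≤ M := mul_le_of_le_one_right hM (hD_le T)
  calc _ ≤ (∑ j ∈ S, |∫ ω, x j ω ∂μ| * |∫ ω, g (∑ k ∈ S.erase j, x k ω) ∂μ|) * r := by
        refine mul_le_mul_of_nonneg_right ?_ hr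
        refine (neg_le_abs _).trans ((Finset.abs_sum_le_sum_abs _ _).trans_eq ?_)
        simp_rw [abs_mul]
    _ ≤ ∑ j ∈ S, |∫ ω, x j ω ∂μ| * M := by
        rw [Finset.sum_mul]
        refine Finset.sum_le_sum fun j _ ↦ ?_
        rw [mul_assoc]
        exact mul_le_mul_of_nonneg_left (integral_le _) (abs_nonneg _)
    _ ≤ M * B := by
        rw [← Finset.sum_mul, mul_comm]
        exact mul_le_mul_of_nonneg_left (H.sum_abs_mean_le_of_finset S) hM

-- Both the uniform bound (`D = 1`, `D₁ = |w|`) and the tail bound (`D = w ^ 2`, `D₁ = w ^ 4 / 17`)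
-- are instances.
lemma integral_indicator_erase_mul_le (H : TruncatedArray μ x B b) (i : ι) {a c K r M N Q κ : ℝ}
    {D D₁ : ℝ → ℝ} (R : RampBound a b c K r M D D₁) (hκ : 0 < κ)
    (hD : ∀ S : Finset ι, ∫ ω, D (∑ j ∈ S, x j ω) ∂μ ≤ 1)
    (hD_sq : ∀ S : Finset ι, ∫ ω, D (∑ j ∈ S, x j ω) ^ 2 ∂μ ≤ Q)
    (hD₁ : ∀ S : Finset ι, ∫ ω, D₁ (∑ j ∈ S, x j ω) ∂μ ≤ N) :
    0.607 * (∫ ω, (Icc a c).indicator (fun _ ↦ (1 : ℝ)) (∑ j ∈ Finset.univ.erase i, x j ω) ∂μ) * r ≤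
      M * N + M * B + (κ / 2 * Q + b ^ 2 / (2 * κ)) := by
  set S := Finset.univ.erase i
  have hV := H.bdd_sum S
  have hf : Continuous fun w ↦ clamp (a - b) (c + b) w - K :=
    (continuous_clamp _ _).sub continuous_const
  have hind (w : ℝ) : 0 ≤ (Icc a c).indicator (fun _ ↦ (1 : ℝ)) w :=
    indicator_nonneg (fun _ _ ↦ zero_le_one) w
  have main_le : (∫ ω, (∑ j ∈ S, x j ω) * (clamp (a - b) (c + b) (∑ j ∈ S, x j ω) - K) ∂μ) * r ≤
      M * N := by
    refine le_trans ?_ (mul_le_mul_of_nonneg_left (hD₁ S) R.M_nonneg)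
    rw [← integral_mul_const, ← integral_const_mul]
    exact integral_mono
      (((hV.mul (hV.continuous_comp hf)).mul (BddMeasurable.const r)).integrable μ)
      (((hV.continuous_comp R.continuous₁).const_mul M).integrable μ) fun ω ↦ R.mul_ramp_le _
  have mean_le := H.neg_sum_mean_mul_integral_le S hf R.continuous R.r_nonneg R.M_nonneg
    R.abs_ramp_le hD
  have stein_le := mul_le_mul_of_nonneg_right (H.integral_indicator_mul_truncSq_le S a c K)
    R.r_nonneg
  have decouple := mul_integral_mul_le_of_sq_dev_le (hV.indicator measurableSet_Icc)
    (BddMeasurable.sum S H.bdd_truncSq) (hV.continuous_comp R.continuous) R.r_nonneg hκ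
    (fun ω ↦ hind _) (fun ω ↦ R.indicator_le _) (H.integral_sq_sum_truncSq_sub_le S)
  have weight_sq_le := mul_le_mul_of_nonneg_left (hD_sq S) (half_pos hκ).le
  have lower := mul_le_mul_of_nonneg_right (mul_le_mul_of_nonneg_right
    (H.le_sum_integral_truncSq i) (integral_nonneg (μ := μ) fun ω ↦ hind (∑ j ∈ S, x j ω)))
      R.r_nonneg
  linarith

lemma integral_indicator_erase_le (H : TruncatedArray μ x B b) (i : ι) (a : ℝ) :
    ∫ ω, (Icc a (a + 5 * b)).indicator (fun _ ↦ (1 : ℝ)) (∑ j ∈ Finset.univ.erase i, x j ω) ∂μ ≤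
      7.75 * b := by
  have hb := H.b_pos
  have bound := H.integral_indicator_erase_mul_le i (rampBound_uniform hb a) (N := 1) (Q := 1) hb
    (fun _ ↦ by rw [integral_const, probReal_univ, one_smul])
    (fun _ ↦ by rw [integral_const, probReal_univ, one_smul, one_pow]) H.integral_abs_sum_le
  have sq_div : b ^ 2 / (2 * b) = b / 2 := by field_simp
  have mean_le : 7 / 2 * b * B ≤ 7 / 2 * b * (2 / 37) :=
    mul_le_mul_of_nonneg_left (H.B_le.trans H.b_lt.le) (by linarith)
  rw [sq_div] at bound
  linarith

lemma integral_indicator_erase_le_tail (H : TruncatedArray μ x B b) (i : ι) {a c : ℝ} (hc : 19 ≤ c)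
    (ha : c - 1 ≤ a) :
    ∫ ω, (Icc a (a + 5 * b)).indicator (fun _ ↦ (1 : ℝ)) (∑ j ∈ Finset.univ.erase i, x j ω) ∂μ ≤
      150 / c ^ 2 * b := by
  have hb := H.b_pos
  have R := rampBound_tail hb (a := a) (r := 9 / 10 * c) (by linarith) (by linarith [H.b_lt])
  have bound := H.integral_indicator_erase_mul_le i R (N := 131 / 17) (Q := 131) (κ := b / 12)
    (by linarith) H.integral_sq_sum_le
    (fun S ↦ by simpa only [← pow_mul] using H.integral_pow_four_sum_le S)
    (fun S ↦ by
      rw [integral_div]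
      exact div_le_div_of_nonneg_right (H.integral_pow_four_sum_le S) (by norm_num))
  have sq_div : b ^ 2 / (2 * (b / 12)) = 6 * b := by field_simp; norm_num
  have mean_le : 7 * b * B ≤ 7 * b * (2 / 37) :=
    mul_le_mul_of_nonneg_left (H.B_le.trans H.b_lt.le) (by linarith)
  rw [sq_div, mul_pow] at bound
  rw [div_mul_eq_mul_div, le_div_iff₀ (by positivity)]
  linarith

end TruncatedArray

/-! ### Stein's method for the smoothed indicator -/

section Shift

variable {Ω : Type*} [MeasurableSpace Ω] {μ : Measure Ω} {V : Ω → ℝ}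

lemma continuous_integral_comp_add [IsFiniteMeasure μ] (hV : Measurable V) {g : ℝ → ℝ} {C : ℝ}
    (hg : Continuous g) (hC : ∀ w, |g w| ≤ C) : Continuous fun s ↦ ∫ ω, g (V ω + s) ∂μ :=
  continuous_of_dominated (bound := fun _ ↦ C)
    (fun s ↦ (hg.measurable.comp (hV.add_const s)).aestronglyMeasurable)
    (fun _ ↦ .of_forall fun _ ↦ hC _) (integrable_const C) (.of_forall fun _ ↦ by fun_prop)

lemma hasDerivAt_integral_comp_add [IsFiniteMeasure μ] (hV : Measurable V) {f f' : ℝ → ℝ}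
    {C C' : ℝ} (hf : ∀ w, HasDerivAt f (f' w) w) (hf' : Continuous f') (hC : ∀ w, |f w| ≤ C)
    (hC' : ∀ w, |f' w| ≤ C') (s : ℝ) :
    HasDerivAt (fun s ↦ ∫ ω, f (V ω + s) ∂μ) (∫ ω, f' (V ω + s) ∂μ) s := by
  have hfc : Continuous f := continuous_iff_continuousAt.2 fun t ↦ (hf t).continuousAt
  have hmeas (s : ℝ) : AEStronglyMeasurable (fun ω ↦ f (V ω + s)) μ :=
    (hfc.measurable.comp (hV.add_const s)).aestronglyMeasurable
  exact (hasDerivAt_integral_of_dominated_loc_of_deriv_le (bound := fun _ ↦ C')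
    (F' := fun s ω ↦ f' (V ω + s)) Filter.univ_mem
    (.of_forall hmeas) (.of_bound (hmeas s) C (.of_forall fun _ ↦ hC _))
    (hf'.measurable.comp (hV.add_const s)).aestronglyMeasurable
    (.of_forall fun _ _ _ ↦ hC' _) (integrable_const C')
    (.of_forall fun ω t _ ↦ (hf (V ω + t)).comp_const_add (V ω) t)).2

lemma indicator_Icc_add (c δ v u : ℝ) :
    (Icc c (c + δ)).indicator (fun _ ↦ (1 : ℝ)) (v + u) =
      (Icc (c - u) (c - u + δ)).indicator (fun _ ↦ (1 : ℝ)) v := by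
  have mem_iff : v + u ∈ Icc c (c + δ) ↔ v ∈ Icc (c - u) (c - u + δ) := by
    simp only [mem_Icc]
    constructor <;> rintro ⟨_, _⟩ <;> constructor <;> linarith
  by_cases hv : v ∈ Icc (c - u) (c - u + δ)
  · rw [indicator_of_mem hv, indicator_of_mem (mem_iff.2 hv)]
  · rw [indicator_of_notMem hv, indicator_of_notMem (mem_iff.not.2 hv)]

variable [IsProbabilityMeasure μ]

lemma abs_integral_cutoff_sub_le (hV : BddMeasurable V) {c δ Q r s t : ℝ} (hδ : 0 < δ)
    (hQ : ∀ a ∈ Icc (c - r) (c + r), ∫ ω, (Icc a (a + δ)).indicator (fun _ ↦ 1) (V ω) ∂μ ≤ Q)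
    (hs : -r ≤ s) (ht : t ≤ r) (hst : s ≤ t) :
    |∫ ω, cutoff c δ (V ω + s) ∂μ - ∫ ω, cutoff c δ (V ω + t) ∂μ| ≤ δ⁻¹ * Q * (t - s) := by
  have hcut (s : ℝ) : BddMeasurable fun ω ↦ cutoff c δ (V ω + s) :=
    (hV.add (.const s)).continuous_comp (isSteinTest_cutoff c hδ).continuous
  set J : ℝ → ℝ := (Icc c (c + δ)).indicator fun _ ↦ 1
  have J_le (w : ℝ) : ‖J w‖ ≤ 1 :=
    (norm_indicator_le_norm_self _ _).trans_eq norm_one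
  have J_meas : Measurable fun p : Ω × ℝ ↦ J (V p.1 + p.2) :=
    (measurable_const.indicator measurableSet_Icc).comp
      ((hV.measurable.comp measurable_fst).add measurable_snd)
  have J_int : Integrable (Function.uncurry fun ω u ↦ J (V ω + u))
      (μ.prod (volume.restrict (Ioc s t))) :=
    .of_bound J_meas.aestronglyMeasurable 1 (.of_forall fun _ ↦ J_le _)
  have mean_J_le : ∀ u ∈ Ioc s t, ∫ ω, J (V ω + u) ∂μ ≤ Q := fun u hu ↦ by
    simp_rw [J, indicator_Icc_add]
    exact hQ _ ⟨by linarith [hu.2], by linarith [hu.1]⟩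
  calc |∫ ω, cutoff c δ (V ω + s) ∂μ - ∫ ω, cutoff c δ (V ω + t) ∂μ|
    _ ≤ ∫ ω, |cutoff c δ (V ω + s) - cutoff c δ (V ω + t)| ∂μ := by
      rw [← integral_sub ((hcut s).integrable μ) ((hcut t).integrable μ)]
      exact abs_integral_le_integral_abs
    _ ≤ ∫ ω, δ⁻¹ * (∫ u in Ioc s t, J (V ω + u)) ∂μ :=
      integral_mono (((hcut s).sub (hcut t)).abs.integrable μ)
        (J_int.integral_prod_left.const_mul _) fun ω ↦ abs_cutoff_sub_le_integral c (V ω) hδ hst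
    _ = δ⁻¹ * ∫ u in Ioc s t, ∫ ω, J (V ω + u) ∂μ := by
      rw [integral_const_mul, integral_integral_swap J_int]
    _ ≤ δ⁻¹ * ∫ _ in Ioc s t, Q := mul_le_mul_of_nonneg_left
      (setIntegral_mono_on J_int.integral_prod_right (integrable_const Q) measurableSet_Ioc
        mean_J_le) (inv_nonneg.2 hδ.le)
    _ = δ⁻¹ * Q * (t - s) := by
      rw [setIntegral_const, volume_real_Ioc_of_le hst, smul_eq_mul]
      ring

end Shift

namespace IsSteinTest

variable {Ω : Type*} [MeasurableSpace Ω] {μ : Measure Ω} [IsProbabilityMeasure μ] {V X : Ω → ℝ}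
  {h : ℝ → ℝ}

lemma integral_steinSolDeriv (hh : IsSteinTest h) (hV : BddMeasurable V) :
    ∫ ω, steinSolDeriv h (V ω) ∂μ =
      ∫ ω, V ω * steinSol h (V ω) ∂μ + ∫ ω, h (V ω) ∂μ - gaussMean h := by
  have hmul := hV.mul (hV.continuous_comp hh.continuous_steinSol)
  have hhV := hV.continuous_comp hh.continuous
  unfold steinSolDeriv
  rw [integral_sub ((hmul.add hhV).integrable μ) (integrable_const _),
    integral_add (hmul.integrable μ) (hhV.integrable μ), integral_const, probReal_univ, one_smul]

lemma abs_integral_sq_mul_steinSolDeriv_sub_le (hh : IsSteinTest h) (hV : BddMeasurable V)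
    (hX : Measurable X) {M r : ℝ} (hXr : ∀ ω, X ω ∈ Icc (-r) r) (hXV : IndepFun X V μ)
    (hM : 0 ≤ M) (hLip : ∀ s ∈ Icc (-r) r, ∀ t ∈ Icc (-r) r,
      |∫ ω, steinSolDeriv h (V ω + s) ∂μ - ∫ ω, steinSolDeriv h (V ω + t) ∂μ| ≤ M * |s - t|) :
    |(∫ ω, X ω ^ 2 ∂μ) * (∫ ω, steinSolDeriv h (V ω + X ω) ∂μ) -
        ∫ ω, X ω * (steinSol h (V ω + X ω) - steinSol h (V ω)) ∂μ| ≤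
      M * ((∫ ω, |X ω| ^ 3 ∂μ) + 1 / 2 * |∫ ω, X ω ∂μ| * ∫ ω, X ω ^ 2 ∂μ) := by
  have bX : BddMeasurable X := ⟨hX, r, fun ω ↦ abs_le.2 (hXr ω)⟩
  have bX₁ : BddMeasurable fun p : Ω × Ω ↦ X p.1 := bX.comp measurable_fst
  have bV₂ : BddMeasurable fun p : Ω × Ω ↦ V p.2 := hV.comp measurable_snd
  have hf := hh.continuous_steinSol
  have hf' := hh.continuous_steinSolDeriv
  have deriv_eq : ∫ ω, steinSolDeriv h (V ω + X ω) ∂μ =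
      ∫ ω, ∫ ω', steinSolDeriv h (V ω' + X ω) ∂μ ∂μ :=
    integral_eq_integral_integral_of_indepFun hX hV.measurable hXV
      (k := fun p ↦ steinSolDeriv h (p.2 + p.1)) (by fun_prop)
      (((bV₂.add bX₁).continuous_comp hf').integrable _)
  have incr_eq : ∫ ω, X ω * (steinSol h (V ω + X ω) - steinSol h (V ω)) ∂μ =
      ∫ ω, X ω * (∫ ω', steinSol h (V ω' + X ω) ∂μ - ∫ ω', steinSol h (V ω' + 0) ∂μ) ∂μ := by
    rw [integral_eq_integral_integral_of_indepFun hX hV.measurable hXV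
      (k := fun p ↦ p.1 * (steinSol h (p.2 + p.1) - steinSol h p.2)) (by fun_prop)
      ((bX₁.mul (((bV₂.add bX₁).continuous_comp hf).sub (bV₂.continuous_comp hf))).integrable _)]
    refine integral_congr_ae (.of_forall fun ω ↦ ?_)
    have bVX : BddMeasurable fun ω' ↦ V ω' + X ω := hV.add (.const _)
    simp only [add_zero, integral_const_mul]
    rw [integral_sub ((bVX.continuous_comp hf).integrable μ) ((hV.continuous_comp hf).integrable μ)]
  rw [deriv_eq, incr_eq]
  exact abs_integral_sq_mul_integral_sub_le hX hXr hM
    (hasDerivAt_integral_comp_add hV.measurable hh.hasDerivAt_steinSol hf' hh.abs_steinSol_le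
      hh.abs_steinSolDeriv_le_one)
    (continuous_integral_comp_add hV.measurable hf' hh.abs_steinSolDeriv_le_one) hLip

end IsSteinTest

lemma abs_integral_steinSolDeriv_cutoff_sub_le {Ω : Type*} [MeasurableSpace Ω] {μ : Measure Ω}
    [IsProbabilityMeasure μ] {V : Ω → ℝ} (hV : BddMeasurable V) {c δ M Q r : ℝ} (hδ : 0 < δ)
    (hM : ∀ s t, -r ≤ s → t ≤ r → s ≤ t →
      |∫ ω, (V ω + s) * steinSol (cutoff c δ) (V ω + s) ∂μ -
        ∫ ω, (V ω + t) * steinSol (cutoff c δ) (V ω + t) ∂μ| ≤ M * (t - s))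
    (hQ : ∀ a ∈ Icc (c - r) (c + r), ∫ ω, (Icc a (a + δ)).indicator (fun _ ↦ 1) (V ω) ∂μ ≤ Q)
    {s t : ℝ} (hs : s ∈ Icc (-r) r) (ht : t ∈ Icc (-r) r) :
    |∫ ω, steinSolDeriv (cutoff c δ) (V ω + s) ∂μ -
        ∫ ω, steinSolDeriv (cutoff c δ) (V ω + t) ∂μ| ≤ (M + δ⁻¹ * Q) * |s - t| := by
  wlog hst : s ≤ t generalizing s t
  · rw [abs_sub_comm, abs_sub_comm s]
    exact this ht hs (le_of_not_ge hst)
  have hh := isSteinTest_cutoff c hδ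
  rw [hh.integral_steinSolDeriv (hV.add (.const s)), hh.integral_steinSolDeriv (hV.add (.const t)),
    sub_sub_sub_cancel_right, add_sub_add_comm, abs_sub_comm s, abs_of_nonneg (sub_nonneg.2 hst),
    add_mul]
  exact (abs_add_le _ _).trans (add_le_add (hM s t hs.1 ht.2 hst)
    (abs_integral_cutoff_sub_le hV hδ hQ hs.1 ht.2 hst))

namespace TruncatedArray

variable {Ω ι : Type*} [MeasurableSpace Ω] [Fintype ι] [DecidableEq ι] {μ : Measure Ω}
  [IsProbabilityMeasure μ] {x : ι → Ω → ℝ} {B b : ℝ} {h : ℝ → ℝ} {M D₀ D₁ : ℝ}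

lemma integral_sub_gaussMean_eq (H : TruncatedArray μ x B b) (hh : IsSteinTest h) :
    ∫ ω, h (∑ j, x j ω) ∂μ - gaussMean h =
      ∑ i, ((∫ ω, x i ω ^ 2 ∂μ) * ∫ ω, steinSolDeriv h (∑ j, x j ω) ∂μ -
        ∫ ω, x i ω * (steinSol h (∑ j, x j ω) -
          steinSol h (∑ j ∈ Finset.univ.erase i, x j ω)) ∂μ) +
      B * ∫ ω, steinSolDeriv h (∑ j, x j ω) ∂μ -
      ∑ i, (∫ ω, x i ω ∂μ) * ∫ ω, steinSol h (∑ j ∈ Finset.univ.erase i, x j ω) ∂μ := by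
  have stein_eq := hh.integral_steinSolDeriv (μ := μ) (H.bdd_sum Finset.univ)
  have stein_id := integral_sum_mul_comp_eq (S := Finset.univ) H.bdd H.indep hh.continuous_steinSol
  rw [Finset.sum_sub_distrib, ← Finset.sum_mul, H.sum_sq]
  linarith

lemma abs_integral_sq_mul_steinSolDeriv_sub_le (H : TruncatedArray μ x B b) (hh : IsSteinTest h)
    (hM : 0 ≤ M) (i : ι)
    (hLip : ∀ s ∈ Icc (-1 : ℝ) 1, ∀ t ∈ Icc (-1 : ℝ) 1,
      |∫ ω, steinSolDeriv h (∑ j ∈ Finset.univ.erase i, x j ω + s) ∂μ -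
        ∫ ω, steinSolDeriv h (∑ j ∈ Finset.univ.erase i, x j ω + t) ∂μ| ≤ M * |s - t|) :
    |(∫ ω, x i ω ^ 2 ∂μ) * ∫ ω, steinSolDeriv h (∑ j, x j ω) ∂μ -
        ∫ ω, x i ω * (steinSol h (∑ j, x j ω) -
          steinSol h (∑ j ∈ Finset.univ.erase i, x j ω)) ∂μ| ≤
      M * ((∫ ω, |x i ω| ^ 3 ∂μ) + 0.0715 * |∫ ω, x i ω ∂μ|) := by
  have hindep := (indepFun_sum_of_notMem H.measurable H.indep
    (Finset.notMem_erase i Finset.univ)).symm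
  have exchange := hh.abs_integral_sq_mul_steinSolDeriv_sub_le (H.bdd_sum _) (H.measurable i)
    (fun ω ↦ abs_le.1 (H.abs_le_one i ω)) hindep hM hLip
  simp_rw [Finset.sum_erase_add Finset.univ (fun j ↦ x j _) (Finset.mem_univ i)] at exchange
  refine exchange.trans (mul_le_mul_of_nonneg_left ?_ hM)
  linarith [mul_le_mul_of_nonneg_left (H.integral_sq_le i) (abs_nonneg (∫ ω, x i ω ∂μ))]

lemma abs_integral_sub_gaussMean_le (H : TruncatedArray μ x B b) (hh : IsSteinTest h)
    (hM : 0 ≤ M) (hD₀ : 0 ≤ D₀)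
    (hLip : ∀ i, ∀ s ∈ Icc (-1 : ℝ) 1, ∀ t ∈ Icc (-1 : ℝ) 1,
      |∫ ω, steinSolDeriv h (∑ j ∈ Finset.univ.erase i, x j ω + s) ∂μ -
        ∫ ω, steinSolDeriv h (∑ j ∈ Finset.univ.erase i, x j ω + t) ∂μ| ≤ M * |s - t|)
    (hf' : |∫ ω, steinSolDeriv h (∑ j, x j ω) ∂μ| ≤ D₁)
    (hf : ∀ i, |∫ ω, steinSol h (∑ j ∈ Finset.univ.erase i, x j ω) ∂μ| ≤ D₀) :
    |∫ ω, h (∑ j, x j ω) ∂μ - gaussMean h| ≤ M * (b - B + 0.0715 * B) + B * D₁ + B * D₀ := by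
  have main_term := (Finset.abs_sum_le_sum_abs _ Finset.univ).trans <|
    Finset.sum_le_sum fun i _ ↦ H.abs_integral_sq_mul_steinSolDeriv_sub_le hh hM i (hLip i)
  rw [← Finset.mul_sum, Finset.sum_add_distrib, ← Finset.mul_sum] at main_term
  have main_term_le : M * (∑ i, ∫ ω, |x i ω| ^ 3 ∂μ + 0.0715 * ∑ i, |∫ ω, x i ω ∂μ|) ≤
      M * (b - B + 0.0715 * B) :=
    mul_le_mul_of_nonneg_left (by linarith [H.sum_cube_le Finset.univ, H.sum_abs_mean_le]) hM
  have deriv_term : |B * ∫ ω, steinSolDeriv h (∑ j, x j ω) ∂μ| ≤ B * D₁ := by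
    rw [abs_mul, abs_of_nonneg H.B_nonneg]
    exact mul_le_mul_of_nonneg_left hf' H.B_nonneg
  have mean_term : |∑ i, (∫ ω, x i ω ∂μ) *
      ∫ ω, steinSol h (∑ j ∈ Finset.univ.erase i, x j ω) ∂μ| ≤ B * D₀ := calc
    _ ≤ ∑ i, |∫ ω, x i ω ∂μ| * D₀ := (Finset.abs_sum_le_sum_abs _ _).trans <|
      Finset.sum_le_sum fun i _ ↦ by
        rw [abs_mul]
        exact mul_le_mul_of_nonneg_left (hf i) (abs_nonneg _)
    _ ≤ B * D₀ := by
      rw [← Finset.sum_mul]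
      exact mul_le_mul_of_nonneg_right H.sum_abs_mean_le hD₀
  rw [H.integral_sub_gaussMean_eq hh]
  exact (abs_sub _ _).trans (add_le_add ((abs_add_le _ _).trans
    (add_le_add (main_term.trans main_term_le) deriv_term)) mean_term)

end TruncatedArray

/-! ### The two estimates for the smoothed indicator -/

lemma abs_mul_steinSol_cutoff_sub_le {c δ v s t : ℝ} (hδ : 0 < δ) (hc : 8 ≤ c) (hs : -1 ≤ s)
    (ht : t ≤ 1) (hst : s ≤ t) :
    |(v + s) * steinSol (cutoff c δ) (v + s) - (v + t) * steinSol (cutoff c δ) (v + t)| ≤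
      (18 + 16 * v ^ 4) / c ^ 2 * (t - s) := by
  have deriv_bound : ∀ w ∈ Icc (v - 1) (v + 1),
      ‖steinSol (cutoff c δ) w + w * steinSolDeriv (cutoff c δ) w‖ ≤
        (18 + 16 * v ^ 4) / c ^ 2 := fun w hw ↦ by
    rw [norm_eq_abs]
    refine (abs_deriv_mul_steinSol_cutoff_le hδ hc w).trans ?_
    have quartic := Even.add_pow_le (a := v) (b := w - v) (n := 4) (by decide)
    have dist_le : (w - v) ^ 4 ≤ 1 := by
      rw [← (by decide : Even 4).pow_abs]
      exact pow_le_one₀ (abs_nonneg _) (abs_le.2 ⟨by linarith [hw.1], by linarith [hw.2]⟩)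
    rw [add_sub_cancel] at quartic
    gcongr
    norm_num only at quartic
    linarith
  have mvt := (convex_Icc (v - 1) (v + 1)).norm_image_sub_le_of_norm_hasDerivWithin_le
    (fun w _ ↦ ((isSteinTest_cutoff c hδ).hasDerivAt_mul_steinSol w).hasDerivWithinAt) deriv_bound
    (x := v + t) (y := v + s) ⟨by linarith, by linarith⟩ ⟨by linarith, by linarith⟩
  rwa [norm_eq_abs, norm_eq_abs, add_sub_add_left_eq_sub, abs_sub_comm s,
    abs_of_nonneg (sub_nonneg.2 hst)] at mvt

namespace TruncatedArray

variable {Ω ι : Type*} [MeasurableSpace Ω] [Fintype ι] {μ : Measure Ω} [IsProbabilityMeasure μ]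
  {x : ι → Ω → ℝ} {B b c : ℝ} {h f : ℝ → ℝ} {s t : ℝ}

lemma abs_integral_sum_le (H : TruncatedArray μ x B b) (S : Finset ι) :
    |∫ ω, ∑ j ∈ S, x j ω ∂μ| ≤ B := by
  rw [integral_finsetSum _ fun i _ ↦ (H.bdd i).integrable μ]
  exact (Finset.abs_sum_le_sum_abs _ _).trans (H.sum_abs_mean_le_of_finset S)

lemma abs_integral_mul_steinSol_sub_le (H : TruncatedArray μ x B b) (hh : IsSteinTest h)
    (S : Finset ι) (hs : -1 ≤ s) (ht : t ≤ 1) (hst : s ≤ t) :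
    |∫ ω, (∑ j ∈ S, x j ω + s) * steinSol h (∑ j ∈ S, x j ω + s) ∂μ -
      ∫ ω, (∑ j ∈ S, x j ω + t) * steinSol h (∑ j ∈ S, x j ω + t) ∂μ| ≤ 2.03 * (t - s) := by
  set V : Ω → ℝ := fun ω ↦ ∑ j ∈ S, x j ω
  have bV : BddMeasurable V := H.bdd_sum S
  have bVs (s : ℝ) : BddMeasurable fun ω ↦ (V ω + s) * steinSol h (V ω + s) :=
    (bV.add (.const s)).mul ((bV.add (.const s)).continuous_comp hh.continuous_steinSol)
  have b_quad := (bV.pow 2).const_mul 3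
  have b_lin := (bV.const_mul (3 * (s + t))).add (.const (18 + (s ^ 2 + s * t + t ^ 2)))
  have mean_term : 3 * (s + t) * ∫ ω, V ω ∂μ ≤ 6 * B := by
    refine (le_abs_self _).trans ?_
    rw [abs_mul]
    exact mul_le_mul (abs_le.2 ⟨by linarith, by linarith⟩) (H.abs_integral_sum_le S)
      (abs_nonneg _) (by norm_num)
  have shift_term : s ^ 2 + s * t + t ^ 2 ≤ 3 := by nlinarith
  calc |∫ ω, (V ω + s) * steinSol h (V ω + s) ∂μ - ∫ ω, (V ω + t) * steinSol h (V ω + t) ∂μ|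
    _ ≤ ∫ ω, |(V ω + s) * steinSol h (V ω + s) - (V ω + t) * steinSol h (V ω + t)| ∂μ := by
      rw [← integral_sub ((bVs s).integrable μ) ((bVs t).integrable μ)]
      exact abs_integral_le_integral_abs
    _ ≤ ∫ ω, (t - s) / 12 * (3 * V ω ^ 2 +
          (3 * (s + t) * V ω + (18 + (s ^ 2 + s * t + t ^ 2)))) ∂μ := by
      refine integral_mono (((bVs s).sub (bVs t)).abs.integrable μ)
        (((b_quad.add b_lin).const_mul _).integrable μ) fun ω ↦ ?_
      rw [abs_sub_comm]
      refine (hh.abs_mul_steinSol_sub_le (by linarith)).trans_eq ?_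
      ring
    _ = (t - s) / 12 * (3 * ∫ ω, V ω ^ 2 ∂μ +
          (3 * (s + t) * ∫ ω, V ω ∂μ + (18 + (s ^ 2 + s * t + t ^ 2)))) := by
      rw [integral_const_mul, integral_add (b_quad.integrable μ) (b_lin.integrable μ),
        integral_add ((bV.const_mul _).integrable μ) (integrable_const _), integral_const_mul,
        integral_const_mul, integral_const, probReal_univ, one_smul]
    _ ≤ (t - s) / 12 * 24.36 := by
      refine mul_le_mul_of_nonneg_left ?_ (by linarith)
      linarith [H.integral_sq_sum_le S, H.B_le, H.b_lt]
    _ = 2.03 * (t - s) := by ring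

lemma abs_integral_mul_steinSol_cutoff_sub_le (H : TruncatedArray μ x B b) {δ : ℝ} (hδ : 0 < δ)
    (hc : 8 ≤ c) (S : Finset ι) (hs : -1 ≤ s) (ht : t ≤ 1) (hst : s ≤ t) :
    |∫ ω, (∑ j ∈ S, x j ω + s) * steinSol (cutoff c δ) (∑ j ∈ S, x j ω + s) ∂μ -
      ∫ ω, (∑ j ∈ S, x j ω + t) * steinSol (cutoff c δ) (∑ j ∈ S, x j ω + t) ∂μ| ≤
      2114 / c ^ 2 * (t - s) := by
  have bV : BddMeasurable fun ω ↦ ∑ j ∈ S, x j ω := H.bdd_sum S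
  have bVs (s : ℝ) := (bV.add (.const s)).mul
    ((bV.add (.const s)).continuous_comp (isSteinTest_cutoff c hδ).continuous_steinSol)
  have b_quartic := (bV.pow 4).const_mul 16
  rw [← integral_sub ((bVs s).integrable μ) ((bVs t).integrable μ)]
  calc _ ≤ ∫ ω, (18 + 16 * (∑ j ∈ S, x j ω) ^ 4) / c ^ 2 * (t - s) ∂μ :=
        abs_integral_le_integral_abs.trans <| integral_mono
          (((bVs s).sub (bVs t)).abs.integrable μ)
          (((((BddMeasurable.const 18).add b_quartic).integrable μ).div_const _).mul_const _)
          fun ω ↦ abs_mul_steinSol_cutoff_sub_le hδ hc hs ht hst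
    _ = (18 + 16 * ∫ ω, (∑ j ∈ S, x j ω) ^ 4 ∂μ) / c ^ 2 * (t - s) := by
      rw [integral_mul_const, integral_div, integral_add (integrable_const _)
        (b_quartic.integrable μ), integral_const_mul, integral_const, probReal_univ, one_smul]
    _ ≤ 2114 / c ^ 2 * (t - s) := by
      refine mul_le_mul_of_nonneg_right ?_ (sub_nonneg.2 hst)
      gcongr
      linarith [H.integral_pow_four_sum_le S]

lemma abs_integral_comp_sum_le (H : TruncatedArray μ x B b) (S : Finset ι) {C : ℝ} (hC : 0 ≤ C)
    (hf : Continuous f) (hbound : ∀ w, |f w| ≤ (1 + C * w ^ 2) / c ^ 2) :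
    |∫ ω, f (∑ j ∈ S, x j ω) ∂μ| ≤ (1 + C) / c ^ 2 := by
  have bV := H.bdd_sum S
  have b_quad := (bV.pow 2).const_mul C
  calc |∫ ω, f (∑ j ∈ S, x j ω) ∂μ|
    _ ≤ ∫ ω, (1 + C * (∑ j ∈ S, x j ω) ^ 2) / c ^ 2 ∂μ :=
      abs_integral_le_integral_abs.trans <| integral_mono
        ((bV.continuous_comp hf).abs.integrable μ)
        ((((BddMeasurable.const 1).add b_quad).integrable μ).div_const _) fun ω ↦ hbound _
    _ = (1 + C * ∫ ω, (∑ j ∈ S, x j ω) ^ 2 ∂μ) / c ^ 2 := by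
      rw [integral_div, integral_add (integrable_const _) (b_quad.integrable μ),
        integral_const_mul, integral_const, probReal_univ, one_smul]
    _ ≤ (1 + C) / c ^ 2 := by
      gcongr
      linarith [mul_le_mul_of_nonneg_left (H.integral_sq_sum_le S) hC]

lemma abs_integral_cutoff_sub_gaussMean_le (H : TruncatedArray μ x B b) (c : ℝ) :
    |∫ ω, cutoff c (5 * b) (∑ j, x j ω) ∂μ - gaussMean (cutoff c (5 * b))| ≤ 3.58 * b := by
  classical
  have hb := H.b_pos
  have hδ : 0 < 5 * b := by linarith
  have hh := isSteinTest_cutoff c hδ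
  have abs_mean_le {f : ℝ → ℝ} {C : ℝ} (hf : ∀ w, |f w| ≤ C) (S : Finset ι) :
      |∫ ω, f (∑ j ∈ S, x j ω) ∂μ| ≤ C := by
    simpa only [norm_eq_abs, probReal_univ, mul_one] using
      norm_integral_le_of_norm_le_const (μ := μ) (f := fun ω ↦ f (∑ j ∈ S, x j ω)) (C := C)
        (.of_forall fun ω ↦ hf _)
  have ratio : (5 * b)⁻¹ * (7.75 * b) = 1.55 := by field_simp; norm_num
  have main := H.abs_integral_sub_gaussMean_le hh (M := 2.03 + (5 * b)⁻¹ * (7.75 * b)) (D₀ := 3 / 2)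
    (D₁ := 1) (by positivity) (by norm_num)
    (fun i s hs t ht ↦ abs_integral_steinSolDeriv_cutoff_sub_le (H.bdd_sum _) hδ
      (fun s t ↦ H.abs_integral_mul_steinSol_sub_le hh _)
      (fun a _ ↦ H.integral_indicator_erase_le i a) hs ht)
    (abs_mean_le hh.abs_steinSolDeriv_le_one _) (fun _ ↦ abs_mean_le hh.abs_steinSol_le _)
  rw [ratio] at main
  linarith [H.B_nonneg]

lemma abs_integral_cutoff_sub_gaussMean_le_tail (H : TruncatedArray μ x B b) (hc : 19 ≤ c) :
    |∫ ω, cutoff c (5 * b) (∑ j, x j ω) ∂μ - gaussMean (cutoff c (5 * b))| ≤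
      2200 / c ^ 2 * b := by
  classical
  have hb := H.b_pos
  have hδ : 0 < 5 * b := by linarith
  have hc8 : 8 ≤ c := by linarith
  have hh := isSteinTest_cutoff c hδ
  have ratio : (5 * b)⁻¹ * (150 / c ^ 2 * b) = 30 / c ^ 2 := by field_simp; norm_num
  have main := H.abs_integral_sub_gaussMean_le hh
    (M := 2114 / c ^ 2 + (5 * b)⁻¹ * (150 / c ^ 2 * b)) (D₀ := (1 + 6) / c ^ 2)
    (D₁ := (1 + 4) / c ^ 2) (by positivity) (by positivity)
    (fun i s hs t ht ↦ abs_integral_steinSolDeriv_cutoff_sub_le (H.bdd_sum _) hδ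
      (fun s t ↦ H.abs_integral_mul_steinSol_cutoff_sub_le hδ hc8 _)
      (fun a ha ↦ H.integral_indicator_erase_le_tail i hc ha.1) hs ht)
    (H.abs_integral_comp_sum_le _ (by norm_num) hh.continuous_steinSolDeriv
      (abs_steinSolDeriv_cutoff_le_sq hδ hc8))
    (fun i ↦ H.abs_integral_comp_sum_le _ (by norm_num) hh.continuous_steinSol
      (abs_steinSol_cutoff_le_sq hδ hc8))
  have scaled : (2114 / c ^ 2 + 30 / c ^ 2) * (b - B + 0.0715 * B) + B * ((1 + 4) / c ^ 2) +
      B * ((1 + 6) / c ^ 2) = (2144 * b - 1978.704 * B) / c ^ 2 := by ring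
  rw [ratio, scaled] at main
  refine main.trans ?_
  rw [div_mul_eq_mul_div]
  gcongr
  linarith [H.B_nonneg]

end TruncatedArray

/-! ### Elementary probability bounds -/

section Probability

variable {Ω ι : Type*} [MeasurableSpace Ω] {μ : Measure Ω} {S T : Set Ω} {f X : Ω → ℝ}

lemma measureReal_preimage_inter_of_indepFun {α β : Type*} [MeasurableSpace α] [MeasurableSpace β]
    {Y : Ω → α} {Z : Ω → β} {s : Set α} {t : Set β} (h : IndepFun Y Z μ) (hs : MeasurableSet s)
    (ht : MeasurableSet t) : μ.real (Y ⁻¹' s ∩ Z ⁻¹' t) = μ.real (Y ⁻¹' s) * μ.real (Z ⁻¹' t) := by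
  rw [measureReal_def, h.measure_inter_preimage_eq_mul _ _ hs ht, ENNReal.toReal_mul]
  rfl

lemma indepFun_sum_comp_of_notMem {ξ : ι → Ω → ℝ} {g : ℝ → ℝ} {A : Finset ι} {i : ι}
    (hξ : ∀ j, Measurable (ξ j)) (hindep : iIndepFun ξ μ) (hg : Measurable g) (hi : i ∉ A) :
    IndepFun (ξ i) (fun ω ↦ ∑ j ∈ A, g (ξ j ω)) μ := by
  classical
  -- Apply `g` to every summand except `ξ i`.
  set G : ι → ℝ → ℝ := Function.update (fun _ ↦ g) i id
  have hG (j : ι) : Measurable (G j) := by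
    by_cases hj : j = i
    · subst hj; simpa only [G, Function.update_self] using measurable_id
    · simpa only [G, Function.update_of_ne hj] using hg
  have indep := (indepFun_sum_of_notMem (fun j ↦ (hG j).comp (hξ j)) (hindep.comp G hG) hi).symm
  have sum_eq (ω : Ω) : ∑ j ∈ A, (G j ∘ ξ j) ω = ∑ j ∈ A, g (ξ j ω) :=
    Finset.sum_congr rfl fun j hj ↦ by
      simp only [G, Function.comp_apply, Function.update_of_ne (ne_of_mem_of_not_mem hj hi)]
  simpa only [sum_eq, G, Function.update_self, Function.id_comp] using indep

section FiniteMeasure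

variable [IsFiniteMeasure μ]

lemma measureReal_le_integral (hS : MeasurableSet S) (hf : Integrable f μ) (hf₀ : ∀ ω, 0 ≤ f ω)
    (hf₁ : ∀ ω ∈ S, 1 ≤ f ω) : μ.real S ≤ ∫ ω, f ω ∂μ := by
  rw [← integral_indicator_one hS]
  exact integral_mono ((integrable_const 1).indicator hS) hf
    (indicator_le' hf₁ fun ω _ ↦ hf₀ ω)

lemma integral_le_measureReal (hS : MeasurableSet S) (hf : Integrable f μ) (hf₁ : ∀ ω, f ω ≤ 1)
    (hf₀ : ∀ ω ∉ S, f ω ≤ 0) : ∫ ω, f ω ∂μ ≤ μ.real S := by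
  rw [← integral_indicator_one hS]
  exact integral_mono hf ((integrable_const 1).indicator hS)
    (le_indicator (fun ω _ ↦ hf₁ ω) hf₀)

lemma measureReal_ge_le_integral_sq_div (hX : Measurable X) (hX2 : MemLp X 2 μ) {r : ℝ}
    (hr : 0 < r) : μ.real {ω | r ≤ X ω} ≤ (∫ ω, X ω ^ 2 ∂μ) / r ^ 2 := by
  rw [← integral_div]
  refine measureReal_le_integral (measurableSet_le measurable_const hX)
    (hX2.integrable_sq.div_const _) (fun ω ↦ by positivity) fun ω hω ↦ ?_
  rw [one_le_div (by positivity)]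
  exact pow_le_pow_left₀ hr.le hω 2

lemma measureReal_le_add_sum_diff [Fintype ι] {A : ι → Set Ω}
    (h : ∀ ω ∈ S, (∀ i, ω ∉ A i) → ω ∈ T) :
    μ.real S ≤ μ.real T + ∑ i, μ.real (A i \ T) := by
  have cover : S ⊆ T ∪ ⋃ i, A i \ T := fun ω hω ↦ by
    by_cases hT : ω ∈ T
    · exact .inl hT
    · obtain ⟨i, hi⟩ : ∃ i, ω ∈ A i := by
        by_contra! hA
        exact hT (h ω hω hA)
      exact .inr (mem_iUnion.2 ⟨i, hi, hT⟩)
  refine (measureReal_mono cover).trans ((measureReal_union_le _ _).trans ?_)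
  gcongr
  exact measureReal_iUnion_fintype_le _

end FiniteMeasure

/- One-sided Chebyshev: on `{z ≤ X}` the polynomial `(z X + 1) ^ 2 / (1 + z ^ 2) ^ 2` is at
least `1`. -/
lemma measureReal_ge_le_of_integral_sq_le_one [IsProbabilityMeasure μ] (hX : Measurable X)
    (hX2 : MemLp X 2 μ) (hmean : ∫ ω, X ω ∂μ = 0) (hsq : ∫ ω, X ω ^ 2 ∂μ ≤ 1) {z : ℝ}
    (hz : 0 ≤ z) : μ.real {ω | z ≤ X ω} ≤ 1 / (1 + z ^ 2) := by
  have hX1 : Integrable X μ := hX2.integrable one_le_two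
  have h_affine : Integrable (fun ω ↦ 2 * z * X ω + 1) μ :=
    (hX1.const_mul _).add (integrable_const 1)
  have expand (ω : Ω) : (z * X ω + 1) ^ 2 / (1 + z ^ 2) ^ 2 =
      (z ^ 2 * X ω ^ 2 + (2 * z * X ω + 1)) / (1 + z ^ 2) ^ 2 := by ring
  calc μ.real {ω | z ≤ X ω}
    _ ≤ ∫ ω, (z * X ω + 1) ^ 2 / (1 + z ^ 2) ^ 2 ∂μ := by
      refine measureReal_le_integral (measurableSet_le measurable_const hX) ?_
        (fun ω ↦ by positivity) fun ω (hω : z ≤ X ω) ↦ ?_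
      · simp_rw [expand]
        exact ((hX2.integrable_sq.const_mul _).add h_affine).div_const _
      · rw [one_le_div (by positivity)]
        exact pow_le_pow_left₀ (by positivity) (by nlinarith) 2
    _ = (z ^ 2 * ∫ ω, X ω ^ 2 ∂μ + 1) / (1 + z ^ 2) ^ 2 := by
      simp_rw [expand]
      rw [integral_div, integral_add (hX2.integrable_sq.const_mul _) h_affine,
        integral_add (hX1.const_mul _) (integrable_const 1), integral_const_mul,
        integral_const_mul, hmean, integral_const, probReal_univ, one_smul, mul_zero, zero_add]
    _ ≤ (z ^ 2 * 1 + 1) / (1 + z ^ 2) ^ 2 := by gcongr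
    _ = 1 / (1 + z ^ 2) := by field_simp; ring

end Probability

/-! ### Two-sided normal approximation at a point -/

/-- The distribution of `W` is within `R` of the standard normal distribution at `z`. The lower
bound is on `μ {W < z}`, so that the notion is invariant under reflecting `W` and `z`. -/
structure NormalApprox {Ω : Type*} [MeasurableSpace Ω] (μ : Measure Ω) (W : Ω → ℝ) (z R : ℝ) :
    Prop where
  le_add : μ.real {ω | W ω ≤ z} ≤ Phi z + R
  sub_le : Phi z - R ≤ μ.real {ω | W ω < z}

namespace NormalApprox

variable {Ω : Type*} [MeasurableSpace Ω] {μ : Measure Ω} {W : Ω → ℝ} {z R R' : ℝ}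

lemma mono (h : NormalApprox μ W z R) (hR : R ≤ R') : NormalApprox μ W z R' :=
  ⟨by linarith [h.le_add], by linarith [h.sub_le]⟩

variable [IsProbabilityMeasure μ]

lemma abs_sub_le (h : NormalApprox μ W z R) : |μ.real {ω | W ω ≤ z} - Phi z| ≤ R := by
  have lt_le : μ.real {ω | W ω < z} ≤ μ.real {ω | W ω ≤ z} :=
    measureReal_mono fun _ (hω : _ < z) ↦ hω.le
  exact abs_le.2 ⟨by linarith [h.sub_le], by linarith [h.le_add]⟩

lemma of_neg (hW : Measurable W) (h : NormalApprox μ (fun ω ↦ -W ω) (-z) R) :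
    NormalApprox μ W z R := by
  obtain ⟨le_add, sub_le⟩ := h
  simp only [neg_le_neg_iff, neg_lt_neg_iff, Phi_neg] at le_add sub_le
  have compl_lt := probReal_compl_eq_one_sub (μ := μ)
    (measurableSet_lt hW measurable_const : MeasurableSet {ω | W ω < z})
  have compl_le := probReal_compl_eq_one_sub (μ := μ)
    (measurableSet_le hW measurable_const : MeasurableSet {ω | W ω ≤ z})
  simp only [compl_ofPred, not_lt, not_le] at compl_lt compl_le
  exact ⟨by linarith, by linarith⟩

lemma of_integral_sq_le_one (hW : Measurable W) (hW2 : MemLp W 2 μ) (hmean : ∫ ω, W ω ∂μ = 0)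
    (hsq : ∫ ω, W ω ^ 2 ∂μ ≤ 1) (hz : 0 ≤ z) : NormalApprox μ W z (2 * ((1 + z) ^ 2)⁻¹) := by
  have error_le : 1 / (1 + z ^ 2) ≤ 2 * ((1 + z) ^ 2)⁻¹ := by
    rw [← div_eq_mul_inv, div_le_div_iff₀ (by positivity) (by positivity)]
    linarith [sq_nonneg (z - 1)]
  have upper_tail := measureReal_ge_le_of_integral_sq_le_one hW hW2 hmean hsq hz
  have compl_lt := probReal_compl_eq_one_sub (μ := μ)
    (measurableSet_lt hW measurable_const : MeasurableSet {ω | W ω < z})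
  simp only [compl_ofPred, not_lt] at compl_lt
  have le_one : μ.real {ω | W ω ≤ z} ≤ 1 := measureReal_le_one
  exact ⟨by linarith [one_sub_Phi_le hz], by linarith [Phi_le_one z]⟩

end NormalApprox

namespace TruncatedArray

lemma normalApprox {Ω ι : Type*} [MeasurableSpace Ω] [Fintype ι] {μ : Measure Ω}
    [IsProbabilityMeasure μ] {x : ι → Ω → ℝ} {B b z K ε : ℝ} (H : TruncatedArray μ x B b)
    (hK : ∀ u, z - 5 * b ≤ u → gaussKernel u ≤ K)
    (hε : ∀ c, z - 5 * b ≤ c →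
      |∫ ω, cutoff c (5 * b) (∑ j, x j ω) ∂μ - gaussMean (cutoff c (5 * b))| ≤ ε) :
    NormalApprox μ (fun ω ↦ ∑ j, x j ω) z (0.9975 * K * b + ε) := by
  have hδ : 0 < 5 * b := by linarith [H.b_pos]
  have bW := H.bdd_sum Finset.univ
  have h_int (c : ℝ) := (bW.continuous_comp (isSteinTest_cutoff c hδ).continuous).integrable μ
  constructor
  · have prob_le : μ.real {ω | ∑ j, x j ω ≤ z} ≤ ∫ ω, cutoff z (5 * b) (∑ j, x j ω) ∂μ :=
      measureReal_le_integral (measurableSet_le bW.measurable measurable_const) (h_int z)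
        (fun ω ↦ (isSteinTest_cutoff z hδ).nonneg _) fun ω hω ↦ (cutoff_of_le hδ hω).ge
    have gauss_le := gaussMean_cutoff_le (c := z) hδ fun u hu ↦ hK u (by linarith)
    linarith [(abs_le.1 (hε z (by linarith))).2]
  · have le_prob : ∫ ω, cutoff (z - 5 * b) (5 * b) (∑ j, x j ω) ∂μ ≤
        μ.real {ω | ∑ j, x j ω < z} :=
      integral_le_measureReal (measurableSet_lt bW.measurable measurable_const) (h_int _)
        (fun ω ↦ (isSteinTest_cutoff _ hδ).le_one _) fun ω hω ↦ by
          refine (cutoff_of_ge hδ ?_).le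
          rw [sub_add_cancel]
          exact not_lt.1 hω
    have gauss_ge := Phi_add_le_gaussMean_cutoff hδ hK
    rw [sub_add_cancel] at gauss_ge
    linarith [(abs_le.1 (hε _ le_rfl)).1]

end TruncatedArray

/-! ### Standardized arrays and their truncation -/

/-- A finite family of independent, centred, square-integrable random variables whose variances
sum to one. -/
structure StandardizedArray {Ω ι : Type*} [MeasurableSpace Ω] [Fintype ι] (μ : Measure Ω)
    (ξ : ι → Ω → ℝ) : Prop where
  measurable : ∀ i, Measurable (ξ i)
  indep : iIndepFun ξ μ
  memLp_two : ∀ i, MemLp (ξ i) 2 μ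
  integral_eq_zero : ∀ i, ∫ ω, ξ i ω ∂μ = 0
  sum_integral_sq : ∑ i, ∫ ω, ξ i ω ^ 2 ∂μ = 1

/-- Truncation of a real number at level one: values outside `[-1, 1]` are replaced by zero. -/
noncomputable def truncOne (u : ℝ) : ℝ := if |u| ≤ 1 then u else 0

lemma truncOne_of_abs_le {u : ℝ} (hu : |u| ≤ 1) : truncOne u = u := if_pos hu

lemma truncOne_of_lt_abs {u : ℝ} (hu : 1 < |u|) : truncOne u = 0 := if_neg hu.not_ge

lemma measurable_truncOne : Measurable truncOne :=
  .ite (measurableSet_le measurable_abs measurable_const) measurable_id measurable_const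

lemma abs_truncOne_le (u : ℝ) : |truncOne u| ≤ 1 := by
  rcases le_or_gt |u| 1 with hu | hu
  · rwa [truncOne_of_abs_le hu]
  · rw [truncOne_of_lt_abs hu, abs_zero]; exact zero_le_one

namespace StandardizedArray

section Sum

variable {Ω ι : Type*} [MeasurableSpace Ω] [Fintype ι] {μ : Measure Ω} {ξ : ι → Ω → ℝ}

lemma neg (X : StandardizedArray μ ξ) : StandardizedArray μ fun i ω ↦ -ξ i ω where
  measurable i := (X.measurable i).neg
  indep := X.indep.comp (fun _ u ↦ -u) fun _ ↦ measurable_neg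
  memLp_two i := (X.memLp_two i).neg
  integral_eq_zero i := by rw [integral_neg, X.integral_eq_zero i, neg_zero]
  sum_integral_sq := by simpa only [neg_sq] using X.sum_integral_sq

lemma measurable_sum (X : StandardizedArray μ ξ) (S : Finset ι) :
    Measurable fun ω ↦ ∑ j ∈ S, ξ j ω :=
  Finset.measurable_sum S fun i _ ↦ X.measurable i

lemma memLp_two_sum (X : StandardizedArray μ ξ) (S : Finset ι) :
    MemLp (fun ω ↦ ∑ j ∈ S, ξ j ω) 2 μ :=
  memLp_finsetSum S fun i _ ↦ X.memLp_two i

variable [IsProbabilityMeasure μ]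

lemma integrable (X : StandardizedArray μ ξ) (i : ι) : Integrable (ξ i) μ :=
  (X.memLp_two i).integrable one_le_two

lemma integral_sum_eq_zero (X : StandardizedArray μ ξ) (S : Finset ι) :
    ∫ ω, ∑ j ∈ S, ξ j ω ∂μ = 0 := by
  rw [integral_finsetSum _ fun i _ ↦ X.integrable i]
  exact Finset.sum_eq_zero fun i _ ↦ X.integral_eq_zero i

lemma integral_sq_sum_le_one (X : StandardizedArray μ ξ) (S : Finset ι) :
    ∫ ω, (∑ j ∈ S, ξ j ω) ^ 2 ∂μ ≤ 1 := by
  have variance_sum := IndepFun.variance_sum (s := S) (fun i _ ↦ X.memLp_two i)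
    fun i _ j _ hij ↦ X.indep.indepFun hij
  rw [Finset.sum_fn, variance_of_integral_eq_zero (X.measurable_sum S).aemeasurable
    (X.integral_sum_eq_zero S), Finset.sum_congr rfl fun i _ ↦ variance_of_integral_eq_zero
      (X.measurable i).aemeasurable (X.integral_eq_zero i)] at variance_sum
  rw [variance_sum, ← X.sum_integral_sq]
  exact Finset.sum_le_univ_sum_of_nonneg fun i ↦ integral_nonneg fun ω ↦ sq_nonneg _

lemma normalApprox_two_mul_inv (X : StandardizedArray μ ξ) {z : ℝ} (hz : 0 ≤ z) :
    NormalApprox μ (fun ω ↦ ∑ j, ξ j ω) z (2 * ((1 + z) ^ 2)⁻¹) :=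
  .of_integral_sq_le_one (X.measurable_sum _) (X.memLp_two_sum _) (X.integral_sum_eq_zero _)
    (X.integral_sq_sum_le_one _) hz

end Sum

variable {Ω : Type*} [MeasureSpace Ω] {n : ℕ} {ξ : Fin n → Ω → ℝ}

lemma measurableSet_one_lt_abs (X : StandardizedArray ℙ ξ) (i : Fin n) :
    MeasurableSet {ω | 1 < |ξ i ω|} :=
  measurableSet_lt measurable_const (measurable_abs.comp (X.measurable i))

lemma integrable_sq_large (X : StandardizedArray ℙ ξ) (i : Fin n) :
    Integrable fun ω ↦ if 1 < |ξ i ω| then ξ i ω ^ 2 else 0 := by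
  have h := (X.memLp_two i).integrable_sq.indicator (X.measurableSet_one_lt_abs i)
  exact h.congr (.of_forall fun ω ↦ indicator_apply _ _ _)

lemma bdd_truncOne (X : StandardizedArray ℙ ξ) (i : Fin n) :
    BddMeasurable fun ω ↦ truncOne (ξ i ω) :=
  ⟨measurable_truncOne.comp (X.measurable i), 1, fun _ ↦ abs_truncOne_le _⟩

variable [IsProbabilityMeasure (ℙ : Measure Ω)]

lemma sum_integral_truncOne_sq (X : StandardizedArray ℙ ξ) :
    ∑ i, ∫ ω, truncOne (ξ i ω) ^ 2 = 1 - beta2 ξ := by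
  rw [beta2, eq_sub_iff_add_eq, ← Finset.sum_add_distrib]
  refine (Finset.sum_congr rfl fun i _ ↦ ?_).trans X.sum_integral_sq
  rw [← integral_add (((X.bdd_truncOne i).pow 2).integrable _) (X.integrable_sq_large i)]
  congr! 2 with ω
  rcases le_or_gt |ξ i ω| 1 with h | h
  · rw [truncOne_of_abs_le h, if_neg h.not_gt, add_zero]
  · rw [truncOne_of_lt_abs h, if_pos h, zero_pow two_ne_zero, zero_add]

lemma sum_abs_integral_truncOne_le (X : StandardizedArray ℙ ξ) :
    ∑ i, |∫ ω, truncOne (ξ i ω)| ≤ beta2 ξ := by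
  refine Finset.sum_le_sum fun i _ ↦ ?_
  have h_trunc := (X.bdd_truncOne i).integrable ℙ
  have centred : ∫ ω, truncOne (ξ i ω) = ∫ ω, (truncOne (ξ i ω) - ξ i ω) := by
    rw [integral_sub h_trunc (X.integrable i), X.integral_eq_zero i, sub_zero]
  rw [centred]
  refine abs_integral_le_integral_abs.trans <|
    integral_mono (h_trunc.sub (X.integrable i)).abs (X.integrable_sq_large i) fun ω ↦ ?_
  change |truncOne (ξ i ω) - ξ i ω| ≤ if 1 < |ξ i ω| then ξ i ω ^ 2 else 0
  rcases le_or_gt |ξ i ω| 1 with h | h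
  · rw [truncOne_of_abs_le h, sub_self, abs_zero, if_neg h.not_gt]
  · rw [truncOne_of_lt_abs h, zero_sub, abs_neg, if_pos h, ← sq_abs]
    exact le_self_pow₀ h.le two_ne_zero

lemma sum_measureReal_one_lt_abs_le (X : StandardizedArray ℙ ξ) :
    ∑ i, (ℙ : Measure Ω).real {ω | 1 < |ξ i ω|} ≤ beta2 ξ := by
  refine Finset.sum_le_sum fun i _ ↦ measureReal_le_integral (X.measurableSet_one_lt_abs i)
    (X.integrable_sq_large i) (fun ω ↦ by split_ifs <;> positivity) fun ω (hω : 1 < |ξ i ω|) ↦ ?_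
  rw [if_pos hω, ← sq_abs]
  exact one_le_pow₀ hω.le

end StandardizedArray

section Beta

variable {Ω : Type*} [MeasureSpace Ω] {n : ℕ} {ξ : Fin n → Ω → ℝ}

lemma beta2_nonneg : 0 ≤ beta2 ξ :=
  Finset.sum_nonneg fun i _ ↦ integral_nonneg fun ω ↦ by
    change 0 ≤ if 1 < |ξ i ω| then ξ i ω ^ 2 else 0
    split_ifs <;> positivity

lemma beta3_nonneg : 0 ≤ beta3 ξ :=
  Finset.sum_nonneg fun i _ ↦ integral_nonneg fun ω ↦ by
    change 0 ≤ if |ξ i ω| ≤ 1 then |ξ i ω| ^ 3 else 0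
    split_ifs <;> positivity

lemma beta3_eq_sum_truncOne : beta3 ξ = ∑ i, ∫ ω, |truncOne (ξ i ω)| ^ 3 := by
  refine Finset.sum_congr rfl fun i _ ↦ ?_
  congr! 2 with ω
  rcases le_or_gt |ξ i ω| 1 with h | h
  · rw [if_pos h, truncOne_of_abs_le h]
  · rw [if_neg h.not_ge, truncOne_of_lt_abs h, abs_zero, zero_pow three_ne_zero]

end Beta

namespace StandardizedArray

variable {Ω : Type*} [MeasureSpace Ω] [IsProbabilityMeasure (ℙ : Measure Ω)] {n : ℕ}
  {ξ : Fin n → Ω → ℝ}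

lemma beta2_add_beta3_pos (X : StandardizedArray ℙ ξ) : 0 < beta2 ξ + beta3 ξ := by
  refine lt_of_le_of_ne (add_nonneg beta2_nonneg beta3_nonneg) fun h ↦ ?_
  obtain ⟨beta2_zero, beta3_zero⟩ := (add_eq_zero_iff_of_nonneg beta2_nonneg beta3_nonneg).1 h.symm
  rw [beta3_eq_sum_truncOne, Finset.sum_eq_zero_iff_of_nonneg
    fun i _ ↦ integral_nonneg fun ω ↦ by positivity] at beta3_zero
  have integral_sq_zero (i : Fin n) : ∫ ω, truncOne (ξ i ω) ^ 2 = 0 := by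
    have cube_zero := (integral_eq_zero_iff_of_nonneg (fun ω ↦ by positivity)
      (((X.bdd_truncOne i).abs.pow 3).integrable ℙ)).1 (beta3_zero i (Finset.mem_univ i))
    refine integral_eq_zero_of_ae ?_
    filter_upwards [cube_zero] with ω hω
    rw [abs_eq_zero.1 (pow_eq_zero_iff three_ne_zero |>.1 hω)]
    exact zero_pow two_ne_zero
  have total := X.sum_integral_truncOne_sq
  rw [Finset.sum_eq_zero fun i _ ↦ integral_sq_zero i, beta2_zero] at total
  norm_num at total

lemma truncatedArray (X : StandardizedArray ℙ ξ) (hβ : beta2 ξ + beta3 ξ < 2 / 37) :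
    TruncatedArray (ℙ : Measure Ω) (fun i ω ↦ truncOne (ξ i ω)) (beta2 ξ) (beta2 ξ + beta3 ξ) where
  measurable i := measurable_truncOne.comp (X.measurable i)
  indep := X.indep.comp (fun _ ↦ truncOne) fun _ ↦ measurable_truncOne
  abs_le_one _ _ := abs_truncOne_le _
  sum_sq := X.sum_integral_truncOne_sq
  sum_abs_mean_le := X.sum_abs_integral_truncOne_le
  B_nonneg := beta2_nonneg
  add_sum_cube_le := by rw [beta3_eq_sum_truncOne]
  b_pos := X.beta2_add_beta3_pos
  b_lt := hβ

end StandardizedArray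

/-! ### Transfer from the truncated sum -/

section Transfer

variable {Ω ι : Type*} [MeasurableSpace Ω] [Fintype ι] {μ : Measure Ω} [IsFiniteMeasure μ]
  {ξ : ι → Ω → ℝ} {z R S : ℝ}

lemma normalApprox_of_truncOne (h : NormalApprox μ (fun ω ↦ ∑ i, truncOne (ξ i ω)) z R)
    (hle : ∑ i, μ.real ({ω | 1 < |ξ i ω|} \ {ω | ∑ i, truncOne (ξ i ω) ≤ z}) ≤ S)
    (hlt : ∑ i, μ.real ({ω | 1 < |ξ i ω|} \ {ω | ∑ i, ξ i ω < z}) ≤ S) :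
    NormalApprox μ (fun ω ↦ ∑ i, ξ i ω) z (R + S) := by
  have sum_eq {ω : Ω} (hω : ∀ i, ω ∉ {ω | 1 < |ξ i ω|}) :
      ∑ i, truncOne (ξ i ω) = ∑ i, ξ i ω :=
    Finset.sum_congr rfl fun i _ ↦ truncOne_of_abs_le (not_lt.1 (hω i))
  have upper := measureReal_le_add_sum_diff (μ := μ) (S := {ω | ∑ i, ξ i ω ≤ z})
    (T := {ω | ∑ i, truncOne (ξ i ω) ≤ z}) (A := fun i ↦ {ω | 1 < |ξ i ω|})
    fun ω hω hA ↦ (sum_eq hA).trans_le hω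
  have lower := measureReal_le_add_sum_diff (μ := μ) (S := {ω | ∑ i, truncOne (ξ i ω) < z})
    (T := {ω | ∑ i, ξ i ω < z}) (A := fun i ↦ {ω | 1 < |ξ i ω|})
    fun ω hω hA ↦ (sum_eq hA).symm.trans_lt hω
  exact ⟨by linarith [h.le_add], by linarith [h.sub_le]⟩

lemma normalApprox_of_truncOne_add_sum (h : NormalApprox μ (fun ω ↦ ∑ i, truncOne (ξ i ω)) z R) :
    NormalApprox μ (fun ω ↦ ∑ i, ξ i ω) z (R + ∑ i, μ.real {ω | 1 < |ξ i ω|}) :=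
  normalApprox_of_truncOne h (Finset.sum_le_sum fun _ _ ↦ measureReal_mono sdiff_subset)
    (Finset.sum_le_sum fun _ _ ↦ measureReal_mono sdiff_subset)

end Transfer

namespace StandardizedArray

variable {Ω : Type*} [MeasureSpace Ω] [IsProbabilityMeasure (ℙ : Measure Ω)] {n : ℕ}
  {ξ : Fin n → Ω → ℝ}

/- The large summand is independent of the remaining sum, so the probability factors and each
factor can be estimated separately. -/
lemma sum_measureReal_one_lt_abs_inter_le (X : StandardizedArray ℙ ξ) {g : ℝ → ℝ}
    (hg : Measurable g) (hL2 : ∀ i, MemLp (fun ω ↦ ∑ j ∈ Finset.univ.erase i, g (ξ j ω)) 2 ℙ)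
    (hsq : ∀ i, ∫ ω, (∑ j ∈ Finset.univ.erase i, g (ξ j ω)) ^ 2 ≤ 1) {r : ℝ} (hr : 0 < r) :
    ∑ i, (ℙ : Measure Ω).real
      ({ω | 1 < |ξ i ω|} ∩ {ω | r ≤ ∑ j ∈ Finset.univ.erase i, g (ξ j ω)}) ≤
      beta2 ξ * (1 / r ^ 2) := by
  refine le_trans ?_ (mul_le_mul_of_nonneg_right X.sum_measureReal_one_lt_abs_le (by positivity))
  rw [Finset.sum_mul]
  refine Finset.sum_le_sum fun i _ ↦ ?_
  have factor := measureReal_preimage_inter_of_indepFun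
    (indepFun_sum_comp_of_notMem X.measurable X.indep hg (Finset.notMem_erase i Finset.univ))
    (measurableSet_lt measurable_const measurable_abs : MeasurableSet {u : ℝ | 1 < |u|})
    (measurableSet_Ici (a := r))
  refine factor.trans_le (mul_le_mul_of_nonneg_left ?_ measureReal_nonneg)
  refine (measureReal_ge_le_integral_sq_div
    (Finset.measurable_sum _ fun j _ ↦ hg.comp (X.measurable j)) (hL2 i) hr).trans ?_
  gcongr
  exact hsq i

lemma sum_measureReal_diff_truncOne_le (X : StandardizedArray ℙ ξ)
    (hβ : beta2 ξ + beta3 ξ < 2 / 37) {z : ℝ} (hz : 0 < z) :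
    ∑ i, (ℙ : Measure Ω).real ({ω | 1 < |ξ i ω|} \ {ω | ∑ i, truncOne (ξ i ω) ≤ z}) ≤
      beta2 ξ * (1 / z ^ 2) := by
  have H := X.truncatedArray hβ
  refine le_trans (Finset.sum_le_sum fun i _ ↦ measureReal_mono ?_)
    (X.sum_measureReal_one_lt_abs_inter_le measurable_truncOne
      (fun i ↦ (H.bdd_sum _).memLp ℙ 2) (fun i ↦ H.integral_sq_sum_le _) hz)
  refine fun ω ⟨h_large, h_gt⟩ ↦ ⟨h_large, ?_⟩
  change z ≤ ∑ j ∈ Finset.univ.erase i, truncOne (ξ j ω)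
  rw [Finset.sum_erase (f := fun j ↦ truncOne (ξ j ω)) _ (truncOne_of_lt_abs h_large)]
  exact (not_le.1 h_gt).le

lemma sum_measureReal_diff_le (X : StandardizedArray ℙ ξ) {z : ℝ} (hz : 0 < z) :
    ∑ i, (ℙ : Measure Ω).real ({ω | 1 < |ξ i ω|} \ {ω | ∑ i, ξ i ω < z}) ≤
      ∑ i, (ℙ : Measure Ω).real {ω | z / 4 < |ξ i ω|} + beta2 ξ * (1 / (3 * z / 4) ^ 2) := by
  refine le_trans ?_ (add_le_add_right (X.sum_measureReal_one_lt_abs_inter_le measurable_id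
    (fun i ↦ X.memLp_two_sum _) (fun i ↦ X.integral_sq_sum_le_one _)
    (by positivity : 0 < 3 * z / 4)) _)
  rw [← Finset.sum_add_distrib]
  refine Finset.sum_le_sum fun i _ ↦ le_trans (measureReal_mono ?_) (measureReal_union_le _ _)
  refine fun ω ⟨h_large, h_ge⟩ ↦ (lt_or_ge (z / 4) |ξ i ω|).imp_right fun h_small ↦ ⟨h_large, ?_⟩
  change 3 * z / 4 ≤ ∑ j ∈ Finset.univ.erase i, ξ j ω
  have split := Finset.add_sum_erase Finset.univ (fun j ↦ ξ j ω) (Finset.mem_univ i)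
  have h_sum : z ≤ ∑ j, ξ j ω := not_lt.1 h_ge
  linarith [le_abs_self (ξ i ω)]

end StandardizedArray

/-! ### The non-uniform bound -/

/-- The constant `C₂` of the non-uniform Berry–Esséen bound at `z`, where `β = β₂ + β₃`. -/
noncomputable def berryEsseenConst (β z : ℝ) : ℝ :=
  if 1 ≤ β then 15 else if |z| ≤ 2 then 37 else 25431

/-- The right-hand side of the non-uniform Berry–Esséen bound. -/
noncomputable def berryEsseenError {Ω : Type*} [MeasureSpace Ω] {n : ℕ} (ξ : Fin n → Ω → ℝ)
    (z : ℝ) : ℝ :=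
  2 * ∑ i, (ℙ : Measure Ω).real {ω | max 1 |z| / 4 < |ξ i ω|} +
    berryEsseenConst (beta2 ξ + beta3 ξ) z * ((1 + |z|) ^ 2)⁻¹ * (beta2 ξ + beta3 ξ)

lemma berryEsseenError_neg {Ω : Type*} [MeasureSpace Ω] {n : ℕ} (ξ : Fin n → Ω → ℝ) (z : ℝ) :
    berryEsseenError (fun i ω ↦ -ξ i ω) (-z) = berryEsseenError ξ z := by
  have beta2_neg : beta2 (fun i ω ↦ -ξ i ω) = beta2 ξ := by simp [beta2]
  have beta3_neg : beta3 (fun i ω ↦ -ξ i ω) = beta3 ξ := by simp [beta3]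
  simp only [berryEsseenError, berryEsseenConst, beta2_neg, beta3_neg, abs_neg]

lemma two_le_berryEsseenConst_mul {β : ℝ} (hβ : 2 / 37 ≤ β) (z : ℝ) :
    2 ≤ berryEsseenConst β z * β := by
  unfold berryEsseenConst
  split_ifs <;> linarith

lemma gaussKernel_le_of_seven_quarters_le {z u : ℝ} (hz : 1.75 ≤ z) (hu : z - 10 / 37 ≤ u) :
    gaussKernel u ≤ 0.37 :=
  calc gaussKernel u ≤ exp (-1.4797 ^ 2 / 2) :=
        gaussKernel_le_of_le (c := 1.4797) (by norm_num) (by linarith)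
    _ ≤ exp (-1) := exp_le_exp.2 (by norm_num)
    _ ≤ 0.37 := by linarith [exp_neg_one_lt_d9]

lemma inv_sq_le_of_twenty_le {z c : ℝ} (hz : 20 ≤ z) (hc : 0.98 * z ≤ c) :
    1 / c ^ 2 ≤ 1.2 * ((1 + z) ^ 2)⁻¹ := by
  have c_pos : 0 < c := by linarith
  rw [← div_eq_mul_inv, div_le_div_iff₀ (by positivity) (by positivity)]
  calc 1 * (1 + z) ^ 2 ≤ (1.05 * z) ^ 2 := by
        rw [one_mul]; exact pow_le_pow_left₀ (by linarith) (by linarith) 2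
    _ ≤ 1.2 * (0.98 * z) ^ 2 := by nlinarith
    _ ≤ 1.2 * c ^ 2 := by gcongr

namespace StandardizedArray

variable {Ω : Type*} [MeasureSpace Ω] [IsProbabilityMeasure (ℙ : Measure Ω)] {n : ℕ}
  {ξ : Fin n → Ω → ℝ} {z : ℝ}

lemma normalApprox_uniform (X : StandardizedArray ℙ ξ) (hβ : beta2 ξ + beta3 ξ < 2 / 37) {K : ℝ}
    (hK : ∀ u, z - 10 / 37 ≤ u → gaussKernel u ≤ K) :
    NormalApprox ℙ (fun ω ↦ ∑ i, ξ i ω) z ((3.58 + 0.9975 * K) * (beta2 ξ + beta3 ξ) +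
      ∑ i, (ℙ : Measure Ω).real {ω | 1 < |ξ i ω|}) := by
  have H := X.truncatedArray hβ
  refine normalApprox_of_truncOne_add_sum <|
    (H.normalApprox (K := K) (fun u hu ↦ hK u (by linarith))
      fun c _ ↦ H.abs_integral_cutoff_sub_gaussMean_le c).mono (le_of_eq ?_)
  ring

lemma normalApprox_of_le_two (X : StandardizedArray ℙ ξ) (hβ : beta2 ξ + beta3 ξ < 2 / 37)
    (hz₀ : 0 ≤ z) (hz₂ : z ≤ 2) :
    NormalApprox ℙ (fun ω ↦ ∑ i, ξ i ω) z (∑ i, (ℙ : Measure Ω).real {ω | 1 < |ξ i ω|} +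
      37 * ((1 + z) ^ 2)⁻¹ * (beta2 ξ + beta3 ξ)) := by
  obtain ⟨K, kernel_le, const_le⟩ : ∃ K : ℝ, (∀ u, z - 10 / 37 ≤ u → gaussKernel u ≤ K) ∧
      3.58 + 0.9975 * K ≤ 37 * ((1 + z) ^ 2)⁻¹ := by
    rcases le_total z 1.75 with h | h
    · refine ⟨1, fun u _ ↦ gaussKernel_le_one u, ?_⟩
      rw [← div_eq_mul_inv, le_div_iff₀ (by positivity)]
      nlinarith
    · refine ⟨0.37, fun u hu ↦ gaussKernel_le_of_seven_quarters_le h hu, ?_⟩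
      rw [← div_eq_mul_inv, le_div_iff₀ (by positivity)]
      nlinarith
  refine (X.normalApprox_uniform hβ kernel_le).mono ?_
  linarith [mul_le_mul_of_nonneg_right const_le X.beta2_add_beta3_pos.le]

lemma normalApprox_of_le_twenty (X : StandardizedArray ℙ ξ) (hβ : beta2 ξ + beta3 ξ < 2 / 37)
    (hz₀ : 0 ≤ z) (hz : z ≤ 20) :
    NormalApprox ℙ (fun ω ↦ ∑ i, ξ i ω) z
      (25431 * ((1 + z) ^ 2)⁻¹ * (beta2 ξ + beta3 ξ)) := by
  have const_le : 3.58 + 0.9975 * 1 + 1 ≤ 25431 * ((1 + z) ^ 2)⁻¹ := by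
    rw [← div_eq_mul_inv, le_div_iff₀ (by positivity)]
    nlinarith
  refine (X.normalApprox_uniform hβ fun u _ ↦ gaussKernel_le_one u).mono ?_
  linarith [mul_le_mul_of_nonneg_right const_le X.beta2_add_beta3_pos.le,
    X.sum_measureReal_one_lt_abs_le, beta3_nonneg (ξ := ξ)]

lemma normalApprox_of_twenty_le (X : StandardizedArray ℙ ξ) (hβ : beta2 ξ + beta3 ξ < 2 / 37)
    (hz : 20 ≤ z) :
    NormalApprox ℙ (fun ω ↦ ∑ i, ξ i ω) z (∑ i, (ℙ : Measure Ω).real {ω | z / 4 < |ξ i ω|} +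
      25431 * ((1 + z) ^ 2)⁻¹ * (beta2 ξ + beta3 ξ)) := by
  have H := X.truncatedArray hβ
  set β := beta2 ξ + beta3 ξ
  set q := 1.2 * ((1 + z) ^ 2)⁻¹
  have inv_sq_le {c : ℝ} (hc : z - 5 * β ≤ c) : 1 / c ^ 2 ≤ q :=
    inv_sq_le_of_twenty_le hz (by linarith)
  have truncated := H.normalApprox (z := z) (K := q) (ε := 2200 * q * β)
    (fun u hu ↦ (gaussKernel_le_inv_sq (by linarith)).trans (inv_sq_le hu)) fun c hc ↦ by
      refine (H.abs_integral_cutoff_sub_gaussMean_le_tail (by linarith)).trans ?_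
      rw [← mul_one_div]
      have := H.b_pos
      gcongr
      exact inv_sq_le hc
  have q_nonneg : 0 ≤ q := by positivity
  have beta2_mul_le : beta2 ξ * (1 / z ^ 2) ≤ β * q :=
    mul_le_mul H.B_le (inv_sq_le (by linarith [H.b_pos])) (by positivity) H.b_pos.le
  have tails_nonneg : 0 ≤ ∑ i, (ℙ : Measure Ω).real {ω | z / 4 < |ξ i ω|} :=
    Finset.sum_nonneg fun i _ ↦ measureReal_nonneg
  refine (normalApprox_of_truncOne truncated
    (S := ∑ i, (ℙ : Measure Ω).real {ω | z / 4 < |ξ i ω|} + 16 / 9 * (β * q)) ?_ ?_).mono ?_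
  · refine (X.sum_measureReal_diff_truncOne_le hβ (by linarith)).trans ?_
    linarith [mul_nonneg H.b_pos.le q_nonneg]
  · refine (X.sum_measureReal_diff_le (by linarith)).trans (add_le_add_right ?_ _)
    have rescale : 1 / (3 * z / 4) ^ 2 = 16 / 9 * (1 / z ^ 2) := by field_simp; norm_num
    rw [rescale]
    linarith
  · have rescale : 25431 * ((1 + z) ^ 2)⁻¹ * β = 25431 / 1.2 * (β * q) := by ring
    linarith [mul_nonneg H.b_pos.le q_nonneg]

lemma normalApprox_berryEsseenError (X : StandardizedArray ℙ ξ) (hz : 0 ≤ z) :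
    NormalApprox ℙ (fun ω ↦ ∑ i, ξ i ω) z (berryEsseenError ξ z) := by
  have tails_nonneg : 0 ≤ ∑ i, (ℙ : Measure Ω).real {ω | max 1 z / 4 < |ξ i ω|} :=
    Finset.sum_nonneg fun i _ ↦ measureReal_nonneg
  rw [berryEsseenError, abs_of_nonneg hz]
  rcases le_or_gt (2 / 37) (beta2 ξ + beta3 ξ) with hβ | hβ
  · refine (X.normalApprox_two_mul_inv hz).mono ?_
    have trivial_le := mul_le_mul_of_nonneg_right (two_le_berryEsseenConst_mul hβ z)
      (by positivity : 0 ≤ ((1 + z) ^ 2)⁻¹)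
    linarith
  rw [berryEsseenConst, if_neg (by linarith), abs_of_nonneg hz]
  rcases le_or_gt z 2 with hz₂ | hz₂
  · refine (X.normalApprox_of_le_two hβ hz hz₂).mono ?_
    have tails_le : ∑ i, (ℙ : Measure Ω).real {ω | 1 < |ξ i ω|} ≤
        ∑ i, (ℙ : Measure Ω).real {ω | max 1 z / 4 < |ξ i ω|} :=
      Finset.sum_le_sum fun i _ ↦ measureReal_mono fun ω (hω : 1 < |ξ i ω|) ↦
        lt_trans (by linarith [max_le one_le_two hz₂]) hω
    rw [if_pos hz₂]
    linarith
  rw [if_neg hz₂.not_ge]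
  rcases le_total z 20 with hz₂₀ | hz₂₀
  · exact (X.normalApprox_of_le_twenty hβ hz hz₂₀).mono (by linarith)
  · refine (X.normalApprox_of_twenty_le hβ hz₂₀).mono ?_
    rw [max_eq_right (by linarith : 1 ≤ z)] at tails_nonneg ⊢
    linarith

end StandardizedArray

/-- Non-uniform Berry–Esséen bound under second moment conditions (Theorem 5.1). -/
theorem nonuniform_berry_esseen
    {Ω : Type*} [MeasureSpace Ω] [IsProbabilityMeasure (ℙ : Measure Ω)]
    {n : ℕ} (ξ : Fin n → Ω → ℝ)
    (hmeas : ∀ i, Measurable (ξ i))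
    (hindep : iIndepFun ξ ℙ)
    (hL2 : ∀ i, MemLp (ξ i) 2 ℙ)
    (hmean : ∀ i, ∫ ω, ξ i ω = 0)
    (hvar : ∑ i, ∫ ω, (ξ i ω) ^ 2 = 1)
    (z : ℝ) :
    |(ℙ {ω | ∑ i, ξ i ω ≤ z}).toReal - Phi z|
      ≤ 2 * ∑ i, (ℙ {ω | max 1 |z| / 4 < |ξ i ω|}).toReal
        + (if 1 ≤ beta2 ξ + beta3 ξ then (15 : ℝ)
           else if |z| ≤ 2 then 37 else 25431)
          * ((1 + |z|) ^ 2)⁻¹ * (beta2 ξ + beta3 ξ) := by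
  have X : StandardizedArray ℙ ξ := ⟨hmeas, hindep, hL2, hmean, hvar⟩
  change |(ℙ : Measure Ω).real {ω | ∑ i, ξ i ω ≤ z} - Phi z| ≤ berryEsseenError ξ z
  refine NormalApprox.abs_sub_le ?_
  rcases le_total 0 z with hz | hz
  · exact X.normalApprox_berryEsseenError hz
  · have reflected := X.neg.normalApprox_berryEsseenError (neg_nonneg.2 hz)
    rw [berryEsseenError_neg] at reflected
    simp only [Finset.sum_neg_distrib] at reflected
    exact reflected.of_neg (X.measurable_sum _)
end

section
/- For μ > 0, σ > 0, n ≥ 1 and t > 0, let I = |Φ((nμ − t)/(σ√n)) − Φ((nμ − t)√μ/(σ√t))|. Then I ≤ (√2/(e√π)) · σ/√(tμ) if t ≤ nμ, and I ≤ (16/(e²√(2π))) · t²σ³ / (n^{1/2} μ² (t − nμ)² (√(nμt) + t)) if t > nμ. -/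
open MeasureTheory ProbabilityTheory Real

/-!
With `x = √(nμ)`, `y = √t` and `κ = σ / √μ`, the two arguments of `Φ` are `a = (x² - y²) / (κ x)`
and `b = (x² - y²) / (κ y)`. They satisfy `a ≤ b`, have the same sign, and lie at distance
`(x - y)² (x + y) / (κ x y)`. The density of the normal law on `[a, b]` is largest at the endpoint
nearest to `0`, which is `a` if `y ≤ x` and `b` if `x < y`. The factor `exp (-a² / 2)` or
`exp (-b² / 2)` obtained there absorbs a power of `a²` or `b²`, because `v ^ k * exp (-v)` attains
its maximum over `v ≥ 0` at `v = k`; the exponent is `k = 1` in the first case and `k = 2` in the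
second.
-/

theorem pow_mul_exp_neg_le {v : ℝ} (hv : 0 ≤ v) (k : ℕ) :
    v ^ k * exp (-v) ≤ (k / exp 1) ^ k := by
  rcases k.eq_zero_or_pos with rfl | hk
  · simpa using hv
  have tangent_line : v / k ≤ exp (v / k - 1) := by
    simpa using add_one_le_exp (v / k - 1)
  calc v ^ k * exp (-v) = k ^ k * (v / k) ^ k * exp (-v) := by
        rw [← mul_pow, mul_div_cancel₀ v (by positivity)]
    _ ≤ k ^ k * exp (v / k - 1) ^ k * exp (-v) := by gcongr
    _ = (k * exp (-1)) ^ k := by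
        rw [mul_pow, mul_assoc, ← exp_nat_mul, ← exp_nat_mul, ← exp_add]
        congr 2
        field_simp
        ring
    _ = (k / exp 1) ^ k := by rw [exp_neg, div_eq_mul_inv]

theorem sq_pow_mul_exp_neg_sq_div_two_le (c : ℝ) (k : ℕ) :
    (c ^ 2) ^ k * exp (-c ^ 2 / 2) ≤ (2 * k / exp 1) ^ k := by
  have h := pow_mul_exp_neg_le (v := c ^ 2 / 2) (by positivity) k
  calc (c ^ 2) ^ k * exp (-c ^ 2 / 2) = 2 ^ k * ((c ^ 2 / 2) ^ k * exp (-(c ^ 2 / 2))) := by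
        rw [← mul_assoc, ← mul_pow, mul_div_cancel₀ _ two_ne_zero, neg_div]
    _ ≤ 2 ^ k * (k / exp 1) ^ k := by gcongr
    _ = (2 * k / exp 1) ^ k := by rw [← mul_pow, mul_div_assoc]

theorem integrable_exp_neg_sq_div_two : Integrable fun u : ℝ ↦ exp (-u ^ 2 / 2) := by
  convert integrable_exp_neg_mul_sq (b := 1 / 2) (by norm_num) using 3
  ring

theorem Phi_sub_Phi (a b : ℝ) :
    Phi b - Phi a = (√(2 * π))⁻¹ * ∫ u in a..b, exp (-u ^ 2 / 2) := by
  rw [Phi, Phi, ← mul_sub, intervalIntegral.integral_Iic_sub_Iic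
    integrable_exp_neg_sq_div_two.integrableOn integrable_exp_neg_sq_div_two.integrableOn]

section

variable {a b c : ℝ}

theorem abs_Phi_sub_Phi_le_of_abs_le (hc : ∀ u ∈ Set.uIoc a b, |c| ≤ |u|) :
    |Phi a - Phi b| ≤ (√(2 * π))⁻¹ * (exp (-c ^ 2 / 2) * |b - a|) := by
  rw [abs_sub_comm, Phi_sub_Phi, abs_mul, abs_of_nonneg (by positivity : 0 ≤ (√(2 * π))⁻¹)]
  gcongr _ * ?_
  rw [← norm_eq_abs]
  refine intervalIntegral.norm_integral_le_of_norm_le_const fun u hu ↦ ?_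
  rw [norm_of_nonneg (exp_pos _).le]
  have : c ^ 2 ≤ u ^ 2 := sq_le_sq.2 (hc u hu)
  gcongr

theorem abs_Phi_sub_Phi_le_of_abs_sub_le {B : ℝ} (k : ℕ) (hB : 0 ≤ B)
    (hc : ∀ u ∈ Set.uIoc a b, |c| ≤ |u|) (hab : |b - a| ≤ (c ^ 2) ^ k * B) :
    |Phi a - Phi b| ≤ (√(2 * π))⁻¹ * ((2 * k / exp 1) ^ k * B) := by
  refine (abs_Phi_sub_Phi_le_of_abs_le hc).trans ?_
  gcongr _ * ?_
  calc exp (-c ^ 2 / 2) * |b - a| ≤ exp (-c ^ 2 / 2) * ((c ^ 2) ^ k * B) := by gcongr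
    _ = (c ^ 2) ^ k * exp (-c ^ 2 / 2) * B := by ring
    _ ≤ (2 * k / exp 1) ^ k * B := by gcongr; exact sq_pow_mul_exp_neg_sq_div_two_le c k

end

section

variable {x y κ : ℝ}

theorem sq_sub_sq_div_mul_sub_sq_sub_sq_div_mul (hx : x ≠ 0) (hy : y ≠ 0) (hκ : κ ≠ 0) :
    (x ^ 2 - y ^ 2) / (κ * y) - (x ^ 2 - y ^ 2) / (κ * x)
      = (x - y) ^ 2 * (x + y) / (κ * x * y) := by
  field_simp
  ring

theorem sq_sub_sq_div_mul_le_sq_sub_sq_div_mul (hx : 0 < x) (hy : 0 < y) (hκ : 0 < κ) :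
    (x ^ 2 - y ^ 2) / (κ * x) ≤ (x ^ 2 - y ^ 2) / (κ * y) := by
  rw [← sub_nonneg, sq_sub_sq_div_mul_sub_sq_sub_sq_div_mul hx.ne' hy.ne' hκ.ne']
  positivity

theorem abs_Phi_sq_sub_sq_div_sub_le_of_le (hy : 0 < y) (hyx : y ≤ x) (hκ : 0 < κ) :
    |Phi ((x ^ 2 - y ^ 2) / (κ * x)) - Phi ((x ^ 2 - y ^ 2) / (κ * y))|
      ≤ √2 / (exp 1 * √π) * (κ / y) := by
  have hx : 0 < x := hy.trans_le hyx
  have hab := sq_sub_sq_div_mul_le_sq_sub_sq_div_mul hx hy hκ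
  set a := (x ^ 2 - y ^ 2) / (κ * x) with ha
  set b := (x ^ 2 - y ^ 2) / (κ * y) with hb
  have ha_nonneg : 0 ≤ a := div_nonneg (sub_nonneg.2 (by gcongr)) (by positivity)
  have abs_a_le : ∀ u ∈ Set.uIoc a b, |a| ≤ |u| := fun u hu ↦ by
    rw [Set.uIoc_of_le hab] at hu
    exact abs_le_abs_of_nonneg ha_nonneg hu.1.le
  have gap_le : |b - a| ≤ (a ^ 2) ^ 1 * (κ / y) := by
    rw [abs_of_nonneg (sub_nonneg.2 hab)]
    calc b - a = (x - y) ^ 2 * (x + y) * x / (κ * x ^ 2 * y) := by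
          rw [ha, hb, sq_sub_sq_div_mul_sub_sq_sub_sq_div_mul hx.ne' hy.ne' hκ.ne']
          field_simp
      _ ≤ (x - y) ^ 2 * (x + y) * (x + y) / (κ * x ^ 2 * y) := by
          gcongr
          exact le_add_of_nonneg_right hy.le
      _ = (a ^ 2) ^ 1 * (κ / y) := by
          rw [ha]
          field_simp
          ring
  have const_eq : √2 / (exp 1 * √π) = (√(2 * π))⁻¹ * (2 / exp 1) := by
    rw [sqrt_mul zero_le_two]
    field_simp
    exact sq_sqrt zero_le_two
  calc |Phi a - Phi b| ≤ (√(2 * π))⁻¹ * ((2 * (1 : ℕ) / exp 1) ^ 1 * (κ / y)) :=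
        abs_Phi_sub_Phi_le_of_abs_sub_le 1 (by positivity) abs_a_le gap_le
    _ = √2 / (exp 1 * √π) * (κ / y) := by
        rw [const_eq, Nat.cast_one, mul_one, pow_one, mul_assoc]

theorem abs_Phi_sq_sub_sq_div_sub_le_of_lt (hx : 0 < x) (hxy : x < y) (hκ : 0 < κ) :
    |Phi ((x ^ 2 - y ^ 2) / (κ * x)) - Phi ((x ^ 2 - y ^ 2) / (κ * y))|
      ≤ 16 / (exp 1 ^ 2 * √(2 * π)) * (y ^ 3 * κ ^ 3 / (x * (y ^ 2 - x ^ 2) ^ 2 * (x + y))) := by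
  have hy : 0 < y := hx.trans hxy
  have hab := sq_sub_sq_div_mul_le_sq_sub_sq_div_mul hx hy hκ
  set a := (x ^ 2 - y ^ 2) / (κ * x) with ha
  set b := (x ^ 2 - y ^ 2) / (κ * y) with hb
  set B := y ^ 3 * κ ^ 3 / (x * (y ^ 2 - x ^ 2) ^ 2 * (x + y)) with hB
  have hb_nonpos : b ≤ 0 :=
    div_nonpos_of_nonpos_of_nonneg (sub_nonpos.2 (by gcongr)) (by positivity)
  have abs_b_le : ∀ u ∈ Set.uIoc a b, |b| ≤ |u| := fun u hu ↦ by
    rw [Set.uIoc_of_le hab] at hu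
    exact abs_le_abs_of_nonpos hb_nonpos hu.2
  have gap_eq : |b - a| = (b ^ 2) ^ 2 * B := by
    have hsq : y ^ 2 - x ^ 2 ≠ 0 := (sub_pos.2 (by gcongr)).ne'
    rw [abs_of_nonneg (sub_nonneg.2 hab), ha, hb, hB,
      sq_sub_sq_div_mul_sub_sq_sub_sq_div_mul hx.ne' hy.ne' hκ.ne', ← neg_sub (y ^ 2)]
    field_simp [hsq]
    ring
  calc |Phi a - Phi b| ≤ (√(2 * π))⁻¹ * ((2 * (2 : ℕ) / exp 1) ^ 2 * B) :=
        abs_Phi_sub_Phi_le_of_abs_sub_le 2 (by positivity) abs_b_le gap_eq.le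
    _ = 16 / (exp 1 ^ 2 * √(2 * π)) * B := by
        push_cast
        ring

end

theorem sq_mul_cube_div_eq_sqrt_cube_mul_div {μ σ t ν : ℝ} (hμ : 0 < μ) (ht : 0 < t) (hν : 0 < ν) :
    t ^ 2 * σ ^ 3 / (√ν * μ ^ 2 * (t - ν * μ) ^ 2 * (√(ν * μ * t) + t))
      = √t ^ 3 * (σ / √μ) ^ 3
        / (√(ν * μ) * (√t ^ 2 - √(ν * μ) ^ 2) ^ 2 * (√(ν * μ) + √t)) := by
  have hνμ : 0 < ν * μ := by positivity
  have sq_eq_sqrt_pow_four {r : ℝ} (hr : 0 ≤ r) : r ^ 2 = √r ^ 4 := by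
    rw [pow_mul √r 2 2, sq_sqrt hr]
  have factor_sqrt : √(ν * μ * t) + t = √t * (√(ν * μ) + √t) := by
    rw [sqrt_mul hνμ.le, mul_add, mul_self_sqrt ht.le, mul_comm]
  rw [factor_sqrt, sq_sqrt ht.le, sq_sqrt hνμ.le, sq_eq_sqrt_pow_four ht.le,
    sq_eq_sqrt_pow_four hμ.le, sqrt_mul hν.le]
  field_simp

theorem normal_cdf_difference_bound_general {μ σ t ν : ℝ}
    (hμ : 0 < μ) (hσ : 0 < σ) (ht : 0 < t) (hν : 0 < ν) :
    (t ≤ ν * μ →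
      |Phi ((ν * μ - t) / (σ * √ν)) - Phi ((ν * μ - t) * √μ / (σ * √t))|
        ≤ √2 / (exp 1 * √π) * (σ / √(t * μ)))
    ∧ (ν * μ < t →
      |Phi ((ν * μ - t) / (σ * √ν)) - Phi ((ν * μ - t) * √μ / (σ * √t))|
        ≤ 16 / (exp 1 ^ 2 * √(2 * π))
            * (t ^ 2 * σ ^ 3 / (√ν * μ ^ 2 * (t - ν * μ) ^ 2 * (√(ν * μ * t) + t)))) := by
  have hνμ : 0 < ν * μ := by positivity
  have left_arg : (ν * μ - t) / (σ * √ν) = (√(ν * μ) ^ 2 - √t ^ 2) / (σ / √μ * √(ν * μ)) := by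
    rw [sq_sqrt hνμ.le, sq_sqrt ht.le, sqrt_mul hν.le]
    field_simp
  have right_arg : (ν * μ - t) * √μ / (σ * √t) = (√(ν * μ) ^ 2 - √t ^ 2) / (σ / √μ * √t) := by
    rw [sq_sqrt hνμ.le, sq_sqrt ht.le]
    field_simp
  rw [left_arg, right_arg]
  refine ⟨fun h ↦ ?_, fun h ↦ ?_⟩
  · have bound_eq : σ / √(t * μ) = σ / √μ / √t := by
      rw [sqrt_mul ht.le, div_div, mul_comm]
    rw [bound_eq]
    exact abs_Phi_sq_sub_sq_div_sub_le_of_le (by positivity) (sqrt_le_sqrt h) (by positivity)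
  · rw [sq_mul_cube_div_eq_sqrt_cube_mul_div hμ ht hν]
    exact abs_Phi_sq_sub_sq_div_sub_le_of_lt (by positivity) (sqrt_lt_sqrt hνμ.le h) (by positivity)

/-- Smoothness bound for the standard normal c.d.f. (Lemma 2.4). -/
theorem normal_cdf_difference_bound
    (μ σ t : ℝ) (hμ : 0 < μ) (hσ : 0 < σ) (ht : 0 < t) (n : ℕ) (hn : 1 ≤ n) :
    (t ≤ n * μ →
      |Phi ((n * μ - t) / (σ * Real.sqrt n))
          - Phi ((n * μ - t) * Real.sqrt μ / (σ * Real.sqrt t))|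
        ≤ Real.sqrt 2 / (Real.exp 1 * Real.sqrt Real.pi) * (σ / Real.sqrt (t * μ)))
    ∧ (n * μ < t →
      |Phi ((n * μ - t) / (σ * Real.sqrt n))
          - Phi ((n * μ - t) * Real.sqrt μ / (σ * Real.sqrt t))|
        ≤ 16 / (Real.exp 1 ^ 2 * Real.sqrt (2 * Real.pi))
            * (t ^ 2 * σ ^ 3
              / (Real.sqrt n * μ ^ 2 * (t - n * μ) ^ 2 * (Real.sqrt (n * μ * t) + t)))) :=
  normal_cdf_difference_bound_general hμ hσ ht (Nat.cast_pos.2 hn)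
end
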